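/- arXiv:1105.4430 — 2 statements merged into one kernel-verified Lean document; each statement's English description precedes it below -/
import Mathlib

section
/- Let p, q > 0. There exists a constant c > 0, depending only on p and q, such that for every 𝔷 = (x,y,z) ∈ ℝ³: d_Sol(o, 𝔷) ≤ d_{H(p)}((x,z),(0,0)) + d_{H(q)}((y,−z),(0,0)) − |z| ≤ c + (2/p)·log(1+|x|) + (2/q)·log(1+|y|) + |z|. -/
open Real MeasureTheory

/-- A path `γ` is piecewise `C¹` on `[0,1]` if it is continuous there and there is a
finite partition `0 = t₀ < t₁ < ⋯ < tₙ = 1` such that `γ` is `C¹` on each subinterval. -/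
def PiecewiseC1 {E : Type*} [NormedAddCommGroup E] [NormedSpace ℝ E] (γ : ℝ → E) : Prop :=
  ContinuousOn γ (Set.Icc 0 1) ∧
  ∃ (n : ℕ) (t : ℕ → ℝ), t 0 = 0 ∧ t n = 1 ∧ (∀ i < n, t i < t (i + 1)) ∧
    ∀ i < n, ContDiffOn ℝ 1 γ (Set.Icc (t i) (t (i + 1)))

/-- The `Sol(p,q)`-length of a path in `ℝ³`. -/
noncomputable def solLength (p q : ℝ) (γ : ℝ → ℝ × ℝ × ℝ) : ℝ :=
  ∫ t in (0:ℝ)..1,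
    Real.sqrt (Real.exp (-(2*p*(γ t).2.2)) * (deriv (fun s => (γ s).1) t)^2
      + Real.exp (2*q*(γ t).2.2) * (deriv (fun s => (γ s).2.1) t)^2
      + (deriv (fun s => (γ s).2.2) t)^2)

/-- The `Sol(p,q)` distance: infimum of lengths of piecewise `C¹` paths joining the points. -/
noncomputable def solDist (p q : ℝ) (u v : ℝ × ℝ × ℝ) : ℝ :=
  ⨅ γ : {γ : ℝ → ℝ × ℝ × ℝ // γ 0 = u ∧ γ 1 = v ∧ PiecewiseC1 γ}, solLength p q γ.1

/-- The `H(r)`-length of a path in `ℝ²` (logarithmic model of the hyperbolic plane). -/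
noncomputable def hypLength (r : ℝ) (γ : ℝ → ℝ × ℝ) : ℝ :=
  ∫ t in (0:ℝ)..1,
    Real.sqrt (Real.exp (-(2*r*(γ t).2)) * (deriv (fun s => (γ s).1) t)^2
      + (deriv (fun s => (γ s).2) t)^2)

/-- The `H(r)` distance: infimum of lengths of piecewise `C¹` paths joining the points. -/
noncomputable def hypDist (r : ℝ) (u v : ℝ × ℝ) : ℝ :=
  ⨅ γ : {γ : ℝ → ℝ × ℝ // γ 0 = u ∧ γ 1 = v ∧ PiecewiseC1 γ}, hypLength r γ.1

/-!
A graph over the height `h ↦ (f h, g h, h)` in `Sol(p, q)` projects to the graph of `f` in `H(p)`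
and to that of `g` in `H(q)` with the height reversed, and
`√(a + b + 1) ≤ √(a + 1) + √(b + 1) - 1` bounds its length by the sum of the lengths of the
projections minus the height gained.

Let `z ≥ 0`. A geodesic of `H(r)` from a lower to a higher point first rises as a graph over the
height up to the level of its endpoint, and what remains of it joins two points of that level. The
geodesics of `H(p)` from `(0, 0)` to `(x, z)` and of `H(q)` from `(y, -z)` to `(0, 0)` thus provide
`f` and `g` on `[0, z]`. The remaining arc of the second one, then the graph of `(f, g)`, then the
remaining arc of the first one form a path from `(0, 0, 0)` to `(x, y, z)` in `Sol(p, q)`. The case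
`z ≤ 0` follows from the isometry `(x, y, z) ↦ (y, x, -z)` of `Sol(p, q)` onto `Sol(q, p)`.

The second inequality comes from the path in `H(r)` through the height `log (1 + |x|) / r`, at which
a horizontal segment from `x` to `0` has length at most `1`.
-/

open Set

section PiecewiseC1On

variable {E F : Type*} [NormedAddCommGroup E] [NormedSpace ℝ E] [NormedAddCommGroup F]
  [NormedSpace ℝ F] {γ δ : ℝ → E} {a b c : ℝ}

/-- `γ` is piecewise `C¹` on `[a, b]`, the notion behind `PiecewiseC1` for an arbitrary interval:
`b` is reached from `a` by finitely many steps over nondegenerate intervals on which `γ` is `C¹`.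
In particular `a ≤ b`, and the degenerate interval `a = b` is allowed. -/
def PiecewiseC1On (γ : ℝ → E) : ℝ → ℝ → Prop :=
  Relation.ReflTransGen fun a b => a < b ∧ ContDiffOn ℝ 1 γ (Icc a b)

namespace PiecewiseC1On

lemma of_contDiffOn (hab : a ≤ b) (hγ : ContDiffOn ℝ 1 γ (Icc a b)) : PiecewiseC1On γ a b := by
  rcases hab.eq_or_lt with rfl | hab
  exacts [.refl, .single ⟨hab, hγ⟩]

lemma trans (h₁ : PiecewiseC1On γ a b) (h₂ : PiecewiseC1On γ b c) : PiecewiseC1On γ a c :=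
  Relation.ReflTransGen.trans h₁ h₂

lemma le (h : PiecewiseC1On γ a b) : a ≤ b := by
  induction h with
  | refl => rfl
  | tail _ hbc ih => exact ih.trans hbc.1.le

lemma continuousOn (h : PiecewiseC1On γ a b) : ContinuousOn γ (Icc a b) := by
  induction h with
  | refl => simp
  | tail hab hbc ih =>
    rw [← Icc_union_Icc_eq_Icc (le hab) hbc.1.le]
    exact ih.union_of_isClosed hbc.2.continuousOn isClosed_Icc isClosed_Icc

lemma comp_contDiff {g : E → F} (h : PiecewiseC1On γ a b) (hg : ContDiff ℝ 1 g) :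
    PiecewiseC1On (fun t => g (γ t)) a b :=
  Relation.ReflTransGen.mono (fun _ _ hγ => ⟨hγ.1, hg.comp_contDiffOn hγ.2⟩) _ _ h

lemma congr (h : PiecewiseC1On γ a b) (hδ : EqOn δ γ (Icc a b)) : PiecewiseC1On δ a b := by
  induction h with
  | refl => exact .refl
  | tail hab hbc ih =>
    exact (ih (hδ.mono (Icc_subset_Icc_right hbc.1.le))).tail
      ⟨hbc.1, hbc.2.congr (hδ.mono (Icc_subset_Icc_left (le hab)))⟩

lemma comp_mul_add {k d : ℝ} (hk : 0 < k) (h : PiecewiseC1On γ (k * a + d) (k * b + d)) :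
    PiecewiseC1On (fun t => γ (k * t + d)) a b := by
  have key : PiecewiseC1On (fun t => γ (k * t + d)) ((k * a + d - d) / k) ((k * b + d - d) / k) :=
    h.lift (fun s => (s - d) / k) fun s t hst =>
      ⟨div_lt_div_of_pos_right (sub_lt_sub_right hst.1 d) hk,
        hst.2.comp (by fun_prop) fun u hu => by
        have := (div_le_iff₀ hk).1 hu.1
        have := (le_div_iff₀ hk).1 hu.2
        constructor <;> linarith⟩
  simpa [hk.ne'] using key

lemma comp_sub_left {d : ℝ} (h : PiecewiseC1On γ (d - b) (d - a)) :
    PiecewiseC1On (fun t => γ (d - t)) a b := by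
  have key : PiecewiseC1On (fun t => γ (d - t)) (d - (d - a)) (d - (d - b)) :=
    h.swap.lift (fun s => d - s) fun s t hst =>
      ⟨sub_lt_sub_left hst.1 d, hst.2.comp (by fun_prop) fun u hu => by
        constructor <;> linarith [hu.1, hu.2]⟩
  simpa using key

lemma ae_differentiableAt (h : PiecewiseC1On γ a b) :
    ∀ᵐ t ∂volume.restrict (Icc a b), DifferentiableAt ℝ γ t := by
  induction h with
  | refl => simp
  | @tail b c hab hbc ih =>
    rw [← Icc_union_Icc_eq_Icc (le hab) hbc.1.le, ae_restrict_union_iff,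
      ← restrict_Ioo_eq_restrict_Icc (a := b)]
    exact ⟨ih, (ae_restrict_iff' measurableSet_Ioo).2 <| .of_forall fun t ht =>
      (hbc.2.contDiffAt (Icc_mem_nhds ht.1 ht.2)).differentiableAt one_ne_zero⟩

end PiecewiseC1On

lemma piecewiseC1_iff_piecewiseC1On : PiecewiseC1 γ ↔ PiecewiseC1On γ 0 1 := by
  constructor
  · rintro ⟨-, n, t, h0, h1, hlt, hγ⟩
    rw [← h0, ← h1]
    clear h1
    induction n with
    | zero => exact .refl
    | succ n ih =>
      exact (ih (fun i hi => hlt i (hi.trans n.lt_succ_self))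
        fun i hi => hγ i (hi.trans n.lt_succ_self)).tail ⟨hlt n n.lt_succ_self, hγ n n.lt_succ_self⟩
  · refine fun h => ⟨h.continuousOn, ?_⟩
    generalize (0 : ℝ) = a at h ⊢
    induction h using Relation.ReflTransGen.head_induction_on with
    | refl => exact ⟨0, fun _ => 1, rfl, rfl, by simp, by simp⟩
    | @head a _ hab _ ih =>
      obtain ⟨n, t, rfl, h1, ht⟩ := ih
      refine ⟨n + 1, fun | 0 => a | i + 1 => t i, rfl, h1, ?_, ?_⟩ <;> rintro (_ | i) hi
      exacts [hab.1, ht.1 i (by lia), hab.2, ht.2 i (by lia)]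

end PiecewiseC1On

section PathDist

variable {E E' : Type*} [NormedAddCommGroup E] [NormedSpace ℝ E] [NormedAddCommGroup E']
  [NormedSpace ℝ E'] {F : E → E → ℝ} {G : E' → E' → ℝ} {γ δ : ℝ → E} {a b c : ℝ} {u v w : E}

/-- `F x v` is the length of a tangent vector `v` at `x`, as for a continuous reversible Finsler
metric, except that no convexity in `v` is imposed. -/
structure IsSpeed (F : E → E → ℝ) : Prop where
  continuous : Continuous fun P : E × E => F P.1 P.2
  nonneg : ∀ x v, 0 ≤ F x v
  smul : ∀ x (c : ℝ) v, F x (c • v) = |c| * F x v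

/-- The length of `γ` on `[a, b]` for the speed `F`. -/
noncomputable def pathLength (F : E → E → ℝ) (γ : ℝ → E) (a b : ℝ) : ℝ :=
  ∫ t in a..b, F (γ t) (deriv γ t)

/-- The path distance of the speed `F`, the common generalization of `solDist` and `hypDist`. -/
noncomputable def pathDist (F : E → E → ℝ) (u v : E) : ℝ :=
  ⨅ γ : {γ : ℝ → E // γ 0 = u ∧ γ 1 = v ∧ PiecewiseC1 γ}, pathLength F γ.1 0 1

lemma IsSpeed.intervalIntegrable (hF : IsSpeed F) (h : PiecewiseC1On γ a b) :
    IntervalIntegrable (fun t => F (γ t) (deriv γ t)) volume a b := by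
  induction h with
  | refl => exact .refl
  | @tail b c _ hbc ih =>
    have hderiv : ContinuousOn (fun t => F (γ t) (derivWithin γ (Icc b c) t)) (Icc b c) :=
      hF.continuous.comp_continuousOn <| hbc.2.continuousOn.prodMk <|
        hbc.2.continuousOn_derivWithin (uniqueDiffOn_Icc hbc.1) le_rfl
    refine ih.trans ((hderiv.intervalIntegrable_of_Icc hbc.1.le).congr_uIoo fun t ht => ?_)
    rw [uIoo_of_le hbc.1.le] at ht
    simp only [derivWithin_of_mem_nhds (Icc_mem_nhds ht.1 ht.2)]

lemma pathLength_nonneg (hF : IsSpeed F) (hab : a ≤ b) : 0 ≤ pathLength F γ a b :=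
  intervalIntegral.integral_nonneg hab fun _ _ => hF.nonneg _ _

lemma pathLength_congr (hab : a ≤ b) (h : EqOn δ γ (Icc a b)) :
    pathLength F δ a b = pathLength F γ a b := by
  refine intervalIntegral.integral_congr_uIoo fun t ht => ?_
  rw [uIoo_of_le hab] at ht
  have hδ : δ =ᶠ[nhds t] γ := Filter.eventuallyEq_of_mem (Icc_mem_nhds ht.1 ht.2) h
  simp only [hδ.deriv_eq, hδ.self_of_nhds]

lemma pathLength_add (hF : IsSpeed F) (h₁ : PiecewiseC1On γ a b) (h₂ : PiecewiseC1On γ b c) :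
    pathLength F γ a b + pathLength F γ b c = pathLength F γ a c :=
  intervalIntegral.integral_add_adjacent_intervals (hF.intervalIntegrable h₁)
    (hF.intervalIntegrable h₂)

lemma pathLength_comp_mul_add (hF : IsSpeed F) {k : ℝ} (hk : 0 < k) (d : ℝ) :
    pathLength F (fun t => γ (k * t + d)) a b = pathLength F γ (k * a + d) (k * b + d) := by
  have hderiv t : deriv (fun t => γ (k * t + d)) t = k • deriv γ (k * t + d) := by
    rw [deriv_comp_mul_left k (fun t => γ (t + d)), deriv_comp_add_const]
  simp only [pathLength, hderiv, hF.smul, abs_of_pos hk, intervalIntegral.integral_const_mul]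
  exact intervalIntegral.mul_integral_comp_mul_add (f := fun t => F (γ t) (deriv γ t)) k d

lemma pathLength_comp_sub_left (hF : IsSpeed F) (d : ℝ) :
    pathLength F (fun t => γ (d - t)) a b = pathLength F γ (d - b) (d - a) := by
  have hneg x v : F x (-v) = F x v := by simpa using hF.smul x (-1) v
  simp only [pathLength, deriv_comp_const_sub, hneg]
  exact intervalIntegral.integral_comp_sub_left (fun t => F (γ t) (deriv γ t)) d

lemma piecewiseC1_lineMap (u v : E) : PiecewiseC1 (AffineMap.lineMap (k := ℝ) u v) :=
  piecewiseC1_iff_piecewiseC1On.2 <|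
    .of_contDiffOn zero_le_one (AffineMap.contDiff_lineMap u v).contDiffOn

lemma le_pathDist (h : ∀ γ, γ 0 = u → γ 1 = v → PiecewiseC1On γ 0 1 → c ≤ pathLength F γ 0 1) :
    c ≤ pathDist F u v :=
  have : Nonempty {γ : ℝ → E // γ 0 = u ∧ γ 1 = v ∧ PiecewiseC1 γ} :=
    ⟨AffineMap.lineMap u v, by simp, by simp, piecewiseC1_lineMap u v⟩
  le_ciInf fun γ => h γ γ.2.1 γ.2.2.1 (piecewiseC1_iff_piecewiseC1On.1 γ.2.2.2)

lemma pathDist_le_pathLength_unitInterval (hF : IsSpeed F) (h : PiecewiseC1On γ 0 1) :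
    pathDist F (γ 0) (γ 1) ≤ pathLength F γ 0 1 :=
  ciInf_le (f := fun γ : {γ' : ℝ → E // γ' 0 = γ 0 ∧ γ' 1 = γ 1 ∧ PiecewiseC1 γ'} =>
      pathLength F γ.1 0 1)
    ⟨0, forall_mem_range.2 fun _ => pathLength_nonneg hF zero_le_one⟩
    ⟨γ, rfl, rfl, piecewiseC1_iff_piecewiseC1On.2 h⟩

lemma pathDist_le_pathLength (hF : IsSpeed F) (h : PiecewiseC1On γ a b) :
    pathDist F (γ a) (γ b) ≤ pathLength F γ a b := by
  rcases h.le.eq_or_lt with rfl | hab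
  · have hconst : PiecewiseC1On (fun _ => γ a) 0 1 := .of_contDiffOn zero_le_one contDiffOn_const
    have hzero : F (γ a) 0 = 0 := by simpa using hF.smul (γ a) 0 0
    simpa [pathLength, hzero] using pathDist_le_pathLength_unitInterval hF hconst
  · have hk : 0 < b - a := sub_pos.2 hab
    have h' : PiecewiseC1On (fun t => γ ((b - a) * t + a)) 0 1 := .comp_mul_add hk (by simpa)
    simpa [pathLength_comp_mul_add hF hk] using pathDist_le_pathLength_unitInterval hF h'

lemma pathDist_le_of_lineMap (hF : IsSpeed F) {C : ℝ}
    (hC : ∀ t ∈ Ioo (0 : ℝ) 1, F (AffineMap.lineMap u v t) (v - u) ≤ C) : pathDist F u v ≤ C := by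
  have hC1 : PiecewiseC1On (AffineMap.lineMap (k := ℝ) u v) 0 1 :=
    piecewiseC1_iff_piecewiseC1On.1 (piecewiseC1_lineMap u v)
  calc pathDist F u v ≤ pathLength F (AffineMap.lineMap u v) 0 1 := by
        simpa using pathDist_le_pathLength hF hC1
    _ ≤ ∫ _ in (0 : ℝ)..1, C := intervalIntegral.integral_mono_on_of_le_Ioo zero_le_one
        (hF.intervalIntegrable hC1) (by simp) fun t ht => by
          simpa only [AffineMap.hasDerivAt_lineMap.deriv] using hC t ht
    _ = C := by simp

lemma pathDist_triangle (hF : IsSpeed F) :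
    pathDist F u w ≤ pathDist F u v + pathDist F v w := by
  rw [← sub_le_iff_le_add]
  refine le_pathDist fun γ₁ hu hv h₁ => ?_
  rw [sub_le_comm]
  refine le_pathDist fun γ₂ hv' hw h₂ => ?_
  let δ t := if t ≤ 1 then γ₁ t else γ₂ (t - 1)
  have hδ₁ : EqOn δ γ₁ (Icc 0 1) := fun t ht => if_pos ht.2
  have hδ₂ : EqOn δ (fun t => γ₂ (1 * t + -1)) (Icc 1 2) := fun t ht => by
    rcases ht.1.eq_or_lt with rfl | ht
    · simp [δ, hv, hv']
    · simp [δ, ht.not_ge, sub_eq_add_neg]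
  have h₁' : PiecewiseC1On δ 0 1 := h₁.congr hδ₁
  have h₂' : PiecewiseC1On δ 1 2 := .congr (.comp_mul_add one_pos (by norm_num; exact h₂)) hδ₂
  have hδ₀ : δ 0 = u := by rw [hδ₁ (by simp), hu]
  have hδ₂' : δ 2 = w := by rw [hδ₂ (by simp), ← hw]; norm_num
  have hlength₂ : pathLength F δ 1 2 = pathLength F γ₂ 0 1 := by
    rw [pathLength_congr one_le_two hδ₂, pathLength_comp_mul_add hF one_pos]
    norm_num
  have key := pathDist_le_pathLength hF (h₁'.trans h₂')
  rw [← pathLength_add hF h₁' h₂', pathLength_congr zero_le_one hδ₁, hlength₂, hδ₀, hδ₂'] at key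
  linarith

lemma pathDist_comm (hF : IsSpeed F) : pathDist F u v = pathDist F v u := by
  have key u v : pathDist F u v ≤ pathDist F v u := le_pathDist fun γ hv hu h => by
    have h' : PiecewiseC1On (fun t => γ (1 - t)) 0 1 := .comp_sub_left (by simpa)
    simpa [hu, hv, pathLength_comp_sub_left hF] using pathDist_le_pathLength hF h'
  exact (key u v).antisymm (key v u)

lemma pathDist_map_le {g : E → E'} {g' : E → E →L[ℝ] E'} (hF : IsSpeed F) (hG : IsSpeed G)
    (hg : ContDiff ℝ 1 g) (hg' : ∀ x, HasFDerivAt g (g' x) x)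
    (hle : ∀ x v, G (g x) (g' x v) ≤ F x v) (u v : E) :
    pathDist G (g u) (g v) ≤ pathDist F u v := by
  refine le_pathDist fun γ hu hv h => ?_
  rw [← hu, ← hv]
  refine (pathDist_le_pathLength hG (h.comp_contDiff hg)).trans ?_
  refine intervalIntegral.integral_mono_ae_restrict zero_le_one
    (hG.intervalIntegrable (h.comp_contDiff hg)) (hF.intervalIntegrable h) ?_
  filter_upwards [h.ae_differentiableAt] with t ht
  have hchain : HasDerivAt (fun t => g (γ t)) (g' (γ t) (deriv γ t)) t :=
    (hg' (γ t)).comp_hasDerivAt t ht.hasDerivAt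
  simpa only [hchain.deriv] using hle (γ t) (deriv γ t)

lemma isSpeed_norm : IsSpeed fun _ v : E => ‖v‖ :=
  ⟨by fun_prop, fun _ v => norm_nonneg v, fun _ c v => norm_smul c v⟩

lemma norm_sub_le_pathDist (u v : E) : ‖v - u‖ ≤ pathDist (fun _ w => ‖w‖) u v := by
  refine le_pathDist fun γ hu hv h => ?_
  rw [← hu, ← hv]
  generalize (1 : ℝ) = b at h
  induction h with
  | refl => simp [pathLength]
  | @tail b c hb hbc ih =>
    have hc : PiecewiseC1On γ b c := .single hbc
    rw [← pathLength_add isSpeed_norm hb hc]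
    refine (norm_sub_le_norm_sub_add_norm_sub (γ c) (γ b) (γ 0)).trans ?_
    rw [add_comm]
    refine add_le_add ih (norm_sub_le_integral_of_norm_deriv_le_of_le hc.le hc.continuousOn
      ((hbc.2.differentiableOn one_ne_zero).mono Ioo_subset_Icc_self) (by simp)
      (isSpeed_norm.intervalIntegrable hc))

/-- Such an `f` is called a calibration. -/
lemma abs_sub_le_pathDist {f : E → ℝ} {f' : E → E →L[ℝ] ℝ} (hF : IsSpeed F) (hf : ContDiff ℝ 1 f)
    (hf' : ∀ x, HasFDerivAt f (f' x) x) (hle : ∀ x v, |f' x v| ≤ F x v) (u v : E) :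
    |f v - f u| ≤ pathDist F u v :=
  (norm_sub_le_pathDist (f u) (f v)).trans (pathDist_map_le hF isSpeed_norm hf hf' hle u v)

end PathDist

section Speeds

variable {E F : Type*} [NormedAddCommGroup E] [NormedSpace ℝ E] [NormedAddCommGroup F]
  [NormedSpace ℝ F] {γ : ℝ → E × F} {t p q r : ℝ}

lemma deriv_prod_fst (h : DifferentiableAt ℝ γ t) :
    deriv (fun s => (γ s).1) t = (deriv γ t).1 :=
  h.hasFDerivAt.fst.hasDerivAt.deriv

lemma deriv_prod_snd (h : DifferentiableAt ℝ γ t) :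
    deriv (fun s => (γ s).2) t = (deriv γ t).2 :=
  h.hasFDerivAt.snd.hasDerivAt.deriv

/-- The norm of the Riemannian metric of `H(r)`. -/
noncomputable def hypSpeed (r : ℝ) (P v : ℝ × ℝ) : ℝ :=
  √(exp (-(2 * r * P.2)) * v.1 ^ 2 + v.2 ^ 2)

/-- The norm of the Riemannian metric of `Sol(p, q)`. -/
noncomputable def solSpeed (p q : ℝ) (P v : ℝ × ℝ × ℝ) : ℝ :=
  √(exp (-(2 * p * P.2.2)) * v.1 ^ 2 + exp (2 * q * P.2.2) * v.2.1 ^ 2 + v.2.2 ^ 2)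

lemma isSpeed_hypSpeed (r : ℝ) : IsSpeed (hypSpeed r) where
  continuous := by unfold hypSpeed; fun_prop
  nonneg _ _ := sqrt_nonneg _
  smul P c v := by
    rw [hypSpeed, hypSpeed, ← sqrt_sq_eq_abs, ← sqrt_mul (sq_nonneg c)]
    simp only [Prod.smul_fst, Prod.smul_snd, smul_eq_mul]
    ring_nf

lemma isSpeed_solSpeed (p q : ℝ) : IsSpeed (solSpeed p q) where
  continuous := by unfold solSpeed; fun_prop
  nonneg _ _ := sqrt_nonneg _
  smul P c v := by
    rw [solSpeed, solSpeed, ← sqrt_sq_eq_abs, ← sqrt_mul (sq_nonneg c)]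
    simp only [Prod.smul_fst, Prod.smul_snd, smul_eq_mul]
    ring_nf

lemma hypLength_eq_pathLength {γ : ℝ → ℝ × ℝ} (hγ : PiecewiseC1 γ) :
    hypLength r γ = pathLength (hypSpeed r) γ 0 1 := by
  refine intervalIntegral.integral_congr_ae_restrict ?_
  rw [uIoc_of_le zero_le_one]
  filter_upwards [ae_restrict_of_ae_restrict_of_subset Ioc_subset_Icc_self
    (piecewiseC1_iff_piecewiseC1On.1 hγ).ae_differentiableAt] with t ht
  rw [hypSpeed, deriv_prod_fst ht, deriv_prod_snd ht]

lemma solLength_eq_pathLength {γ : ℝ → ℝ × ℝ × ℝ} (hγ : PiecewiseC1 γ) :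
    solLength p q γ = pathLength (solSpeed p q) γ 0 1 := by
  refine intervalIntegral.integral_congr_ae_restrict ?_
  rw [uIoc_of_le zero_le_one]
  filter_upwards [ae_restrict_of_ae_restrict_of_subset Ioc_subset_Icc_self
    (piecewiseC1_iff_piecewiseC1On.1 hγ).ae_differentiableAt] with t ht
  rw [solSpeed, deriv_prod_fst ht, deriv_prod_fst ht.snd, deriv_prod_snd ht.snd, deriv_prod_snd ht]

lemma hypDist_eq_pathDist : hypDist r = pathDist (hypSpeed r) :=
  funext₂ fun _ _ => iInf_congr fun γ => hypLength_eq_pathLength γ.2.2.2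

lemma solDist_eq_pathDist : solDist p q = pathDist (solSpeed p q) :=
  funext₂ fun _ _ => iInf_congr fun γ => solLength_eq_pathLength γ.2.2.2

lemma hypDist_triangle (u v w : ℝ × ℝ) : hypDist r u w ≤ hypDist r u v + hypDist r v w := by
  simpa only [hypDist_eq_pathDist] using pathDist_triangle (isSpeed_hypSpeed r)

lemma hypDist_comm (u v : ℝ × ℝ) : hypDist r u v = hypDist r v u := by
  simpa only [hypDist_eq_pathDist] using pathDist_comm (isSpeed_hypSpeed r)

lemma solDist_triangle (u v w : ℝ × ℝ × ℝ) :
    solDist p q u w ≤ solDist p q u v + solDist p q v w := by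
  simpa only [solDist_eq_pathDist] using pathDist_triangle (isSpeed_solSpeed p q)

lemma solDist_swap_le (u v : ℝ × ℝ × ℝ) :
    solDist q p (u.2.1, u.1, -u.2.2) (v.2.1, v.1, -v.2.2) ≤ solDist p q u v := by
  rw [solDist_eq_pathDist, solDist_eq_pathDist]
  refine pathDist_map_le (g := fun P : ℝ × ℝ × ℝ => (P.2.1, P.1, -P.2.2)) (isSpeed_solSpeed p q)
    (isSpeed_solSpeed q p) (by fun_prop) (fun P => hasFDerivAt_snd.fst.prodMk
      (hasFDerivAt_fst.prodMk hasFDerivAt_snd.snd.neg)) (fun P v => le_of_eq ?_) u v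
  simp only [solSpeed, mul_neg, neg_neg, ContinuousLinearMap.prod_apply,
    ContinuousLinearMap.comp_apply, ContinuousLinearMap.coe_snd', ContinuousLinearMap.coe_fst',
    neg_apply, even_two, Even.neg_pow]
  ring_nf

lemma solDist_le_hypDist_left (y : ℝ) (u v : ℝ × ℝ) :
    solDist p q (u.1, y, u.2) (v.1, y, v.2) ≤ hypDist p u v := by
  rw [solDist_eq_pathDist, hypDist_eq_pathDist]
  refine pathDist_map_le (g := fun P : ℝ × ℝ => (P.1, y, P.2)) (isSpeed_hypSpeed p)
    (isSpeed_solSpeed p q) (by fun_prop) (fun P => hasFDerivAt_fst.prodMk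
      ((hasFDerivAt_const y P).prodMk hasFDerivAt_snd)) (fun P v => ?_) u v
  simp [solSpeed, hypSpeed]

lemma solDist_le_hypDist_right (x : ℝ) (u v : ℝ × ℝ) :
    solDist p q (x, u.1, -u.2) (x, v.1, -v.2) ≤ hypDist q u v :=
  (solDist_swap_le (u.1, x, u.2) (v.1, x, v.2)).trans (solDist_le_hypDist_left x u v)

lemma sqrt_add_add_one_le {a b : ℝ} (ha : 0 ≤ a) (hb : 0 ≤ b) :
    √(a + b + 1) ≤ √(a + 1) + √(b + 1) - 1 := by
  have hs : 1 ≤ √(a + 1) := one_le_sqrt.2 (by linarith)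
  have ht : 1 ≤ √(b + 1) := one_le_sqrt.2 (by linarith)
  rw [sqrt_le_left (by linarith)]
  have hs2 : √(a + 1) ^ 2 = a + 1 := sq_sqrt (by linarith)
  have ht2 : √(b + 1) ^ 2 = b + 1 := sq_sqrt (by linarith)
  nlinarith [mul_nonneg (sub_nonneg.2 hs) (sub_nonneg.2 ht)]

lemma solSpeed_graph_le {f g : ℝ → ℝ} (hf : DifferentiableAt ℝ f t) (hg : DifferentiableAt ℝ g t) :
    solSpeed p q (f t, g t, t) (deriv (fun h => (f h, g h, h)) t) ≤
      hypSpeed p (f t, t) (deriv (fun h => (f h, h)) t) +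
        hypSpeed q (g t, -t) (deriv (fun h => (g h, -h)) t) - 1 := by
  have hid := hasDerivAt_id' t
  rw [(hf.hasDerivAt.prodMk hid).deriv, (hg.hasDerivAt.prodMk hid.fun_neg).deriv,
    (hf.hasDerivAt.prodMk (hg.hasDerivAt.prodMk hid)).deriv]
  simpa [solSpeed, hypSpeed] using sqrt_add_add_one_le
    (a := exp (-(2 * p * t)) * deriv f t ^ 2) (b := exp (2 * q * t) * deriv g t ^ 2)
    (by positivity) (by positivity)

lemma solDist_graph_le {f g : ℝ → ℝ} {a b : ℝ} (hab : a ≤ b) (hf : ContDiffOn ℝ 1 f (Icc a b))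
    (hg : ContDiffOn ℝ 1 g (Icc a b)) :
    solDist p q (f a, g a, a) (f b, g b, b) ≤
      pathLength (hypSpeed p) (fun h => (f h, h)) a b +
        pathLength (hypSpeed q) (fun h => (g h, -h)) a b - (b - a) := by
  have hid : ContDiffOn ℝ 1 (fun h : ℝ => h) (Icc a b) := contDiffOn_id
  have hγ : PiecewiseC1On (fun h => (f h, g h, h)) a b :=
    .of_contDiffOn hab (hf.prodMk (hg.prodMk hid))
  have intf := (isSpeed_hypSpeed p).intervalIntegrable (.of_contDiffOn hab (hf.prodMk hid))
  have intg := (isSpeed_hypSpeed q).intervalIntegrable (.of_contDiffOn hab (hg.prodMk hid.neg))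
  have hone : b - a = ∫ _ in a..b, (1 : ℝ) := by simp
  refine (solDist_eq_pathDist.le _ _).trans <|
    (pathDist_le_pathLength (isSpeed_solSpeed p q) hγ).trans ?_
  rw [pathLength, pathLength, pathLength, hone, ← intervalIntegral.integral_add intf intg,
    ← intervalIntegral.integral_sub (intf.add intg) (by simp)]
  refine intervalIntegral.integral_mono_on_of_le_Ioo hab
    ((isSpeed_solSpeed p q).intervalIntegrable hγ) ((intf.add intg).sub (by simp)) fun t ht => ?_
  have hdiff {k : ℝ → ℝ} (hk : ContDiffOn ℝ 1 k (Icc a b)) : DifferentiableAt ℝ k t :=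
    (hk.contDiffAt (Icc_mem_nhds ht.1 ht.2)).differentiableAt one_ne_zero
  exact solSpeed_graph_le (hdiff hf) (hdiff hg)

end Speeds

section Geodesics

variable {r c R τ s t : ℝ}

/-- In half-plane coordinates with `w = e^{2rz}`, this says that `geodesicCoord` below is
`1`-Lipschitz: the bracketed coefficients are its partial derivatives. -/
lemma sq_diff_mul_add_le {w : ℝ} (hw : 0 < w) (m n a b : ℝ) :
    ((m / (m ^ 2 + w) - n / (n ^ 2 + w)) * a + (w / (m ^ 2 + w) - w / (n ^ 2 + w)) * b) ^ 2 ≤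
      w⁻¹ * a ^ 2 + b ^ 2 := by
  set g := m / (m ^ 2 + w) - n / (n ^ 2 + w) with hg
  set k := w / (m ^ 2 + w) - w / (n ^ 2 + w) with hk
  have hgrad : w * g ^ 2 + k ^ 2 = w * (m - n) ^ 2 / ((m ^ 2 + w) * (n ^ 2 + w)) := by
    rw [hg, hk]
    field_simp
    ring
  have hgrad_le : w * g ^ 2 + k ^ 2 ≤ 1 := by
    rw [hgrad, div_le_one (by positivity)]
    nlinarith [sq_nonneg (m * n + w)]
  have hlagrange : (g * a + k * b) ^ 2 + w⁻¹ * (w * g * b - k * a) ^ 2 =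
      (w * g ^ 2 + k ^ 2) * (w⁻¹ * a ^ 2 + b ^ 2) := by
    field_simp
    ring
  calc (g * a + k * b) ^ 2 ≤ (w * g ^ 2 + k ^ 2) * (w⁻¹ * a ^ 2 + b ^ 2) := by
        rw [← hlagrange]
        exact le_add_of_nonneg_right (by positivity)
    _ ≤ w⁻¹ * a ^ 2 + b ^ 2 := mul_le_of_le_one_left (by positivity) hgrad_le

/-- The signed arc length along the geodesic of `H(r)` with endpoints `c - R` and `c + R`, extended
to the plane as a calibration. In the half-plane coordinates `(r x, e^{rz})` this is, up to the
factor `1 / r`, the logarithm of the ratio of the distances to the two endpoints. -/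
noncomputable def geodesicCoord (r c R : ℝ) (P : ℝ × ℝ) : ℝ :=
  (log ((r * P.1 - (c - R)) ^ 2 + exp (2 * r * P.2)) -
    log ((r * P.1 - (c + R)) ^ 2 + exp (2 * r * P.2))) / (2 * r)

lemma hasFDerivAt_log_sq_add_exp (r e : ℝ) (P : ℝ × ℝ) :
    HasFDerivAt (fun P : ℝ × ℝ => log ((r * P.1 - e) ^ 2 + exp (2 * r * P.2)))
      ((2 * r) • (((r * P.1 - e) / ((r * P.1 - e) ^ 2 + exp (2 * r * P.2))) •
          ContinuousLinearMap.fst ℝ ℝ ℝ +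
        (exp (2 * r * P.2) / ((r * P.1 - e) ^ 2 + exp (2 * r * P.2))) •
          ContinuousLinearMap.snd ℝ ℝ ℝ)) P := by
  have hpos : 0 < (r * P.1 - e) ^ 2 + exp (2 * r * P.2) := by positivity
  have hfst : HasFDerivAt (fun P : ℝ × ℝ => r * P.1 - e) (r • ContinuousLinearMap.fst ℝ ℝ ℝ) P :=
    (hasFDerivAt_fst.const_mul r).sub_const e
  have hsnd : HasFDerivAt (fun P : ℝ × ℝ => 2 * r * P.2)
    ((2 * r) • ContinuousLinearMap.snd ℝ ℝ ℝ) P := hasFDerivAt_snd.const_mul (2 * r)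
  refine (((hfst.pow 2).fun_add hsnd.exp).log hpos.ne').congr_fderiv ?_
  simp only [Nat.add_one_sub_one, pow_one, nsmul_eq_mul, Nat.cast_ofNat]
  module

lemma hasFDerivAt_geodesicCoord (hr : 0 < r) (c R : ℝ) (P : ℝ × ℝ) :
    HasFDerivAt (geodesicCoord r c R)
      (((r * P.1 - (c - R)) / ((r * P.1 - (c - R)) ^ 2 + exp (2 * r * P.2)) -
          (r * P.1 - (c + R)) / ((r * P.1 - (c + R)) ^ 2 + exp (2 * r * P.2))) •
          ContinuousLinearMap.fst ℝ ℝ ℝ +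
        (exp (2 * r * P.2) / ((r * P.1 - (c - R)) ^ 2 + exp (2 * r * P.2)) -
          exp (2 * r * P.2) / ((r * P.1 - (c + R)) ^ 2 + exp (2 * r * P.2))) •
          ContinuousLinearMap.snd ℝ ℝ ℝ) P := by
  refine (((hasFDerivAt_log_sq_add_exp r (c - R) P).fun_sub
    (hasFDerivAt_log_sq_add_exp r (c + R) P)).mul_const (2 * r)⁻¹).congr_fderiv ?_
  rw [← smul_sub, inv_smul_smul₀ (by positivity)]
  module

lemma abs_geodesicCoord_sub_le_hypDist (hr : 0 < r) (c R : ℝ) (P Q : ℝ × ℝ) :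
    |geodesicCoord r c R Q - geodesicCoord r c R P| ≤ hypDist r P Q := by
  have hC1 (e : ℝ) : ContDiff ℝ 1 fun P : ℝ × ℝ => log ((r * P.1 - e) ^ 2 + exp (2 * r * P.2)) :=
    ContDiff.log (by fun_prop) fun P => by positivity
  rw [hypDist_eq_pathDist]
  refine abs_sub_le_pathDist (isSpeed_hypSpeed r) (((hC1 _).sub (hC1 _)).div_const _)
    (hasFDerivAt_geodesicCoord hr c R) (fun P v => abs_le_sqrt ?_) P Q
  rw [exp_neg]
  exact sq_diff_mul_add_le (exp_pos _) _ _ _ _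

/-- The geodesic of `H(r)` that is the half circle with center `c` and radius `|R|` in the
half-plane coordinates `(r x, e^{rz})`, for `-1 < τ < 1`. It runs in the direction of the sign of
`R`, and its arc length is `artanh τ / r`. -/
noncomputable def geodesicArc (r c R τ : ℝ) : ℝ × ℝ :=
  ((c + R * τ) / r, log (R ^ 2 * (1 - τ ^ 2)) / (2 * r))

lemma exp_geodesicArc_snd (hr : r ≠ 0) (hR : R ≠ 0) (hτ : τ ∈ Ioo (-1) 1) :
    exp (2 * r * (geodesicArc r c R τ).2) = R ^ 2 * (1 - τ ^ 2) := by
  have hpos : 0 < R ^ 2 * (1 - τ ^ 2) := by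
    have : 0 < 1 - τ ^ 2 := by nlinarith [hτ.1, hτ.2]
    positivity
  rw [geodesicArc, mul_div_cancel₀ _ (by positivity), exp_log hpos]

lemma geodesicCoord_geodesicArc (hr : r ≠ 0) (hR : R ≠ 0) (hτ : τ ∈ Ioo (-1) 1) :
    geodesicCoord r c R (geodesicArc r c R τ) = artanh τ / r := by
  have h₁ : 0 < 1 + τ := by linarith [hτ.1]
  have h₂ : 0 < 1 - τ := by linarith [hτ.2]
  have hfst : r * (geodesicArc r c R τ).1 = c + R * τ := mul_div_cancel₀ _ hr
  rw [geodesicCoord, exp_geodesicArc_snd hr hR hτ, hfst, artanh_eq_half_log ⟨hτ.1.le, hτ.2.le⟩,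
    log_div h₁.ne' h₂.ne']
  have e₁ : (c + R * τ - (c - R)) ^ 2 + R ^ 2 * (1 - τ ^ 2) = 2 * R ^ 2 * (1 + τ) := by ring
  have e₂ : (c + R * τ - (c + R)) ^ 2 + R ^ 2 * (1 - τ ^ 2) = 2 * R ^ 2 * (1 - τ) := by ring
  rw [e₁, e₂, log_mul (by positivity) h₁.ne', log_mul (by positivity) h₂.ne']
  ring

lemma hasDerivAt_artanh (ht : t ∈ Ioo (-1) 1) : HasDerivAt artanh (1 / (1 - t ^ 2)) t := by
  have h₁ : 0 < 1 + t := by linarith [ht.1]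
  have h₂ : 0 < 1 - t := by linarith [ht.2]
  have hlog : HasDerivAt (fun t => 1 / 2 * log ((1 + t) / (1 - t))) (1 / (1 - t ^ 2)) t := by
    have hdiv := ((hasDerivAt_id' t).const_add 1).fun_div ((hasDerivAt_id' t).const_sub 1) h₂.ne'
    refine ((hdiv.log (div_pos h₁ h₂).ne').const_mul (1 / 2)).congr_deriv ?_
    rw [show 1 - t ^ 2 = (1 + t) * (1 - t) by ring]
    field_simp
    ring
  refine hlog.congr_of_eventuallyEq ?_
  filter_upwards [Ioo_mem_nhds ht.1 ht.2] with s hs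
  exact artanh_eq_half_log (Ioo_subset_Icc_self hs)

lemma hasDerivAt_geodesicArc (hR : R ≠ 0) (ht : t ∈ Ioo (-1) 1) :
    HasDerivAt (geodesicArc r c R) (R / r, -(t / (r * (1 - t ^ 2)))) t := by
  have hpos : 0 < 1 - t ^ 2 := by nlinarith [ht.1, ht.2]
  refine HasDerivAt.prodMk ?_ ?_
  · simpa using (((hasDerivAt_id' t).const_mul R).const_add c).div_const r
  · have hsq := (((hasDerivAt_id' t).fun_pow 2).const_sub 1).const_mul (R ^ 2)
    refine ((hsq.log (by positivity)).div_const (2 * r)).congr_deriv ?_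
    field_simp
    ring

lemma hypSpeed_deriv_geodesicArc (hr : 0 < r) (hR : R ≠ 0) (ht : t ∈ Ioo (-1) 1) :
    hypSpeed r (geodesicArc r c R t) (deriv (geodesicArc r c R) t) = 1 / (1 - t ^ 2) / r := by
  have hpos : 0 < 1 - t ^ 2 := by nlinarith [ht.1, ht.2]
  rw [hypSpeed, exp_neg, exp_geodesicArc_snd hr.ne' hR ht, (hasDerivAt_geodesicArc hR ht).deriv]
  refine (congrArg sqrt ?_).trans (sqrt_sq (by positivity))
  field_simp
  ring

lemma contDiffOn_geodesicArc (hR : R ≠ 0) : ContDiffOn ℝ 1 (geodesicArc r c R) (Ioo (-1) 1) := by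
  refine ContDiffOn.prodMk (by fun_prop) (ContDiffOn.div_const (ContDiffOn.log (by fun_prop) ?_) _)
  intro t ht
  have : 0 < 1 - t ^ 2 := by nlinarith [ht.1, ht.2]
  positivity

lemma pathLength_geodesicArc_comp (hr : 0 < r) (hR : R ≠ 0) {τ : ℝ → ℝ} {a b : ℝ} (hab : a ≤ b)
    (hτ : ContDiffOn ℝ 1 τ (Icc a b)) (hmaps : MapsTo τ (Icc a b) (Ioo (-1) 1))
    (hmono : MonotoneOn τ (Icc a b)) :
    pathLength (hypSpeed r) (fun t => geodesicArc r c R (τ t)) a b =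
      (artanh (τ b) - artanh (τ a)) / r := by
  have hγ : ContDiffOn ℝ 1 (fun t => geodesicArc r c R (τ t)) (Icc a b) :=
    (contDiffOn_geodesicArc hR).comp hτ hmaps
  have hartanh : ContinuousOn (fun t => artanh (τ t) / r) (Icc a b) :=
    (HasDerivAt.continuousOn (fun s hs => hasDerivAt_artanh hs)).comp hτ.continuousOn hmaps
      |>.div_const r
  rw [sub_div]
  refine intervalIntegral.integral_eq_sub_of_hasDerivAt_of_le hab hartanh (fun t ht => ?_)
    ((isSpeed_hypSpeed r).intervalIntegrable (.of_contDiffOn hab hγ))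
  have hnhds := Icc_mem_nhds ht.1 ht.2
  have hmem := hmaps (Ioo_subset_Icc_self ht)
  have hτ' : HasDerivAt τ (deriv τ t) t :=
    ((hτ.contDiffAt hnhds).differentiableAt one_ne_zero).hasDerivAt
  have hnonneg : 0 ≤ deriv τ t := by
    rw [← derivWithin_of_mem_nhds hnhds]
    exact hmono.derivWithin_nonneg
  have hchain : HasDerivAt (fun t => geodesicArc r c R (τ t))
      (deriv τ t • deriv (geodesicArc r c R) (τ t)) t :=
    (hasDerivAt_geodesicArc hR hmem).differentiableAt.hasDerivAt.scomp t hτ'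
  rw [hchain.deriv, (isSpeed_hypSpeed r).smul, abs_of_nonneg hnonneg,
    hypSpeed_deriv_geodesicArc hr hR hmem]
  exact (((hasDerivAt_artanh hmem).comp t hτ').div_const r).congr_deriv (by ring)

lemma hypDist_geodesicArc (hr : 0 < r) (hR : R ≠ 0) (hs : s ∈ Ioo (-1) 1) (ht : t ∈ Ioo (-1) 1)
    (hst : s ≤ t) :
    hypDist r (geodesicArc r c R s) (geodesicArc r c R t) = (artanh t - artanh s) / r := by
  have hmaps : MapsTo id (Icc s t) (Ioo (-1) 1) := Icc_subset_Ioo hs.1 ht.2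
  refine le_antisymm ?_ ?_
  · rw [hypDist_eq_pathDist]
    exact (pathDist_le_pathLength (isSpeed_hypSpeed r)
      (.of_contDiffOn hst ((contDiffOn_geodesicArc hR).mono hmaps))).trans_eq
      (pathLength_geodesicArc_comp hr hR hst contDiffOn_id hmaps monotoneOn_id)
  · have key := abs_geodesicCoord_sub_le_hypDist hr c R (geodesicArc r c R s) (geodesicArc r c R t)
    rw [geodesicCoord_geodesicArc hr.ne' hR hs, geodesicCoord_geodesicArc hr.ne' hR ht,
      ← sub_div] at key
    exact (le_abs_self _).trans key

/-- The parameter at which the rising half of `geodesicArc r c R` reaches the height `h`. -/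
noncomputable def climbParam (r R h : ℝ) : ℝ :=
  -√(1 - exp (2 * r * h) / R ^ 2)

lemma climbParam_mem_Ioo (hR : R ≠ 0) (h : ℝ) : climbParam r R h ∈ Ioo (-1) 1 := by
  have : 0 < exp (2 * r * h) / R ^ 2 := by positivity
  refine ⟨neg_lt_neg ((sqrt_lt' one_pos).2 (by linarith)), ?_⟩
  exact (neg_nonpos.2 (sqrt_nonneg _)).trans_lt one_pos

lemma monotone_climbParam (hr : 0 ≤ r) (R : ℝ) : Monotone (climbParam r R) := fun h k hhk => by
  unfold climbParam
  gcongr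

lemma contDiffOn_climbParam {b : ℝ} (hr : 0 < r) (hb : exp (2 * r * b) < R ^ 2) :
    ContDiffOn ℝ 1 (climbParam r R) (Iic b) := by
  refine (ContDiffOn.sqrt (by fun_prop) fun h hh => ne_of_gt ?_).neg
  rw [sub_pos, div_lt_one ((exp_pos _).trans hb)]
  exact hb.trans_le' (exp_le_exp.2 (by gcongr; exact hh))

lemma geodesicArc_climbParam_snd {h : ℝ} (hr : r ≠ 0) (hR : R ≠ 0) (hh : exp (2 * r * h) ≤ R ^ 2) :
    (geodesicArc r c R (climbParam r R h)).2 = h := by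
  have hnonneg : 0 ≤ 1 - exp (2 * r * h) / R ^ 2 := by
    rw [sub_nonneg, div_le_one (by positivity)]
    exact hh
  rw [geodesicArc, climbParam, neg_sq, sq_sqrt hnonneg, sub_sub_cancel,
    mul_div_cancel₀ _ (by positivity), log_exp, mul_div_cancel_left₀ _ (by positivity)]

lemma climbParam_geodesicArc_snd (hr : r ≠ 0) (hR : R ≠ 0) (ht : t ∈ Ioo (-1) 1) :
    climbParam r R (geodesicArc r c R t).2 = -|t| := by
  rw [climbParam, exp_geodesicArc_snd hr hR ht, mul_div_cancel_left₀ _ (by positivity),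
    sub_sub_cancel, sqrt_sq_eq_abs]

lemma exists_graph_of_geodesicArc_climbParam {a b : ℝ} (hr : 0 < r) (hR : R ≠ 0) (hab : a ≤ b)
    (hb : exp (2 * r * b) < R ^ 2) :
    ∃ f : ℝ → ℝ, ContDiffOn ℝ 1 f (Icc a b) ∧
      (∀ h ∈ Icc a b, (f h, h) = geodesicArc r c R (climbParam r R h)) ∧
      pathLength (hypSpeed r) (fun h => (f h, h)) a b =
        (artanh (climbParam r R b) - artanh (climbParam r R a)) / r := by
  have hgraph : EqOn (fun h => ((geodesicArc r c R (climbParam r R h)).1, h))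
      (fun h => geodesicArc r c R (climbParam r R h)) (Icc a b) := fun h hh => by
    refine Prod.ext rfl (geodesicArc_climbParam_snd hr.ne' hR ?_).symm
    exact hb.le.trans' (exp_le_exp.2 (by gcongr; exact hh.2))
  have hC1 := (contDiffOn_climbParam hr hb).mono (Icc_subset_Iic_self (a := a))
  have hmaps : MapsTo (climbParam r R) (Icc a b) (Ioo (-1) 1) := fun h _ => climbParam_mem_Ioo hR h
  refine ⟨_, ((contDiffOn_geodesicArc hR).comp hC1 hmaps).fst, hgraph, ?_⟩
  exact (pathLength_congr hab hgraph).trans <|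
    pathLength_geodesicArc_comp hr hR hab hC1 hmaps ((monotone_climbParam hr.le R).monotoneOn _)

/-- The graph is the rising half of the geodesic, up to the second height. If the geodesic comes
down again before its end, then what remains is the arc joining two points of this height. -/
lemma exists_graph_of_geodesicArc (hr : 0 < r) (hR : R ≠ 0) (hs : s ∈ Ioo (-1) 1)
    (ht : t ∈ Ioo (-1) 1) (hst : s < t) (ht₀ : t ≠ 0) {P Q : ℝ × ℝ} (hP : geodesicArc r c R s = P)
    (hQ : geodesicArc r c R t = Q) (hPQ : P.2 ≤ Q.2) :
    ∃ f : ℝ → ℝ, ContDiffOn ℝ 1 f (Icc P.2 Q.2) ∧ f P.2 = P.1 ∧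
      pathLength (hypSpeed r) (fun h => (f h, h)) P.2 Q.2 + hypDist r (f Q.2, Q.2) Q =
        hypDist r P Q := by
  have hparam_P : climbParam r R P.2 = -|s| := hP ▸ climbParam_geodesicArc_snd hr.ne' hR hs
  have hparam_Q : climbParam r R Q.2 = -|t| := hQ ▸ climbParam_geodesicArc_snd hr.ne' hR ht
  have habs : |t| ≤ |s| := by
    rw [← neg_le_neg_iff, ← hparam_P, ← hparam_Q]
    exact monotone_climbParam hr.le R hPQ
  have hs₀ : s < 0 := by
    by_contra! hs₀
    exact hst.not_ge ((le_abs_self t).trans (habs.trans_eq (abs_of_nonneg hs₀)))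
  rw [abs_of_neg hs₀, neg_neg] at hparam_P
  have hlt : exp (2 * r * Q.2) < R ^ 2 := by
    rw [← hQ, exp_geodesicArc_snd hr.ne' hR ht, mul_lt_iff_lt_one_right (by positivity)]
    linarith [pow_pos (abs_pos.2 ht₀) 2, sq_abs t]
  obtain ⟨f, hf, hgraph, hlength⟩ := exists_graph_of_geodesicArc_climbParam (c := c) hr hR hPQ hlt
  have hfP := hgraph P.2 (left_mem_Icc.2 hPQ)
  rw [hparam_P, hP] at hfP
  refine ⟨f, hf, congrArg Prod.fst hfP, ?_⟩
  rw [hlength, hgraph _ (right_mem_Icc.2 hPQ), hparam_P, hparam_Q, ← hP, ← hQ,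
    hypDist_geodesicArc hr hR hs ht hst.le,
    hypDist_geodesicArc hr hR (hparam_Q ▸ climbParam_mem_Ioo hR Q.2) ht (neg_abs_le t)]
  ring

lemma geodesicArc_of_mem_circle (hr : r ≠ 0) (hR : R ≠ 0) {P : ℝ × ℝ}
    (hP : (r * P.1 - c) ^ 2 + exp (2 * r * P.2) = R ^ 2) :
    (r * P.1 - c) / R ∈ Ioo (-1) 1 ∧ geodesicArc r c R ((r * P.1 - c) / R) = P := by
  constructor
  · rw [mem_Ioo, ← abs_lt, ← sq_lt_one_iff_abs_lt_one, div_pow, div_lt_one (by positivity), ← hP]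
    exact lt_add_of_pos_right _ (exp_pos _)
  · have hexp : R ^ 2 * (1 - ((r * P.1 - c) / R) ^ 2) = exp (2 * r * P.2) := by
      rw [eq_sub_of_add_eq' hP]
      field_simp
    ext
    · simp only [geodesicArc]
      field_simp
      ring
    · rw [geodesicArc, hexp, log_exp, mul_div_cancel_left₀ _ (by positivity)]

lemma exists_geodesicArc (hr : 0 < r) {P Q : ℝ × ℝ} (hPQ : P.1 ≠ Q.1) :
    ∃ c R, R ≠ 0 ∧ ∃ s ∈ Ioo (-1) 1, ∃ t ∈ Ioo (-1) 1, s < t ∧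
      geodesicArc r c R s = P ∧ geodesicArc r c R t = Q := by
  have hX : r * Q.1 - r * P.1 ≠ 0 := by
    rw [← mul_sub]
    exact mul_ne_zero hr.ne' (sub_ne_zero.2 hPQ.symm)
  obtain ⟨c, hc⟩ : ∃ c, (r * P.1 - c) ^ 2 + exp (2 * r * P.2) =
      (r * Q.1 - c) ^ 2 + exp (2 * r * Q.2) := by
    refine ⟨((r * Q.1) ^ 2 - (r * P.1) ^ 2 + exp (2 * r * Q.2) - exp (2 * r * P.2)) /
      (2 * (r * Q.1 - r * P.1)), ?_⟩
    field_simp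
    ring
  obtain ⟨R, hR, hdir⟩ : ∃ R, (r * P.1 - c) ^ 2 + exp (2 * r * P.2) = R ^ 2 ∧
      0 < (r * Q.1 - r * P.1) / R := by
    set ρ := √((r * P.1 - c) ^ 2 + exp (2 * r * P.2))
    have hρ_pos : 0 < ρ := sqrt_pos.2 (by positivity)
    have hρ_sq : ρ ^ 2 = (r * P.1 - c) ^ 2 + exp (2 * r * P.2) := sq_sqrt (by positivity)
    rcases hX.lt_or_gt with hneg | hpos
    · exact ⟨-ρ, by rw [neg_sq, hρ_sq], div_pos_of_neg_of_neg hneg (neg_neg_of_pos hρ_pos)⟩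
    · exact ⟨ρ, hρ_sq.symm, div_pos hpos hρ_pos⟩
  have hR₀ : R ≠ 0 := by
    rintro rfl
    simp at hdir
  obtain ⟨hs, hP⟩ := geodesicArc_of_mem_circle hr.ne' hR₀ hR
  obtain ⟨ht, hQ⟩ := geodesicArc_of_mem_circle hr.ne' hR₀ (hc.symm.trans hR)
  refine ⟨c, R, hR₀, _, hs, _, ht, ?_, hP, hQ⟩
  rw [← sub_pos, ← sub_div]
  simpa using hdir

/-- The second condition excludes that the geodesic is at its summit in `Q`, where its slope as a
graph over the height is infinite. -/
lemma exists_graph_of_ne (hr : 0 < r) {P Q : ℝ × ℝ} (hPQ : P.2 ≤ Q.2) (hne : P.1 ≠ Q.1)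
    (hsummit : (r * (Q.1 - P.1)) ^ 2 ≠ exp (2 * r * Q.2) - exp (2 * r * P.2)) :
    ∃ f : ℝ → ℝ, ContDiffOn ℝ 1 f (Icc P.2 Q.2) ∧ f P.2 = P.1 ∧
      pathLength (hypSpeed r) (fun h => (f h, h)) P.2 Q.2 + hypDist r (f Q.2, Q.2) Q =
        hypDist r P Q := by
  obtain ⟨c, R, hR, s, hs, t, ht, hst, hP, hQ⟩ := exists_geodesicArc hr hne
  refine exists_graph_of_geodesicArc hr hR hs ht hst ?_ hP hQ hPQ
  rintro rfl
  rw [← hP, ← hQ, exp_geodesicArc_snd hr.ne' hR hs, exp_geodesicArc_snd hr.ne' hR ht] at hsummit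
  refine hsummit ?_
  simp only [geodesicArc]
  field_simp
  ring

lemma hypDist_horizontal_le (r x x' z : ℝ) :
    hypDist r (x, z) (x', z) ≤ exp (-(r * z)) * |x' - x| := by
  rw [hypDist_eq_pathDist]
  refine pathDist_le_of_lineMap (isSpeed_hypSpeed r) fun t _ => le_of_eq ?_
  have hexp : exp (-(2 * r * z)) = exp (-(r * z)) ^ 2 := by
    rw [← exp_nat_mul]
    ring_nf
  simp [hypSpeed, hexp, sqrt_sq_eq_abs, ← mul_pow, abs_mul]

lemma hypDist_vertical_le (r x z z' : ℝ) : hypDist r (x, z) (x, z') ≤ |z' - z| := by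
  rw [hypDist_eq_pathDist]
  refine pathDist_le_of_lineMap (isSpeed_hypSpeed r) fun t _ => le_of_eq ?_
  simp [hypSpeed, sqrt_sq_eq_abs]

lemma dense_ne_and_sq_ne (hr : r ≠ 0) (x₀ K : ℝ) :
    Dense {x | x ≠ x₀ ∧ (r * (x - x₀)) ^ 2 ≠ K} := by
  have hfinite : {x | x = x₀ ∨ (r * (x - x₀)) ^ 2 = K}.Finite := by
    refine (toFinite {x₀, x₀ + √K / r, x₀ - √K / r}).subset ?_
    rintro x (rfl | hx)
    · simp
    · have hK : (r * (x - x₀)) ^ 2 = √K ^ 2 := by rw [hx, sq_sqrt (hx ▸ sq_nonneg _)]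
      have hx' : x = x₀ + r * (x - x₀) / r := by field_simp; ring
      rcases sq_eq_sq_iff_eq_or_eq_neg.1 hK with h | h <;> rw [h] at hx'
      · exact .inr (.inl hx')
      · exact .inr (.inr (by rwa [neg_div, ← sub_eq_add_neg] at hx'))
  simpa only [compl_ofPred, not_or] using hfinite.countable.dense_compl ℝ

/-- Moving `Q` slightly sideways avoids the exceptional configurations of `exists_graph_of_ne`. -/
lemma exists_graph_add_hypDist_le (hr : 0 < r) {P Q : ℝ × ℝ} (hPQ : P.2 ≤ Q.2) {ε : ℝ}
    (hε : 0 < ε) :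
    ∃ f : ℝ → ℝ, ContDiffOn ℝ 1 f (Icc P.2 Q.2) ∧ f P.2 = P.1 ∧
      pathLength (hypSpeed r) (fun h => (f h, h)) P.2 Q.2 + hypDist r (f Q.2, Q.2) Q ≤
        hypDist r P Q + ε := by
  obtain ⟨x, ⟨hne, hsummit⟩, hx⟩ := (dense_ne_and_sq_ne hr.ne' P.1
    (exp (2 * r * Q.2) - exp (2 * r * P.2))).exists_dist_lt Q.1
      (show 0 < exp (r * Q.2) * (ε / 2) by positivity)
  obtain ⟨f, hf, hfP, hlength⟩ := exists_graph_of_ne (Q := (x, Q.2)) hr hPQ hne.symm hsummit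
  have hshift : hypDist r (x, Q.2) Q ≤ ε / 2 := by
    rw [dist_eq] at hx
    calc hypDist r (x, Q.2) Q ≤ exp (-(r * Q.2)) * |Q.1 - x| := hypDist_horizontal_le r x Q.1 Q.2
      _ ≤ exp (-(r * Q.2)) * (exp (r * Q.2) * (ε / 2)) := by gcongr
      _ = ε / 2 := by rw [← mul_assoc, ← exp_add, neg_add_cancel, exp_zero, one_mul]
  have hend := hypDist_triangle (r := r) (f Q.2, Q.2) (x, Q.2) Q
  have hdist := hypDist_triangle (r := r) P Q (x, Q.2)
  rw [hypDist_comm Q] at hdist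
  exact ⟨f, hf, hfP, by linarith⟩

end Geodesics

section UpperBound

variable {p q r : ℝ}

lemma solDist_le_of_nonneg (hp : 0 < p) (hq : 0 < q) (x y : ℝ) {z : ℝ} (hz : 0 ≤ z) :
    solDist p q (0, 0, 0) (x, y, z) ≤
      hypDist p (x, z) (0, 0) + hypDist q (y, -z) (0, 0) - z := by
  refine le_of_forall_pos_le_add fun ε hε => ?_
  obtain ⟨f, hf, hf₀, hlength_f⟩ :=
    exists_graph_add_hypDist_le (P := (0, 0)) (Q := (x, z)) hp hz (half_pos hε)
  obtain ⟨g, hg, hgz, hlength_g⟩ :=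
    exists_graph_add_hypDist_le (P := (y, -z)) (Q := (0, 0)) hq (neg_nonpos.2 hz) (half_pos hε)
  dsimp only at hf hf₀ hlength_f hg hgz hlength_g
  have hg_neg : ContDiffOn ℝ 1 (fun h => g (-h)) (Icc 0 z) :=
    hg.comp (by fun_prop) fun h hh => ⟨neg_le_neg hh.2, neg_nonpos.2 hh.1⟩
  have hreverse : pathLength (hypSpeed q) (fun h => (g (-h), -h)) 0 z =
      pathLength (hypSpeed q) (fun h => (g h, h)) (-z) 0 := by
    simpa using pathLength_comp_sub_left (γ := fun h => (g h, h)) (a := 0) (b := z)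
      (isSpeed_hypSpeed q) 0
  have hstart : solDist p q (0, 0, 0) (0, g 0, 0) ≤ hypDist q (g 0, 0) (0, 0) := by
    simpa [hypDist_comm] using solDist_le_hypDist_right (p := p) (q := q) 0 (0, 0) (g 0, 0)
  have hgraph := solDist_graph_le (p := p) (q := q) hz hf hg_neg
  simp only [hf₀, hgz, neg_zero, hreverse] at hgraph
  have hend := solDist_le_hypDist_left (p := p) (q := q) y (f z, z) (x, z)
  have htriangle := solDist_triangle (p := p) (q := q) (0, 0, 0) (0, g 0, 0) (x, y, z)
  have htriangle' := solDist_triangle (p := p) (q := q) (0, g 0, 0) (f z, y, z) (x, y, z)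
  rw [hypDist_comm (x, z)]
  linarith

lemma solDist_le_hypDist_add_hypDist (hp : 0 < p) (hq : 0 < q) (x y z : ℝ) :
    solDist p q (0, 0, 0) (x, y, z) ≤
      hypDist p (x, z) (0, 0) + hypDist q (y, -z) (0, 0) - |z| := by
  rcases le_total 0 z with hz | hz
  · rw [abs_of_nonneg hz]
    exact solDist_le_of_nonneg hp hq x y hz
  · have hswap : solDist p q (0, 0, 0) (x, y, z) ≤ solDist q p (0, 0, 0) (y, x, -z) := by
      simpa using solDist_swap_le (p := q) (q := p) (0, 0, 0) (y, x, -z)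
    rw [abs_of_nonpos hz, add_comm]
    simpa only [neg_neg] using hswap.trans (solDist_le_of_nonneg hq hp y x (neg_nonneg.2 hz))

lemma hypDist_zero_le (hr : 0 < r) (x z : ℝ) :
    hypDist r (x, z) (0, 0) ≤ 1 + 2 * log (1 + |x|) / r + |z| := by
  set H := log (1 + |x|) / r with hH
  have hH₀ : 0 ≤ H := div_nonneg (log_nonneg (by simp)) hr.le
  have hup : hypDist r (x, z) (x, H) ≤ H + |z| :=
    (hypDist_vertical_le r x z H).trans ((abs_sub H z).trans_eq (by rw [abs_of_nonneg hH₀]))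
  have hacross : hypDist r (x, H) (0, H) ≤ 1 := by
    refine (hypDist_horizontal_le r x 0 H).trans ?_
    rw [hH, mul_div_cancel₀ _ hr.ne', exp_neg, exp_log (by positivity), zero_sub, abs_neg,
      inv_mul_le_one₀ (by positivity)]
    simp
  have hdown : hypDist r (0, H) (0, 0) ≤ H := by
    simpa [abs_of_nonneg hH₀] using hypDist_vertical_le r 0 H 0
  calc hypDist r (x, z) (0, 0)
      ≤ hypDist r (x, z) (x, H) + (hypDist r (x, H) (0, H) + hypDist r (0, H) (0, 0)) :=
        (hypDist_triangle _ _ _).trans (by gcongr; exact hypDist_triangle _ _ _)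
    _ ≤ H + |z| + (1 + H) := by gcongr
    _ = 1 + 2 * log (1 + |x|) / r + |z| := by rw [hH]; ring

end UpperBound

theorem solDist_upper_bound (p q : ℝ) (hp : 0 < p) (hq : 0 < q) :
    ∃ c > (0:ℝ), ∀ x y z : ℝ,
      solDist p q (0, 0, 0) (x, y, z)
          ≤ hypDist p (x, z) (0, 0) + hypDist q (y, -z) (0, 0) - |z|
      ∧ hypDist p (x, z) (0, 0) + hypDist q (y, -z) (0, 0) - |z|
          ≤ c + 2 * Real.log (1 + |x|) / p + 2 * Real.log (1 + |y|) / q + |z| := by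
  refine ⟨2, two_pos, fun x y z => ⟨solDist_le_hypDist_add_hypDist hp hq x y z, ?_⟩⟩
  have hx := hypDist_zero_le hp x z
  have hy := hypDist_zero_le hq y (-z)
  rw [abs_neg] at hy
  linarith
end

section
/- Let p, q > 0, a ∈ ℝ and λ ≥ −a²/2, and let h be a minimal element of H⁺(Δ_a, λ), where Δ_a is the Laplacian with vertical drift a on Sol(p,q). Then either there exists a minimal element h₁ of H⁺(Δ^{H(p)}_a, λ) such that h(x,y,z) = h₁(x,z) for all (x,y,z) ∈ ℝ³, or there exists a minimal element h₂ of H⁺(Δ^{H(q)}_{−a}, λ) such that h(x,y,z) = h₂(y,−z) for all (x,y,z) ∈ ℝ³. -/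
open Real

/-- The Laplacian with vertical drift `a` on `Sol(p,q) ≡ ℝ³`:
`Δ_a f = (1/2)(e^{2pz} f_xx + e^{−2qz} f_yy + f_zz) + a f_z`. -/
noncomputable def solLap (p q a : ℝ) (f : ℝ × ℝ × ℝ → ℝ) (w : ℝ × ℝ × ℝ) : ℝ :=
  (1/2) * (Real.exp (2*p*w.2.2) * iteratedDeriv 2 (fun t => f (t, w.2.1, w.2.2)) w.1
    + Real.exp (-(2*q*w.2.2)) * iteratedDeriv 2 (fun t => f (w.1, t, w.2.2)) w.2.1
    + iteratedDeriv 2 (fun t => f (w.1, w.2.1, t)) w.2.2)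
  + a * deriv (fun t => f (w.1, w.2.1, t)) w.2.2

/-- The hyperbolic Laplacian with drift `b` on the logarithmic model `H(r) ≡ ℝ²`:
`Δ^{H(r)}_b g = (1/2)(e^{2rz} g_xx + g_zz) + b g_z`. -/
noncomputable def hypLap (r b : ℝ) (g : ℝ × ℝ → ℝ) (w : ℝ × ℝ) : ℝ :=
  (1/2) * (Real.exp (2*r*w.2) * iteratedDeriv 2 (fun t => g (t, w.2)) w.1
    + iteratedDeriv 2 (fun t => g (w.1, t)) w.2)
  + b * deriv (fun t => g (w.1, t)) w.2

/-- Membership in `H⁺(Δ_a, λ)` on `Sol(p,q)`: strictly positive `C²` `λ`-eigenfunction. -/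
def IsSolEigen (p q a lam : ℝ) (h : ℝ × ℝ × ℝ → ℝ) : Prop :=
  ContDiff ℝ 2 h ∧ (∀ w, 0 < h w) ∧ ∀ w, solLap p q a h w = lam * h w

/-- A minimal element of `H⁺(Δ_a, λ)` on `Sol(p,q)`: value `1` at the origin, and any
element of `H⁺(Δ_a, λ)` dominated by it is a constant multiple of it. -/
def IsSolMinimal (p q a lam : ℝ) (h : ℝ × ℝ × ℝ → ℝ) : Prop :=
  IsSolEigen p q a lam h ∧ h (0, 0, 0) = 1 ∧
    ∀ f, IsSolEigen p q a lam f → (∀ w, f w ≤ h w) → ∃ c : ℝ, ∀ w, f w = c * h w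

/-- Membership in `H⁺(Δ^{H(r)}_b, λ)`: strictly positive `C²` `λ`-eigenfunction. -/
def IsHypEigen (r b lam : ℝ) (g : ℝ × ℝ → ℝ) : Prop :=
  ContDiff ℝ 2 g ∧ (∀ w, 0 < g w) ∧ ∀ w, hypLap r b g w = lam * g w

/-- A minimal element of `H⁺(Δ^{H(r)}_b, λ)`. -/
def IsHypMinimal (r b lam : ℝ) (g : ℝ × ℝ → ℝ) : Prop :=
  IsHypEigen r b lam g ∧ g (0, 0) = 1 ∧
    ∀ f, IsHypEigen r b lam f → (∀ w, f w ≤ g w) → ∃ c : ℝ, ∀ w, f w = c * g w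

/-!
Write `X, Y, Z` for the left-invariant frame of `Sol(p,q)`, in which `2 Δ_a = X² + Y² + Z² + 2 a Z`.
For `h = exp u` a positive eigenfunction, Bochner's formula and a maximum principle with a cutoff
bound the frame derivatives of `u` at the origin independently of `h` (Cheng–Yau), and left
invariance spreads the bound to every point. As `∂ₓ = e^{-pz} X` and `∂_y = e^{qz} Y`, a
translation of `h` in the direction `x` changes `h` only by a small factor for `z` large, and a
translation in the direction `y` only for `-z` large. Hence the mixed difference of `h` in `x` and
`y` is an eigenfunction which is, on `|z| = N`, at most a constant tending to `0` with `1 / N` times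
a fixed positive eigenfunction, and the maximum principle on slabs shows that it vanishes.
Bochner's formula needs one derivative more than `h` has; integrating `h` over horizontal segments
provides it, and the segments are shrunk to points afterwards.

So `h = A + B` with `A` independent of `y` and `B` independent of `x`. Adding to `A` a solution of a
linear ODE in `z` turns both into eigenfunctions. The comparison principle and compactness then give
an eigenfunction of `z` alone lying between `-B` and `A`, and subtracting it makes both
nonnegative; here `λ ≥ -a²/2` makes the characteristic exponents real. By minimality, `A` is a
multiple of `h`. If the multiple is nonzero then `h` does not depend on `y`, otherwise `h = B` does
not depend on `x`.
-/

/-- The derivative `V f` of a function `f` along a vector field `V`. -/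
noncomputable def fieldDeriv {E : Type*} [NormedAddCommGroup E] [NormedSpace ℝ E]
    (V : E → E) (f : E → ℝ) (w : E) : ℝ :=
  fderiv ℝ f w (V w)

section FieldDerivatives

variable {E : Type*} [NormedAddCommGroup E] [NormedSpace ℝ E]
  {V W : E → E} {f g : E → ℝ} {w : E} {m n : WithTop ℕ∞}

theorem contDiff_fieldDeriv (hV : ContDiff ℝ m V) (hf : ContDiff ℝ n f) (hmn : m + 1 ≤ n) :
    ContDiff ℝ m (fieldDeriv V f) :=
  (hf.fderiv_right hmn).clm_apply hV

theorem differentiable_fieldDeriv (hV : ContDiff ℝ 1 V) (hf : ContDiff ℝ 2 f) :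
    Differentiable ℝ (fieldDeriv V f) :=
  (contDiff_fieldDeriv hV hf one_add_one_eq_two.le).differentiable one_ne_zero

theorem fieldDeriv_add (hf : Differentiable ℝ f) (hg : Differentiable ℝ g) :
    fieldDeriv V (f + g) = fieldDeriv V f + fieldDeriv V g := by
  ext w
  simp [fieldDeriv, fderiv_add (hf w) (hg w)]

theorem fieldDeriv_sum {ι : Type*} (s : Finset ι) {F : ι → E → ℝ}
    (hF : ∀ i, Differentiable ℝ (F i)) :
    fieldDeriv V (∑ i ∈ s, F i) = ∑ i ∈ s, fieldDeriv V (F i) := by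
  ext w
  simp [fieldDeriv, fderiv_sum fun i _ => hF i w]

theorem fieldDeriv_const_smul (hf : Differentiable ℝ f) (c : ℝ) :
    fieldDeriv V (c • f) = c • fieldDeriv V f := by
  ext w
  simp [fieldDeriv, fderiv_const_smul (hf w)]

theorem fieldDeriv_mul (hf : Differentiable ℝ f) (hg : Differentiable ℝ g) :
    fieldDeriv V (f * g) = f * fieldDeriv V g + g * fieldDeriv V f := by
  ext w
  simp [fieldDeriv, fderiv_mul (hf w) (hg w)]

theorem fieldDeriv_const (c : ℝ) : fieldDeriv V (fun _ => c) = 0 := by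
  ext w
  simp [fieldDeriv]

theorem fieldDeriv_comp_scalar {φ φ' : ℝ → ℝ} (hφ : ∀ t, HasDerivAt φ (φ' t) t)
    (hf : Differentiable ℝ f) : fieldDeriv V (φ ∘ f) = (φ' ∘ f) * fieldDeriv V f := by
  ext w
  simp [fieldDeriv, ((hφ (f w)).comp_hasFDerivAt w (hf w).hasFDerivAt).fderiv]

theorem fieldDeriv_comp_of_related {F : Type*} [NormedAddCommGroup F] [NormedSpace ℝ F]
    {V' : F → F} {τ : F → E} {T : F → F →L[ℝ] E}
    (hτ : ∀ w, HasFDerivAt τ (T w) w) (hT : ∀ w, T w (V' w) = V (τ w))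
    (hf : Differentiable ℝ f) : fieldDeriv V' (f ∘ τ) = fieldDeriv V f ∘ τ := by
  ext w
  simp [fieldDeriv, ((hf (τ w)).hasFDerivAt.comp w (hτ w)).fderiv, hT]

theorem hasDerivAt_comp_line (hf : Differentiable ℝ f) (w v : E) (t : ℝ) :
    HasDerivAt (fun s : ℝ => f (w + s • v)) (fderiv ℝ f (w + t • v) v) t := by
  have hline : HasDerivAt (fun s : ℝ => w + s • v) v t := by
    simpa using ((hasDerivAt_id t).smul_const v).const_add w
  exact (hf (w + t • v)).hasFDerivAt.comp_hasDerivAt t hline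

theorem fieldDeriv_fieldDeriv (hf : ContDiff ℝ 2 f) (hW : Differentiable ℝ W) (w : E) :
    fieldDeriv V (fieldDeriv W f) w
      = fderiv ℝ (fderiv ℝ f) w (V w) (W w) + fderiv ℝ f w (fderiv ℝ W w (V w)) := by
  have hdf : DifferentiableAt ℝ (fderiv ℝ f) w :=
    (hf.fderiv_right one_add_one_eq_two.le).differentiable one_ne_zero w
  have := (hdf.hasFDerivAt.clm_apply (hW w).hasFDerivAt).fderiv
  change fderiv ℝ (fun y => fderiv ℝ f y (W y)) w (V w) = _
  simp [this, add_comm]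

theorem fieldDeriv_comm (hf : ContDiff ℝ 2 f) (hV : Differentiable ℝ V)
    (hW : Differentiable ℝ W) :
    fieldDeriv V (fieldDeriv W f)
      = fieldDeriv W (fieldDeriv V f) + fieldDeriv (VectorField.lieBracket ℝ V W) f := by
  ext w
  have hsymm := hf.contDiffAt.isSymmSndFDerivAt (x := w) (by simp) (V w) (W w)
  rw [Pi.add_apply, fieldDeriv_fieldDeriv hf hW, fieldDeriv_fieldDeriv hf hV, hsymm]
  simp [fieldDeriv, VectorField.lieBracket]

theorem fderiv_fderiv_comm (hf : ContDiff ℝ 2 f) (v w x : E) :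
    fderiv ℝ (fun y => fderiv ℝ f y w) x v = fderiv ℝ (fun y => fderiv ℝ f y v) x w := by
  have hcomm := fieldDeriv_comm (V := fun _ => v) (W := fun _ => w) hf (by fun_prop) (by fun_prop)
  simpa +unfoldPartialApp [fieldDeriv, VectorField.lieBracket] using congrFun hcomm x

theorem contDiff_succ_of_span_eq_top [FiniteDimensional ℝ E] {k : ℕ} {s : Set E}
    (hs : Submodule.span ℝ s = ⊤) (hf : Differentiable ℝ f)
    (hderiv : ∀ v ∈ s, ContDiff ℝ k fun w => fderiv ℝ f w v) : ContDiff ℝ (k + 1) f := by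
  refine contDiff_succ_iff_fderiv_apply.2 ⟨hf, by simp, fun v => ?_⟩
  induction show v ∈ Submodule.span ℝ s from hs ▸ Submodule.mem_top using
    Submodule.span_induction with
  | mem v hv => exact hderiv v hv
  | zero => simpa using contDiff_const
  | add u v _ _ hu hv => simpa using hu.add hv
  | smul c v _ hv => simpa using hv.const_smul c

theorem deriv_deriv_nonpos_of_isLocalMax {φ : ℝ → ℝ} {t : ℝ} (hφ : ContinuousAt φ t)
    (hmax : IsLocalMax φ t) : deriv (deriv φ) t ≤ 0 := by
  by_contra! hpos
  have hmin : IsLocalMin φ t := isLocalMin_of_deriv_deriv_pos hpos hmax.deriv_eq_zero hφ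
  have hconst : φ =ᶠ[nhds t] fun _ => φ t := by
    filter_upwards [hmin, hmax] with s h₁ h₂ using le_antisymm h₂ h₁
  have := hconst.deriv.deriv_eq
  simp [this] at hpos

theorem fieldDeriv_eq_zero_of_isLocalMax (hmax : IsLocalMax f w) : fieldDeriv V f w = 0 := by
  simp [fieldDeriv, hmax.fderiv_eq_zero]

theorem fieldDeriv_fieldDeriv_nonpos_of_isLocalMax (hmax : IsLocalMax f w) (hf : ContDiff ℝ 2 f)
    (hV : Differentiable ℝ V) : fieldDeriv V (fieldDeriv V f) w ≤ 0 := by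
  have hfd : Differentiable ℝ f := hf.differentiable two_ne_zero
  have hdf : Differentiable ℝ (fieldDeriv (fun _ => V w) f) :=
    differentiable_fieldDeriv contDiff_const hf
  have hline : ContinuousAt (fun s : ℝ => w + s • V w) 0 := by fun_prop
  have hmax' : IsLocalMax (fun s : ℝ => f (w + s • V w)) 0 := by
    have : ∀ᶠ u in nhds (w + (0 : ℝ) • V w), f u ≤ f w := by
      rw [zero_smul, add_zero]
      exact hmax
    simpa [IsLocalMax, IsMaxFilter] using hline.eventually this
  have hderiv : deriv (deriv fun s : ℝ => f (w + s • V w)) 0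
      = fieldDeriv (fun _ => V w) (fieldDeriv (fun _ => V w) f) w := by
    rw [funext fun t => (hasDerivAt_comp_line hfd w (V w) t).deriv]
    simpa [fieldDeriv] using (hasDerivAt_comp_line hdf w (V w) 0).deriv
  have hnonpos := deriv_deriv_nonpos_of_isLocalMax
    (hasDerivAt_comp_line hfd w (V w) 0).continuousAt hmax'
  rw [hderiv, fieldDeriv_fieldDeriv hf (differentiable_const _)] at hnonpos
  rw [fieldDeriv_fieldDeriv hf hV]
  simpa [hmax.fderiv_eq_zero] using hnonpos

end FieldDerivatives

/-- The integral of `f` over the segment from `w` to `w + ε • v`, as a function of `w`. -/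
noncomputable def segInt {E : Type*} [NormedAddCommGroup E] [NormedSpace ℝ E]
    (v : E) (ε : ℝ) (f : E → ℝ) (w : E) : ℝ :=
  ∫ s in (0 : ℝ)..ε, f (w + s • v)

section SegmentIntegrals

variable {E : Type*} [NormedAddCommGroup E] [NormedSpace ℝ E]
  {V : E → E} {f g : E → ℝ} {v w : E} {ε : ℝ}

theorem continuous_segInt (hf : Continuous f) : Continuous (segInt v ε f) :=
  intervalIntegral.continuous_parametric_intervalIntegral_of_continuous' (by fun_prop) 0 ε

theorem intervalIntegrable_comp_line (hf : Continuous f) (w v : E) (a b : ℝ) :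
    IntervalIntegrable (fun s : ℝ => f (w + s • v)) MeasureTheory.volume a b :=
  Continuous.intervalIntegrable (by fun_prop) _ _

theorem segInt_add (hf : Continuous f) (hg : Continuous g) :
    segInt v ε (f + g) = segInt v ε f + segInt v ε g := by
  ext w
  exact intervalIntegral.integral_add (intervalIntegrable_comp_line hf ..)
    (intervalIntegrable_comp_line hg ..)

theorem segInt_sub (hf : Continuous f) (hg : Continuous g) :
    segInt v ε (f - g) = segInt v ε f - segInt v ε g := by
  ext w
  exact intervalIntegral.integral_sub (intervalIntegrable_comp_line hf ..)
    (intervalIntegrable_comp_line hg ..)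

theorem segInt_sum {ι : Type*} (s : Finset ι) {F : ι → E → ℝ}
    (hF : ∀ i, Continuous (F i)) :
    segInt v ε (∑ i ∈ s, F i) = ∑ i ∈ s, segInt v ε (F i) := by
  ext w
  simp only [segInt, Finset.sum_apply]
  exact intervalIntegral.integral_finsetSum fun i _ => intervalIntegrable_comp_line (hF i) ..

theorem segInt_const_smul (c : ℝ) : segInt v ε (c • f) = c • segInt v ε f := by
  ext w
  simp [segInt]

theorem segInt_comp_add_right (u : E) :
    segInt v ε (fun w => f (w + u)) = fun w => segInt v ε f (w + u) := by
  ext w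
  simp only [segInt, add_right_comm]

theorem segInt_pos (hε : 0 < ε) (hf : Continuous f) (hpos : ∀ w, 0 < f w) (w : E) :
    0 < segInt v ε f w :=
  intervalIntegral.intervalIntegral_pos_of_pos (intervalIntegrable_comp_line hf ..)
    (fun _ => hpos _) hε

theorem eq_zero_of_forall_segInt_eq_zero (hf : Continuous f)
    (hzero : ∀ ε > 0, segInt v ε f w = 0) : f w = 0 := by
  have hline : Continuous fun s : ℝ => f (w + s • v) := by fun_prop
  have hderiv : HasDerivAt (fun ε => segInt v ε f w) (f w) 0 := by
    simpa [segInt] using hline.integral_hasStrictDerivAt 0 0 |>.hasDerivAt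
  refine (uniqueDiffWithinAt_Ioi 0).eq_deriv _ hderiv.hasDerivWithinAt ?_
  exact (hasDerivWithinAt_const _ _ _).congr hzero (by simp [segInt])

variable [FiniteDimensional ℝ E]

theorem hasFDerivAt_segInt (hf : ContDiff ℝ 1 f) (w : E) :
    HasFDerivAt (segInt v ε f) (∫ s in (0 : ℝ)..ε, fderiv ℝ f (w + s • v)) w := by
  have : ProperSpace E := FiniteDimensional.proper ℝ E
  have hc : Continuous f := hf.continuous
  have : Continuous (fderiv ℝ f) := hf.continuous_fderiv one_ne_zero
  obtain ⟨C, hC⟩ := ((isCompact_closedBall w 1).prod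
    (isCompact_uIcc (a := (0 : ℝ)) (b := ε))).exists_bound_of_continuousOn
      (f := fun x : E × ℝ => fderiv ℝ f (x.1 + x.2 • v)) (by fun_prop)
  refine intervalIntegral.hasFDerivAt_integral_of_dominated_of_fderiv_le
    (F := fun w s => f (w + s • v)) (F' := fun w s => fderiv ℝ f (w + s • v))
    (bound := fun _ => C) (Metric.closedBall_mem_nhds w one_pos)
    (.of_forall fun x => Continuous.aestronglyMeasurable (by fun_prop))
    (intervalIntegrable_comp_line hc ..) (Continuous.aestronglyMeasurable (by fun_prop))
    (.of_forall fun t ht x hx => hC (x, t) ⟨hx, Set.uIoc_subset_uIcc ht⟩)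
    intervalIntegrable_const (.of_forall fun t _ x _ => ?_)
  exact hasFDerivAt_comp_add_right (t • v) |>.2 (hf.differentiable one_ne_zero _).hasFDerivAt

theorem fderiv_segInt_apply (hf : ContDiff ℝ 1 f) (w u : E) :
    fderiv ℝ (segInt v ε f) w u = ∫ s in (0 : ℝ)..ε, fderiv ℝ f (w + s • v) u := by
  have : Continuous (fderiv ℝ f) := hf.continuous_fderiv one_ne_zero
  rw [(hasFDerivAt_segInt hf w).fderiv]
  exact ContinuousLinearMap.intervalIntegral_apply
    (Continuous.intervalIntegrable (by fun_prop) _ _) u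

theorem fieldDeriv_segInt (hV : ∀ (w : E) (t : ℝ), V (w + t • v) = V w) (hf : ContDiff ℝ 1 f) :
    fieldDeriv V (segInt v ε f) = segInt v ε (fieldDeriv V f) := by
  ext w
  simp only [fieldDeriv, segInt, hV]
  exact fderiv_segInt_apply hf w (V w)

theorem fderiv_segInt_self (hf : ContDiff ℝ 1 f) (w : E) :
    fderiv ℝ (segInt v ε f) w v = f (w + ε • v) - f w := by
  have : Continuous (fderiv ℝ f) := hf.continuous_fderiv one_ne_zero
  rw [fderiv_segInt_apply hf, intervalIntegral.integral_eq_sub_of_hasDerivAt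
    (fun t _ => hasDerivAt_comp_line (hf.differentiable one_ne_zero) w v t)
    (Continuous.intervalIntegrable (by fun_prop) _ _)]
  simp

theorem contDiff_segInt {k : ℕ} (hf : ContDiff ℝ k f) : ContDiff ℝ k (segInt v ε f) := by
  induction k generalizing f with
  | zero =>
    rw [Nat.cast_zero, contDiff_zero] at hf ⊢
    exact continuous_segInt hf
  | succ k ih =>
    push_cast at hf ⊢
    have hf₁ : ContDiff ℝ 1 f := hf.of_le (by simp)
    refine contDiff_succ_iff_fderiv_apply.2
      ⟨fun w => (hasFDerivAt_segInt hf₁ w).differentiableAt, by simp, fun u => ?_⟩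
    simp only [fderiv_segInt_apply hf₁]
    exact ih (hf.fderiv_right le_rfl |>.clm_apply contDiff_const)

end SegmentIntegrals

/-- The second-order operator `∑ᵢ Vᵢ² + ∑ᵢ bᵢ Vᵢ` attached to vector fields `Vᵢ`, with first-order
part of constant coefficients `bᵢ`. -/
noncomputable def hormanderOp {E ι : Type*} [NormedAddCommGroup E] [NormedSpace ℝ E] [Fintype ι]
    (V : ι → E → E) (b : ι → ℝ) (f : E → ℝ) : E → ℝ :=
  ∑ i, fieldDeriv (V i) (fieldDeriv (V i) f) + ∑ i, b i • fieldDeriv (V i) f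

/-- The carré du champ `Γ(f, g) = ∑ᵢ Vᵢ f * Vᵢ g` of `hormanderOp V b`, which does not depend
on `b`. -/
noncomputable def carreDuChamp {E ι : Type*} [NormedAddCommGroup E] [NormedSpace ℝ E] [Fintype ι]
    (V : ι → E → E) (f g : E → ℝ) : E → ℝ :=
  ∑ i, fieldDeriv (V i) f * fieldDeriv (V i) g

/-- The operator `f ↦ L f + 2 Γ(u, f)`. If `L (exp u) = μ * exp u`, then it is, up to the additive
constant `μ`, the conjugate of `L = hormanderOp V b` by multiplication with `exp u`. -/
noncomputable def driftOp {E ι : Type*} [NormedAddCommGroup E] [NormedSpace ℝ E] [Fintype ι]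
    (V : ι → E → E) (b : ι → ℝ) (u f : E → ℝ) : E → ℝ :=
  hormanderOp V b f + (2 : ℝ) • carreDuChamp V u f

section HormanderOperators

variable {E ι : Type*} [NormedAddCommGroup E] [NormedSpace ℝ E] [Fintype ι]
  {V : ι → E → E} {b : ι → ℝ} {u f g : E → ℝ} {w : E} {μ : ℝ}

theorem hormanderOp_apply (f : E → ℝ) (w : E) :
    hormanderOp V b f w = ∑ i, fieldDeriv (V i) (fieldDeriv (V i) f) w
      + ∑ i, b i * fieldDeriv (V i) f w := by
  simp [hormanderOp]

theorem carreDuChamp_apply (f g : E → ℝ) (w : E) :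
    carreDuChamp V f g w = ∑ i, fieldDeriv (V i) f w * fieldDeriv (V i) g w := by
  simp [carreDuChamp]

theorem driftOp_apply (u f : E → ℝ) (w : E) :
    driftOp V b u f w = hormanderOp V b f w + 2 * carreDuChamp V u f w := rfl

theorem carreDuChamp_self_apply (f : E → ℝ) (w : E) :
    carreDuChamp V f f w = ∑ i, fieldDeriv (V i) f w ^ 2 := by
  simp only [carreDuChamp_apply, sq]

theorem carreDuChamp_self_nonneg (f : E → ℝ) (w : E) : 0 ≤ carreDuChamp V f f w := by
  rw [carreDuChamp_self_apply]
  positivity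

theorem carreDuChamp_sq_le (f g : E → ℝ) (w : E) :
    carreDuChamp V f g w ^ 2 ≤ carreDuChamp V f f w * carreDuChamp V g g w := by
  simp only [carreDuChamp_self_apply]
  rw [carreDuChamp_apply]
  exact Finset.sum_mul_sq_le_sq_mul_sq ..

theorem contDiff_carreDuChamp {n m : WithTop ℕ∞} (hV : ∀ i, ContDiff ℝ m (V i))
    (hf : ContDiff ℝ n f) (hg : ContDiff ℝ n g) (hmn : m + 1 ≤ n) :
    ContDiff ℝ m (carreDuChamp V f g) := by
  rw [funext (carreDuChamp_apply f g)]
  exact ContDiff.sum fun i _ => (contDiff_fieldDeriv (hV i) hf hmn).mul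
    (contDiff_fieldDeriv (hV i) hg hmn)

theorem carreDuChamp_add_right (hf : Differentiable ℝ f) (hg : Differentiable ℝ g) :
    carreDuChamp V u (f + g) = carreDuChamp V u f + carreDuChamp V u g := by
  simp only [carreDuChamp, fieldDeriv_add hf hg, mul_add, Finset.sum_add_distrib]

theorem carreDuChamp_const_smul_right (hf : Differentiable ℝ f) (c : ℝ) :
    carreDuChamp V u (c • f) = c • carreDuChamp V u f := by
  simp only [carreDuChamp, fieldDeriv_const_smul hf, mul_smul_comm, Finset.smul_sum]

theorem carreDuChamp_mul_right (hf : Differentiable ℝ f) (hg : Differentiable ℝ g) :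
    carreDuChamp V u (f * g) = f * carreDuChamp V u g + g * carreDuChamp V u f := by
  simp only [carreDuChamp, fieldDeriv_mul hf hg, mul_add, Finset.sum_add_distrib, Finset.mul_sum,
    mul_left_comm]

theorem carreDuChamp_comp_scalar_right {φ φ' : ℝ → ℝ} (hφ : ∀ t, HasDerivAt φ (φ' t) t)
    (hf : Differentiable ℝ f) :
    carreDuChamp V u (φ ∘ f) = (φ' ∘ f) * carreDuChamp V u f := by
  simp only [carreDuChamp, fieldDeriv_comp_scalar hφ hf, Finset.mul_sum, mul_left_comm]

theorem carreDuChamp_comp_scalar_left {φ φ' : ℝ → ℝ} (hφ : ∀ t, HasDerivAt φ (φ' t) t)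
    (hf : Differentiable ℝ f) :
    carreDuChamp V (φ ∘ f) u = (φ' ∘ f) * carreDuChamp V f u := by
  simp only [carreDuChamp, fieldDeriv_comp_scalar hφ hf, Finset.mul_sum, mul_assoc]

variable (hV : ∀ i, ContDiff ℝ 1 (V i))
include hV

theorem hormanderOp_add (hf : ContDiff ℝ 2 f) (hg : ContDiff ℝ 2 g) :
    hormanderOp V b (f + g) = hormanderOp V b f + hormanderOp V b g := by
  simp only [hormanderOp, fieldDeriv_add (hf.differentiable two_ne_zero)
    (hg.differentiable two_ne_zero), fieldDeriv_add (differentiable_fieldDeriv (hV _) hf)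
    (differentiable_fieldDeriv (hV _) hg), smul_add, Finset.sum_add_distrib]
  ring

theorem hormanderOp_const_smul (hf : ContDiff ℝ 2 f) (c : ℝ) :
    hormanderOp V b (c • f) = c • hormanderOp V b f := by
  simp only [hormanderOp, fieldDeriv_const_smul (hf.differentiable two_ne_zero),
    fieldDeriv_const_smul (differentiable_fieldDeriv (hV _) hf), smul_comm _ c, smul_add,
    Finset.smul_sum]

theorem hormanderOp_mul (hf : ContDiff ℝ 2 f) (hg : ContDiff ℝ 2 g) :
    hormanderOp V b (f * g)
      = f * hormanderOp V b g + g * hormanderOp V b f + (2 : ℝ) • carreDuChamp V f g := by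
  have hf' := hf.differentiable two_ne_zero
  have hg' := hg.differentiable two_ne_zero
  have hdf := fun i => differentiable_fieldDeriv (hV i) hf
  have hdg := fun i => differentiable_fieldDeriv (hV i) hg
  ext w
  simp only [hormanderOp_apply, carreDuChamp_apply, fieldDeriv_mul hf' hg',
    fieldDeriv_add (hf'.mul (hdg _)) (hg'.mul (hdf _)), fieldDeriv_mul hf' (hdg _),
    fieldDeriv_mul hg' (hdf _), Pi.add_apply, Pi.mul_apply, Pi.smul_apply, smul_eq_mul,
    Finset.mul_sum, mul_add, ← Finset.sum_add_distrib]
  exact Finset.sum_congr rfl fun i _ => by ring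

theorem hormanderOp_comp_scalar {φ φ' φ'' : ℝ → ℝ} (hφ : ∀ t, HasDerivAt φ (φ' t) t)
    (hφ' : ∀ t, HasDerivAt φ' (φ'' t) t) (hf : ContDiff ℝ 2 f) :
    hormanderOp V b (φ ∘ f)
      = (φ' ∘ f) * hormanderOp V b f + (φ'' ∘ f) * carreDuChamp V f f := by
  have hf' := hf.differentiable two_ne_zero
  have hφf : Differentiable ℝ (φ' ∘ f) :=
    Differentiable.comp (fun t => (hφ' t).differentiableAt) hf'
  ext w
  simp only [hormanderOp_apply, carreDuChamp_apply, fieldDeriv_comp_scalar hφ hf',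
    fieldDeriv_mul hφf (differentiable_fieldDeriv (hV _) hf), fieldDeriv_comp_scalar hφ' hf',
    Pi.add_apply, Pi.mul_apply, Finset.mul_sum, mul_add, ← Finset.sum_add_distrib]
  exact Finset.sum_congr rfl fun i _ => by ring

theorem continuous_hormanderOp (hf : ContDiff ℝ 2 f) : Continuous (hormanderOp V b f) := by
  have hdf := fun i => contDiff_fieldDeriv (hV i) hf one_add_one_eq_two.le
  have hddf := fun i => contDiff_fieldDeriv ((hV i).of_le zero_le_one) (hdf i) (zero_add 1).le
  rw [funext (hormanderOp_apply f)]
  exact (continuous_finsetSum _ fun i _ => (hddf i).continuous).add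
    (continuous_finsetSum _ fun i _ => (hdf i).continuous.const_mul _)

theorem hormanderOp_exp (hu : ContDiff ℝ 2 u) :
    hormanderOp V b (exp ∘ u) = (exp ∘ u) * (hormanderOp V b u + carreDuChamp V u u) := by
  rw [hormanderOp_comp_scalar hV hasDerivAt_exp hasDerivAt_exp hu, mul_add]

theorem driftOp_add (hf : ContDiff ℝ 2 f) (hg : ContDiff ℝ 2 g) :
    driftOp V b u (f + g) = driftOp V b u f + driftOp V b u g := by
  rw [driftOp, hormanderOp_add hV hf hg, carreDuChamp_add_right
    (hf.differentiable two_ne_zero) (hg.differentiable two_ne_zero), driftOp, driftOp, smul_add]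
  ring

theorem driftOp_const_smul (hf : ContDiff ℝ 2 f) (c : ℝ) :
    driftOp V b u (c • f) = c • driftOp V b u f := by
  rw [driftOp, hormanderOp_const_smul hV hf,
    carreDuChamp_const_smul_right (hf.differentiable two_ne_zero), driftOp, smul_add, smul_comm c]

theorem driftOp_mul (hf : ContDiff ℝ 2 f) (hg : ContDiff ℝ 2 g) :
    driftOp V b u (f * g)
      = f * driftOp V b u g + g * driftOp V b u f + (2 : ℝ) • carreDuChamp V f g := by
  ext w
  simp only [driftOp, hormanderOp_mul hV hf hg, carreDuChamp_mul_right
    (hf.differentiable two_ne_zero) (hg.differentiable two_ne_zero), Pi.add_apply, Pi.mul_apply,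
    Pi.smul_apply, smul_eq_mul]
  ring

theorem driftOp_comp_scalar {φ φ' φ'' : ℝ → ℝ} (hφ : ∀ t, HasDerivAt φ (φ' t) t)
    (hφ' : ∀ t, HasDerivAt φ' (φ'' t) t) (hf : ContDiff ℝ 2 f) :
    driftOp V b u (φ ∘ f) = (φ' ∘ f) * driftOp V b u f + (φ'' ∘ f) * carreDuChamp V f f := by
  rw [driftOp, hormanderOp_comp_scalar hV hφ hφ' hf,
    carreDuChamp_comp_scalar_right hφ (hf.differentiable two_ne_zero), driftOp, mul_add,
    mul_smul_comm]
  ring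

theorem driftOp_nonpos_of_isLocalMax (hf : ContDiff ℝ 2 f) (hmax : IsLocalMax f w) :
    driftOp V b u f w ≤ 0 := by
  simp only [driftOp_apply, hormanderOp_apply, carreDuChamp_apply,
    fieldDeriv_eq_zero_of_isLocalMax hmax, mul_zero, Finset.sum_const_zero, add_zero]
  exact Finset.sum_nonpos fun i _ =>
    fieldDeriv_fieldDeriv_nonpos_of_isLocalMax hmax hf ((hV i).differentiable one_ne_zero)

theorem driftOp_eq_zero_of_mul_exp (hu : ContDiff ℝ 2 u) (hg : ContDiff ℝ 2 g)
    (hexp : hormanderOp V b (exp ∘ u) = μ • (exp ∘ u))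
    (hmul : hormanderOp V b (g * (exp ∘ u)) = μ • (g * (exp ∘ u))) :
    driftOp V b u g = 0 := by
  rw [mul_comm, hormanderOp_mul hV (contDiff_exp.comp hu) hg, hexp,
    carreDuChamp_comp_scalar_left hasDerivAt_exp (hu.differentiable two_ne_zero)] at hmul
  ext w
  have hw := congrFun hmul w
  simp only [Pi.add_apply, Pi.mul_apply, Pi.smul_apply, smul_eq_mul, Function.comp_apply] at hw
  refine (mul_eq_zero.1 ?_).resolve_left (exp_pos (u w)).ne'
  rw [driftOp_apply]
  linarith

variable (V b) in
/-- The `C²` solutions of `L f = μ f` for `L = hormanderOp V b`. -/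
noncomputable def eigenfunctions (μ : ℝ) : Submodule ℝ (E → ℝ) where
  carrier := {f | ContDiff ℝ 2 f ∧ hormanderOp V b f = μ • f}
  add_mem' hf hg := ⟨hf.1.add hg.1, by rw [hormanderOp_add hV hf.1 hg.1, hf.2, hg.2, smul_add]⟩
  zero_mem' :=
    ⟨contDiff_const, by simpa using hormanderOp_const_smul hV (contDiff_const (c := 0)) 0⟩
  smul_mem' c f hf :=
    ⟨hf.1.const_smul c, by rw [hormanderOp_const_smul hV hf.1, hf.2, smul_comm]⟩

end HormanderOperators

section BochnerFormula

variable {E ι : Type*} [NormedAddCommGroup E] [NormedSpace ℝ E] [Fintype ι]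
  {V : ι → E → E} {b : ι → ℝ} {c : ι → ι → ι → ℝ} {u f : E → ℝ} {μ : ℝ}

theorem fieldDeriv_comm_of_structureConstants (hV : ∀ i, ContDiff ℝ 1 (V i))
    (hc : ∀ i j w, VectorField.lieBracket ℝ (V i) (V j) w = ∑ k, c i j k • V k w)
    (hf : ContDiff ℝ 2 f) (i j : ι) :
    fieldDeriv (V i) (fieldDeriv (V j) f)
      = fieldDeriv (V j) (fieldDeriv (V i) f) + ∑ k, c i j k • fieldDeriv (V k) f := by
  rw [fieldDeriv_comm hf ((hV i).differentiable one_ne_zero) ((hV j).differentiable one_ne_zero)]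
  ext w
  simp [fieldDeriv, hc]

theorem fieldDeriv_hormanderOp (hV : ∀ i, ContDiff ℝ 2 (V i))
    (hc : ∀ i j w, VectorField.lieBracket ℝ (V i) (V j) w = ∑ k, c i j k • V k w)
    (hf : ContDiff ℝ 3 f) (i : ι) (w : E) :
    fieldDeriv (V i) (hormanderOp V b f) w = hormanderOp V b (fieldDeriv (V i) f) w
      + ∑ j, ∑ k, c i j k * (fieldDeriv (V j) (fieldDeriv (V k) f) w
        + fieldDeriv (V k) (fieldDeriv (V j) f) w + b j * fieldDeriv (V k) f w) := by
  have hV₁ := fun i => (hV i).of_le one_le_two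
  have hf₂ : ContDiff ℝ 2 f := hf.of_le (by norm_num)
  have hdf := fun i => contDiff_fieldDeriv (hV i) hf (by norm_num)
  have hdf' := fun i => (hdf i).differentiable two_ne_zero
  have hddf := fun i j => differentiable_fieldDeriv (hV₁ i) (hdf j)
  have hcomm := fun j => fieldDeriv_comm_of_structureConstants hV₁ hc hf₂ i j
  have hcomm' := fun j => fieldDeriv_comm_of_structureConstants hV₁ hc (hdf j) i j
  have hsum : ∀ j, Differentiable ℝ (∑ k, c i j k • fieldDeriv (V k) f) :=
    fun j => Differentiable.sum fun k _ => (hdf' k).const_smul _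
  have hsecond : ∀ j, fieldDeriv (V i) (fieldDeriv (V j) (fieldDeriv (V j) f)) w
      = fieldDeriv (V j) (fieldDeriv (V j) (fieldDeriv (V i) f)) w
        + ∑ k, c i j k * (fieldDeriv (V j) (fieldDeriv (V k) f) w
          + fieldDeriv (V k) (fieldDeriv (V j) f) w) := fun j => by
    rw [hcomm', hcomm, fieldDeriv_add (hddf j i) (hsum j),
      fieldDeriv_sum _ fun k => (hdf' k).const_smul _]
    simp [fieldDeriv_const_smul (hdf' _), mul_add, Finset.sum_add_distrib, add_assoc]
  rw [hormanderOp, fieldDeriv_add (Differentiable.sum fun j _ => hddf j j)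
      (Differentiable.sum fun j _ => (hdf' j).const_smul _), fieldDeriv_sum _ fun j => hddf j j,
    fieldDeriv_sum _ fun j => (hdf' j).const_smul _]
  simp only [fieldDeriv_const_smul (hdf' _), Pi.add_apply, Finset.sum_apply, hsecond,
    Pi.smul_apply, smul_eq_mul, hcomm, hormanderOp_apply, mul_add, Finset.sum_add_distrib,
    Finset.mul_sum, mul_left_comm]
  ring

theorem fieldDeriv_carreDuChamp_self (hV : ∀ i, ContDiff ℝ 1 (V i))
    (hc : ∀ i j w, VectorField.lieBracket ℝ (V i) (V j) w = ∑ k, c i j k • V k w)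
    (hf : ContDiff ℝ 2 f) (i : ι) (w : E) :
    fieldDeriv (V i) (carreDuChamp V f f) w = 2 * carreDuChamp V f (fieldDeriv (V i) f) w
      + ∑ j, ∑ k, c i j k * (2 * (fieldDeriv (V j) f w * fieldDeriv (V k) f w)) := by
  have hdf := fun i => differentiable_fieldDeriv (hV i) hf
  rw [carreDuChamp, fieldDeriv_sum _ fun j => (hdf j).mul (hdf j)]
  simp only [fieldDeriv_mul (hdf _) (hdf _), Finset.sum_apply, Pi.add_apply, Pi.mul_apply,
    fieldDeriv_comm_of_structureConstants hV hc hf i, carreDuChamp_apply, Pi.smul_apply,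
    smul_eq_mul, mul_add, Finset.sum_add_distrib, Finset.mul_sum]
  simp only [two_mul, Finset.sum_add_distrib, mul_add, mul_left_comm]
  ring

theorem driftOp_carreDuChamp_self (hV : ∀ i, ContDiff ℝ 2 (V i)) (hf : ContDiff ℝ 3 f) (w : E) :
    driftOp V b u (carreDuChamp V f f) w
      = 2 * ∑ i, (carreDuChamp V (fieldDeriv (V i) f) (fieldDeriv (V i) f) w
        + fieldDeriv (V i) f w * driftOp V b u (fieldDeriv (V i) f) w) := by
  classical
  have hV₁ := fun i => (hV i).of_le one_le_two
  have hdf := fun i => contDiff_fieldDeriv (hV i) hf (by norm_num)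
  have hsq : ∀ i, ContDiff ℝ 2 (fieldDeriv (V i) f * fieldDeriv (V i) f) :=
    fun i => (hdf i).mul (hdf i)
  have hsum : ∀ s : Finset ι, driftOp V b u (∑ i ∈ s, fieldDeriv (V i) f * fieldDeriv (V i) f)
      = ∑ i ∈ s, driftOp V b u (fieldDeriv (V i) f * fieldDeriv (V i) f) := fun s => by
    induction s using Finset.induction_on with
    | empty => simpa using driftOp_const_smul hV₁ (contDiff_const (c := 0)) 0
    | insert i s hi ih =>
      rw [Finset.sum_insert hi, Finset.sum_insert hi, driftOp_add hV₁ (hsq i) ?_, ih]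
      simpa only [← Finset.sum_fn] using ContDiff.sum fun j (_ : j ∈ s) => hsq j
  rw [carreDuChamp, hsum, Finset.sum_apply, Finset.mul_sum]
  refine Finset.sum_congr rfl fun i _ => ?_
  rw [driftOp_mul hV₁ (hdf i) (hdf i)]
  simp only [Pi.add_apply, Pi.mul_apply, Pi.smul_apply, smul_eq_mul]
  ring

theorem driftOp_fieldDeriv_of_log_eigenfunction (hV : ∀ i, ContDiff ℝ 2 (V i))
    (hc : ∀ i j w, VectorField.lieBracket ℝ (V i) (V j) w = ∑ k, c i j k • V k w)
    (hu : ContDiff ℝ 3 u) (hLu : ∀ w, hormanderOp V b u w + carreDuChamp V u u w = μ) (i : ι)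
    (w : E) :
    driftOp V b u (fieldDeriv (V i) u) w
      = -∑ j, ∑ k, c i j k * (fieldDeriv (V j) (fieldDeriv (V k) u) w
        + fieldDeriv (V k) (fieldDeriv (V j) u) w + b j * fieldDeriv (V k) u w
        + 2 * (fieldDeriv (V j) u w * fieldDeriv (V k) u w)) := by
  have hV₁ := fun i => (hV i).of_le one_le_two
  have hu₂ : ContDiff ℝ 2 u := hu.of_le (by norm_num)
  have hΓ : Differentiable ℝ (carreDuChamp V u u) :=
    (contDiff_carreDuChamp hV₁ hu₂ hu₂ one_add_one_eq_two.le).differentiable one_ne_zero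
  have hL : hormanderOp V b u = (fun _ => μ) + (-1 : ℝ) • carreDuChamp V u u := by
    ext w
    simp only [Pi.add_apply, Pi.smul_apply, smul_eq_mul]
    linarith [hLu w]
  have key := fieldDeriv_hormanderOp (b := b) hV hc hu i w
  rw [hL, fieldDeriv_add (differentiable_const μ) (hΓ.const_smul _), fieldDeriv_const,
    fieldDeriv_const_smul hΓ, zero_add, Pi.smul_apply, smul_eq_mul,
    fieldDeriv_carreDuChamp_self hV₁ hc hu₂] at key
  have hsplit : ∀ S T : ι → ι → ℝ, ∑ j, ∑ k, c i j k * (S j k + T j k)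
      = ∑ j, ∑ k, c i j k * S j k + ∑ j, ∑ k, c i j k * T j k := fun S T => by
    simp only [mul_add, Finset.sum_add_distrib]
  rw [hsplit, driftOp_apply]
  linarith

/-- The cubic terms of the formula cancel by antisymmetry of the structure constants. -/
theorem bochner_formula (hV : ∀ i, ContDiff ℝ 2 (V i))
    (hc : ∀ i j w, VectorField.lieBracket ℝ (V i) (V j) w = ∑ k, c i j k • V k w)
    (hcanti : ∀ i j k, c i j k = -c j i k)
    (hu : ContDiff ℝ 3 u) (hLu : ∀ w, hormanderOp V b u w + carreDuChamp V u u w = μ) (w : E) :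
    driftOp V b u (carreDuChamp V u u) w
      = 2 * ∑ i, ∑ j, fieldDeriv (V i) (fieldDeriv (V j) u) w ^ 2
        - 2 * ∑ i, fieldDeriv (V i) u w * ∑ j, ∑ k, c i j k *
          (fieldDeriv (V j) (fieldDeriv (V k) u) w + fieldDeriv (V k) (fieldDeriv (V j) u) w
            + b j * fieldDeriv (V k) u w) := by
  set X := fun i => fieldDeriv (V i) u w
  have hcubic : ∑ i, X i * ∑ j, ∑ k, c i j k * (2 * (X j * X k)) = 0 := by
    have hswap : ∑ i, X i * ∑ j, ∑ k, c i j k * (2 * (X j * X k))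
        = -∑ i, X i * ∑ j, ∑ k, c i j k * (2 * (X j * X k)) := by
      simp only [Finset.mul_sum, ← Finset.sum_neg_distrib]
      rw [Finset.sum_comm]
      refine Finset.sum_congr rfl fun i _ => Finset.sum_congr rfl fun j _ =>
        Finset.sum_congr rfl fun k _ => ?_
      rw [hcanti]
      ring
    linarith
  have hsplit : ∀ S T : ι → ι → ι → ℝ, ∑ i, X i * ∑ j, ∑ k, c i j k * (S i j k + T i j k)
      = ∑ i, X i * ∑ j, ∑ k, c i j k * S i j k + ∑ i, X i * ∑ j, ∑ k, c i j k * T i j k :=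
    fun S T => by simp only [mul_add, Finset.sum_add_distrib]
  rw [driftOp_carreDuChamp_self hV hu, Finset.sum_add_distrib]
  simp only [driftOp_fieldDeriv_of_log_eigenfunction hV hc hu hLu, carreDuChamp_self_apply,
    mul_neg, Finset.sum_neg_distrib]
  rw [Finset.sum_comm, hsplit _ fun _ j k => 2 * (X j * X k), hcubic]
  ring

end BochnerFormula

section GradientEstimate

variable {E ι : Type*} [NormedAddCommGroup E] [NormedSpace ℝ E] [Fintype ι]
  {V : ι → E → E} {c : ι → ι → ι → ℝ}

theorem two_mul_sum_structureConstants_le (c : ι → ι → ι → ℝ) (H : ι → ι → ℝ) (b X : ι → ℝ) :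
    2 * ∑ i, X i * ∑ j, ∑ k, c i j k * (H j k + H k j + b j * X k)
      ≤ ∑ i, ∑ j, H i j ^ 2
        + (5 * (∑ j, ∑ k, ∑ i, c i j k ^ 2) + ∑ j, b j ^ 2) * ∑ i, X i ^ 2 := by
  set K : ι → ι → ℝ := fun j k => ∑ i, c i j k * X i
  have hK : ∑ j, ∑ k, K j k ^ 2 ≤ (∑ j, ∑ k, ∑ i, c i j k ^ 2) * ∑ i, X i ^ 2 := by
    rw [Finset.sum_mul]
    refine Finset.sum_le_sum fun j _ => ?_
    rw [Finset.sum_mul]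
    exact Finset.sum_le_sum fun k _ => Finset.sum_mul_sq_le_sq_mul_sq ..
  have hsum : ∑ i, X i * ∑ j, ∑ k, c i j k * (H j k + H k j + b j * X k)
      = ∑ j, ∑ k, K j k * (H j k + H k j + b j * X k) := by
    simp only [K, Finset.mul_sum, Finset.sum_mul]
    rw [Finset.sum_comm]
    refine Finset.sum_congr rfl fun j _ => ?_
    rw [Finset.sum_comm]
    exact Finset.sum_congr rfl fun k _ => Finset.sum_congr rfl fun i _ => by ring
  have hyoung : 2 * ∑ j, ∑ k, K j k * (H j k + H k j + b j * X k)
      ≤ ∑ j, ∑ k, (H j k ^ 2 / 2 + H k j ^ 2 / 2 + 5 * K j k ^ 2 + b j ^ 2 * X k ^ 2) := by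
    simp only [Finset.mul_sum]
    exact Finset.sum_le_sum fun j _ => Finset.sum_le_sum fun k _ => by
      nlinarith [sq_nonneg (H j k - 2 * K j k), sq_nonneg (H k j - 2 * K j k),
        sq_nonneg (b j * X k - K j k)]
  have hexpand : ∑ j, ∑ k, (H j k ^ 2 / 2 + H k j ^ 2 / 2 + 5 * K j k ^ 2 + b j ^ 2 * X k ^ 2)
      = ∑ j, ∑ k, H j k ^ 2 + 5 * ∑ j, ∑ k, K j k ^ 2 + (∑ j, b j ^ 2) * ∑ k, X k ^ 2 := by
    have htranspose : ∑ j, ∑ k, H k j ^ 2 = ∑ j, ∑ k, H j k ^ 2 := Finset.sum_comm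
    simp only [Finset.sum_add_distrib, ← Finset.sum_div, htranspose, Finset.sum_mul_sum,
      ← Finset.mul_sum]
    ring
  rw [hsum]
  linarith

theorem sq_sum_diag_le (H : ι → ι → ℝ) :
    (∑ i, H i i) ^ 2 ≤ Fintype.card ι * ∑ i, ∑ j, H i j ^ 2 :=
  calc (∑ i, H i i) ^ 2 ≤ Fintype.card ι * ∑ i, H i i ^ 2 := sq_sum_le_card_mul_sum_sq
    _ ≤ Fintype.card ι * ∑ i, ∑ j, H i j ^ 2 := by
      gcongr with i
      exact Finset.single_le_sum (f := fun j => H i j ^ 2) (fun _ _ => sq_nonneg _)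
        (Finset.mem_univ i)

theorem mul_sq_sub_le_of_sq_le {n β μ G S : ℝ} (M : ℝ) (hn : 0 < n)
    (hG : G ^ 2 ≤ 3 * (μ ^ 2 + n * S + β * G)) :
    1 / (6 * n) * G ^ 2 - (μ ^ 2 / n + 3 * n / 2 * (β / n + M) ^ 2) ≤ S - M * G := by
  have hlower : G ^ 2 / (3 * n) - μ ^ 2 / n - β / n * G ≤ S := by
    field_simp
    linarith
  have hsquare : 0 ≤ 1 / (6 * n) * (G - 3 * n * (β / n + M)) ^ 2 := by positivity
  calc 1 / (6 * n) * G ^ 2 - (μ ^ 2 / n + 3 * n / 2 * (β / n + M) ^ 2)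
      = G ^ 2 / (3 * n) - μ ^ 2 / n - β / n * G - M * G
        - 1 / (6 * n) * (G - 3 * n * (β / n + M)) ^ 2 := by
        field_simp
        ring
    _ ≤ S - M * G := by linarith

theorem exists_riccati_bound (hV : ∀ i, ContDiff ℝ 2 (V i))
    (hc : ∀ i j w, VectorField.lieBracket ℝ (V i) (V j) w = ∑ k, c i j k • V k w)
    (hcanti : ∀ i j k, c i j k = -c j i k) (b : ι → ℝ) (μ : ℝ) :
    ∃ δ > 0, ∃ C, ∀ u : E → ℝ, ContDiff ℝ 3 u →
      (∀ w, hormanderOp V b u w + carreDuChamp V u u w = μ) → ∀ w,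
      δ * carreDuChamp V u u w ^ 2 - C ≤ driftOp V b u (carreDuChamp V u u) w := by
  set n : ℝ := Fintype.card ι + 1
  have hn : 0 < n := by positivity
  set β := ∑ i, b i ^ 2
  set M := 5 * (∑ j, ∑ k, ∑ i, c i j k ^ 2) + β
  refine ⟨1 / (6 * n), by positivity, μ ^ 2 / n + 3 * n / 2 * (β / n + M) ^ 2, fun u hu hLu w => ?_⟩
  set H := fun i j => fieldDeriv (V i) (fieldDeriv (V j) u) w
  set X := fun i => fieldDeriv (V i) u w
  have hcauchy : (∑ i, b i * X i) ^ 2 ≤ β * ∑ i, X i ^ 2 := Finset.sum_mul_sq_le_sq_mul_sq ..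
  have htrace := sq_sum_diag_le H
  have hcomm := two_mul_sum_structureConstants_le c H b X
  have heq := hLu w
  rw [bochner_formula hV hc hcanti hu hLu]
  rw [hormanderOp_apply] at heq
  rw [carreDuChamp_self_apply] at heq ⊢
  set G := ∑ i, X i ^ 2
  set S := ∑ i, ∑ j, H i j ^ 2
  have hS : 0 ≤ S := by positivity
  have hquad : G ^ 2 ≤ 3 * (μ ^ 2 + n * S + β * G) := by
    have hG : G = μ - ∑ i, H i i - ∑ i, b i * X i := by linarith
    have := sq_nonneg (μ + ∑ i, H i i)
    have := sq_nonneg (μ + ∑ i, b i * X i)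
    have := sq_nonneg (∑ i, H i i - ∑ i, b i * X i)
    calc G ^ 2 ≤ 3 * (μ ^ 2 + (∑ i, H i i) ^ 2 + (∑ i, b i * X i) ^ 2) := by rw [hG]; linarith
      _ ≤ 3 * (μ ^ 2 + n * S + β * G) := by linarith [add_one_mul (Fintype.card ι : ℝ) S]
  have hlower := mul_sq_sub_le_of_sq_le M hn hquad
  linarith

theorem exists_cutoff [FiniteDimensional ℝ E] (hV : ∀ i, ContDiff ℝ 1 (V i)) (b : ι → ℝ)
    (x₀ : E) :
    ∃ χ : E → ℝ, ContDiff ℝ 2 χ ∧ HasCompactSupport χ ∧ χ x₀ = 1 ∧ (∀ w, χ w ∈ Set.Icc 0 1) ∧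
      ∃ M ≥ 0, ∀ w ∈ Function.support χ,
        -M ≤ hormanderOp V b χ w ∧ carreDuChamp V χ χ w ≤ M * χ w := by
  have : ProperSpace E := FiniteDimensional.proper ℝ E
  let η : ContDiffBump x₀ := ⟨1, 2, one_pos, one_lt_two⟩
  have hη : ContDiff ℝ 2 η := η.contDiff
  have hχ : ContDiff ℝ 2 (η * η : E → ℝ) := hη.mul hη
  obtain ⟨M, hM⟩ := (isCompact_closedBall x₀ 2).exists_bound_of_continuousOn
    (continuous_hormanderOp (b := b) hV hχ).continuousOn
  obtain ⟨N, hN⟩ := (isCompact_closedBall x₀ 2).exists_bound_of_continuousOn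
    (contDiff_carreDuChamp hV hη hη one_add_one_eq_two.le).continuous.continuousOn
  refine ⟨η * η, hχ, η.hasCompactSupport.mul_left, ?_, fun w => ?_, max |M| (4 * N),
    le_max_of_le_left (abs_nonneg M), fun w hw => ?_⟩
  · simp [η.one_of_mem_closedBall (Metric.mem_closedBall_self η.rIn_pos.le)]
  · exact ⟨mul_self_nonneg _, mul_le_one₀ η.le_one η.nonneg η.le_one⟩
  · have hw' : w ∈ Metric.closedBall x₀ 2 := by
      refine Metric.ball_subset_closedBall ?_
      rw [← η.support_eq]
      exact Function.support_mul_subset_left _ _ hw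
    have hΓ : carreDuChamp V (η * η) (η * η) w = 4 * (η w * η w) * carreDuChamp V η η w := by
      simp only [carreDuChamp_apply, fieldDeriv_mul (hη.differentiable two_ne_zero)
        (hη.differentiable two_ne_zero), Pi.add_apply, Pi.mul_apply, Finset.mul_sum]
      exact Finset.sum_congr rfl fun i _ => by ring
    refine ⟨?_, ?_⟩
    · linarith [(abs_le.1 (hM w hw')).1, le_abs_self M, le_max_left |M| (4 * N)]
    · rw [hΓ, Pi.mul_apply]
      nlinarith [mul_self_nonneg (η w), (abs_le.1 (hN w hw')).2, le_max_right |M| (4 * N)]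

theorem mul_driftOp_cutoff_le (hV : ∀ i, ContDiff ℝ 1 (V i)) {b : ι → ℝ} {u χ G : E → ℝ} {w : E}
    (hχ : ContDiff ℝ 2 χ) (hG : ContDiff ℝ 2 G) (hχ₀ : 0 ≤ χ w)
    (hmax : IsLocalMax (χ * G) w) :
    χ w ^ 2 * driftOp V b u G w + χ w * G w * driftOp V b u χ w
      ≤ 2 * G w * carreDuChamp V χ χ w := by
  have hΘ := driftOp_nonpos_of_isLocalMax (b := b) (u := u) hV (hχ.mul hG) hmax
  have hcrit : ∀ i, χ w * fieldDeriv (V i) G w + G w * fieldDeriv (V i) χ w = 0 := fun i => by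
    have := fieldDeriv_eq_zero_of_isLocalMax (V := V i) hmax
    rwa [fieldDeriv_mul (hχ.differentiable two_ne_zero) (hG.differentiable two_ne_zero)] at this
  have hcross : χ w * carreDuChamp V χ G w = -(G w * carreDuChamp V χ χ w) := by
    simp only [carreDuChamp_apply, Finset.mul_sum, ← Finset.sum_neg_distrib]
    exact Finset.sum_congr rfl fun i _ => by linear_combination fieldDeriv (V i) χ w * hcrit i
  rw [show (fun x => χ x * G x) = χ * G from rfl, driftOp_mul hV hχ hG] at hΘ
  simp only [Pi.add_apply, Pi.mul_apply, Pi.smul_apply, smul_eq_mul] at hΘ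
  linarith [mul_nonpos_of_nonneg_of_nonpos hχ₀ hΘ]

theorem neg_sub_le_mul_of_sq_le {δ K y : ℝ} (hδ : 0 < δ) (x : ℝ) (hy : y ^ 2 ≤ K) :
    -(δ / 2 * x ^ 2) - 2 / δ * K ≤ x * (2 * y) := by
  have hsquare : 0 ≤ (δ * x + 2 * y) ^ 2 / (2 * δ) := by positivity
  have hexpand : (δ * x + 2 * y) ^ 2 / (2 * δ)
      = δ / 2 * x ^ 2 + x * (2 * y) + 2 / δ * y ^ 2 := by
    field_simp
    ring
  linarith [mul_le_mul_of_nonneg_left hy (show 0 ≤ 2 / δ by positivity)]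

theorem le_one_add_div_of_sq_le {δ A B x : ℝ} (hδ : 0 < δ) (hA : 0 ≤ A) (hB : 0 ≤ B)
    (hx : δ * x ^ 2 ≤ A + B * x) : x ≤ 1 + (A + B) / δ := by
  by_contra! hlt
  have hx₁ : 1 ≤ x := (le_add_of_nonneg_right (by positivity)).trans hlt.le
  have hlt' : A + B < δ * x :=
    (div_lt_iff₀' hδ).1 (by linarith)
  nlinarith [mul_le_mul_of_nonneg_left hx₁ hA]

theorem exists_carreDuChamp_log_le [FiniteDimensional ℝ E] (hV : ∀ i, ContDiff ℝ 2 (V i))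
    (hc : ∀ i j w, VectorField.lieBracket ℝ (V i) (V j) w = ∑ k, c i j k • V k w)
    (hcanti : ∀ i j k, c i j k = -c j i k) (b : ι → ℝ) (μ : ℝ) (x₀ : E) :
    ∃ C, ∀ u : E → ℝ, ContDiff ℝ 3 u →
      (∀ w, hormanderOp V b u w + carreDuChamp V u u w = μ) → carreDuChamp V u u x₀ ≤ C := by
  have hV₁ := fun i => (hV i).of_le one_le_two
  obtain ⟨δ, hδ, C, hC⟩ := exists_riccati_bound hV hc hcanti b μ
  obtain ⟨χ, hχ, hχsupp, hχ₀, hχmem, M, hM₀, hM⟩ := exists_cutoff hV₁ b x₀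
  set A := |C|
  set B := 3 * M + 2 / δ * M
  refine ⟨1 + (A + B) / (δ / 2), fun u hu hLu => ?_⟩
  set G := carreDuChamp V u u
  have hG : ContDiff ℝ 2 G := contDiff_carreDuChamp hV hu hu (by norm_num)
  obtain ⟨w, hw⟩ := (hχ.mul hG).continuous.exists_forall_ge_of_hasCompactSupport hχsupp.mul_right
  have hGw : 0 ≤ G w := carreDuChamp_self_nonneg u w
  obtain ⟨hχw, hχw'⟩ := hχmem w
  have hle : G x₀ ≤ χ w * G w := by simpa [hχ₀] using hw x₀
  refine hle.trans ?_
  by_cases hsupp : χ w = 0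
  · rw [hsupp, zero_mul]
    positivity
  obtain ⟨hLχ, hΓχ⟩ := hM w hsupp
  have hmax := mul_driftOp_cutoff_le (b := b) (u := u) hV₁ hχ hG hχw (.of_forall hw)
  have hcs := carreDuChamp_sq_le (V := V) u χ w
  have hΦ : 0 ≤ χ w * G w := mul_nonneg hχw hGw
  have hriccati : δ * (χ w * G w) ^ 2 - A ≤ χ w ^ 2 * driftOp V b u G w := by
    have hχsq : χ w ^ 2 ≤ 1 := pow_le_one₀ hχw hχw'
    nlinarith [mul_le_mul_of_nonneg_left (hC u hu hLu w) (sq_nonneg (χ w)), le_abs_self C,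
      mul_le_mul_of_nonneg_left (le_abs_self C) (sq_nonneg (χ w)),
      mul_le_mul_of_nonneg_right hχsq (abs_nonneg C)]
  have hyoung := neg_sub_le_mul_of_sq_le hδ (χ w * G w) (hcs.trans
    (show G w * carreDuChamp V χ χ w ≤ M * (χ w * G w) by
      linarith [mul_le_mul_of_nonneg_left hΓχ hGw]))
  refine le_one_add_div_of_sq_le (by positivity) (abs_nonneg C) (by positivity) ?_
  rw [driftOp_apply u χ, mul_add] at hmax
  linarith [mul_le_mul_of_nonneg_left hLχ hΦ, mul_le_mul_of_nonneg_left hΓχ hGw]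

theorem exists_abs_fieldDeriv_le [FiniteDimensional ℝ E] (hV : ∀ i, ContDiff ℝ 2 (V i))
    (hc : ∀ i j w, VectorField.lieBracket ℝ (V i) (V j) w = ∑ k, c i j k • V k w)
    (hcanti : ∀ i j k, c i j k = -c j i k) (b : ι → ℝ) (μ : ℝ) (x₀ : E) :
    ∃ C, ∀ u : E → ℝ, ContDiff ℝ 3 u → hormanderOp V b (exp ∘ u) = μ • (exp ∘ u) →
      ∀ i, |fieldDeriv (V i) u x₀| ≤ C := by
  obtain ⟨C, hC⟩ := exists_carreDuChamp_log_le hV hc hcanti b μ x₀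
  refine ⟨√C, fun u hu hLu i => abs_le_sqrt (le_trans ?_ (hC u hu fun w => ?_))⟩
  · rw [carreDuChamp_self_apply]
    exact Finset.single_le_sum (f := fun i => fieldDeriv (V i) u x₀ ^ 2)
      (fun _ _ => sq_nonneg _) (Finset.mem_univ i)
  · have hw := congrFun hLu w
    rw [hormanderOp_exp (fun i => (hV i).of_le one_le_two) (hu.of_le (by norm_num))] at hw
    exact mul_left_cancel₀ (exp_pos (u w)).ne' (hw.trans (mul_comm μ _))

end GradientEstimate

section MaximumPrinciple

variable {E ι : Type*} [NormedAddCommGroup E] [NormedSpace ℝ E] [Fintype ι]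
  {V : ι → E → E} {b : ι → ℝ} {u : E → ℝ}

theorem exists_forall_le_of_add_exhaustion_le {X : Type*} [TopologicalSpace X] {S : Set X}
    {F ψ : X → ℝ} {N ε : ℝ} (hF : Continuous F) (hcpt : ∀ R, IsCompact (S ∩ {w | ψ w ≤ R}))
    (hε : 0 < ε) (hle : ∀ w ∈ S, F w + ε * ψ w ≤ N) {w₀ : X} (hw₀ : w₀ ∈ S) :
    ∃ w₁ ∈ S, ∀ w ∈ S, F w ≤ F w₁ := by
  set R := max (ψ w₀) ((N - F w₀) / ε)
  have hw₀' : w₀ ∈ S ∩ {w | ψ w ≤ R} :=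
    ⟨hw₀, le_max_left (ψ w₀) _⟩
  obtain ⟨w₁, hw₁, hmax⟩ := (hcpt R).exists_isMaxOn ⟨w₀, hw₀'⟩ hF.continuousOn
  refine ⟨w₁, hw₁.1, fun w hw => ?_⟩
  by_cases hwR : ψ w ≤ R
  · exact hmax ⟨hw, hwR⟩
  · have hfar : N - F w₀ < ε * ψ w :=
      (div_lt_iff₀' hε).1 ((le_max_right _ _).trans_lt (not_le.1 hwR))
    linarith [hle w hw, isMaxOn_iff.1 hmax w₀ hw₀']

/-- Adding a small multiple of `φ` makes the inequality for `ρ` strict, and subtracting a much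
smaller multiple of the exhaustion `ψ` forces the maximum to be attained. -/
theorem nonpos_of_driftOp_nonneg {S : Set E} {φ ψ ρ : E → ℝ} {B K N : ℝ}
    (hV : ∀ i, ContDiff ℝ 1 (V i)) (hφ : ContDiff ℝ 2 φ) (hψ : ContDiff ℝ 2 ψ)
    (hρ : ContDiff ℝ 2 ρ) (hcpt : ∀ R, IsCompact (S ∩ {w | ψ w ≤ R})) (hψ₀ : ∀ w ∈ S, 0 ≤ ψ w)
    (hψK : ∀ w ∈ S, driftOp V b u ψ w ≤ K) (hφB : ∀ w ∈ S, |φ w| ≤ B)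
    (hφ₁ : ∀ w ∈ S, 1 ≤ driftOp V b u φ w) (hρN : ∀ w ∈ S, ρ w ≤ N)
    (hρ₀ : ∀ w ∈ S, w ∉ interior S → ρ w ≤ 0) (hΘρ : ∀ w ∈ S, 0 ≤ driftOp V b u ρ w)
    {w₀ : E} (hw₀ : w₀ ∈ S) : ρ w₀ ≤ 0 := by
  by_contra! hm
  have hB : 0 ≤ B := (abs_nonneg _).trans (hφB w₀ hw₀)
  obtain ⟨κ, hκ, hκB⟩ : ∃ κ > 0, κ * B < ρ w₀ / 4 :=
    ⟨ρ w₀ / (4 * (B + 1)), by positivity, by field_simp; linarith⟩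
  obtain ⟨ε, hε, hεK, hεψ⟩ : ∃ ε > 0, ε * K < κ ∧ ε * ψ w₀ < ρ w₀ / 4 := by
    have hlim : ∀ x : ℝ, Filter.Tendsto (fun ε => ε * x) (nhdsWithin 0 (Set.Ioi 0)) (nhds 0) :=
      fun x => (Continuous.tendsto' (by fun_prop) 0 0 (by simp)).mono_left nhdsWithin_le_nhds
    exact (((eventually_mem_nhdsWithin).and <| ((hlim K).eventually_lt_const hκ).and <|
      (hlim (ψ w₀)).eventually_lt_const (by linarith)).exists)
  set F := ρ + κ • φ + (-ε) • ψ
  have hF : ContDiff ℝ 2 F := (hρ.add (hφ.const_smul κ)).add (hψ.const_smul (-ε))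
  have hF_apply : ∀ w, F w = ρ w + κ * φ w - ε * ψ w := fun w => by simp [F, sub_eq_add_neg]
  have hκφ : ∀ w ∈ S, |κ * φ w| ≤ κ * B := fun w hw => by
    rw [abs_mul, abs_of_pos hκ]
    exact mul_le_mul_of_nonneg_left (hφB w hw) hκ.le
  have hFw₀ : ρ w₀ / 2 < F w₀ := by linarith [hF_apply w₀, (abs_le.1 (hκφ w₀ hw₀)).1]
  obtain ⟨w₁, hw₁, hmax⟩ := exists_forall_le_of_add_exhaustion_le (N := N + κ * B)
    hF.continuous hcpt hε (fun w hw => by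
      linarith [hF_apply w, hρN w hw, (abs_le.1 (hκφ w hw)).2]) hw₀
  have hFw₁ := hmax w₀ hw₀
  have hint : w₁ ∈ interior S := by
    by_contra hw₁'
    linarith [hF_apply w₁, hρ₀ w₁ hw₁ hw₁', (abs_le.1 (hκφ w₁ hw₁)).2,
      mul_nonneg hε.le (hψ₀ w₁ hw₁)]
  have hlocal : IsLocalMax F w₁ :=
    Filter.eventually_of_mem (mem_interior_iff_mem_nhds.1 hint) hmax
  have hΘ := driftOp_nonpos_of_isLocalMax (b := b) (u := u) hV hF hlocal
  rw [driftOp_add (f := ρ + κ • φ) (g := -ε • ψ) hV (hρ.add (hφ.const_smul κ))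
      (hψ.const_smul (-ε)), driftOp_add (g := κ • φ) hV hρ (hφ.const_smul κ),
    driftOp_const_smul hV hφ, driftOp_const_smul hV hψ] at hΘ
  simp only [Pi.add_apply, Pi.smul_apply, smul_eq_mul] at hΘ
  linarith [hΘρ w₁ hw₁, mul_le_mul_of_nonneg_left (hφ₁ w₁ hw₁) hκ.le,
    mul_le_mul_of_nonneg_left (hψK w₁ hw₁) hε.le]

end MaximumPrinciple

/-- The left-invariant frame of `Sol(p,q)` for the group law `leftMul`. -/
noncomputable def solFrame (p q : ℝ) : Fin 3 → ℝ × ℝ × ℝ → ℝ × ℝ × ℝ :=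
  ![fun w => exp (p * w.2.2) • (1, 0, 0), fun w => exp (-q * w.2.2) • (0, 1, 0),
    fun _ => (0, 0, 1)]

/-- The coefficients of the drift in the frame `solFrame p q`, normalised so that
`hormanderOp (solFrame p q) (solDrift a)` is `2 * solLap p q a`. -/
def solDrift (a : ℝ) : Fin 3 → ℝ := ![0, 0, 2 * a]

/-- The structure constants of the Lie algebra of `Sol(p,q)` in the frame `solFrame p q`. -/
def solConst (p q : ℝ) : Fin 3 → Fin 3 → Fin 3 → ℝ :=
  ![![![0, 0, 0], ![0, 0, 0], ![-p, 0, 0]], ![![0, 0, 0], ![0, 0, 0], ![0, q, 0]],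
    ![![p, 0, 0], ![0, -q, 0], ![0, 0, 0]]]

/-- Left translation `w ↦ b * w` of `Sol(p,q)`. -/
noncomputable def leftMul (p q : ℝ) (b w : ℝ × ℝ × ℝ) : ℝ × ℝ × ℝ :=
  (exp (p * b.2.2) * w.1 + b.1, exp (-q * b.2.2) * w.2.1 + b.2.1, w.2.2 + b.2.2)

section SolFrame

variable {p q a lam : ℝ} {f : ℝ × ℝ × ℝ → ℝ}

theorem contDiff_solFrame {n : WithTop ℕ∞} (i : Fin 3) : ContDiff ℝ n (solFrame p q i) := by
  fin_cases i
  · exact contDiff_exp.comp (contDiff_const.mul (by fun_prop)) |>.smul contDiff_const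
  · exact contDiff_exp.comp (contDiff_const.mul (by fun_prop)) |>.smul contDiff_const
  · exact contDiff_const

theorem fderiv_exp_height_smul {F : Type*} [NormedAddCommGroup F] [NormedSpace ℝ F]
    (r : ℝ) (v : F) (w u : ℝ × ℝ × ℝ) :
    fderiv ℝ (fun w : ℝ × ℝ × ℝ => exp (r * w.2.2) • v) w u
      = (r * u.2.2 * exp (r * w.2.2)) • v := by
  have hheight : HasFDerivAt (fun w : ℝ × ℝ × ℝ => r * w.2.2) _ w :=
    (hasFDerivAt_snd (𝕜 := ℝ)).snd.const_mul r
  rw [(hheight.exp.smul_const v).fderiv]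
  simp [mul_comm]

theorem lieBracket_solFrame (i j : Fin 3) (w : ℝ × ℝ × ℝ) :
    VectorField.lieBracket ℝ (solFrame p q i) (solFrame p q j) w
      = ∑ k, solConst p q i j k • solFrame p q k w := by
  have hX : ∀ u, fderiv ℝ (solFrame p q 0) w u = (p * u.2.2 * exp (p * w.2.2)) • (1, 0, 0) :=
    fderiv_exp_height_smul p _ w
  have hY : ∀ u, fderiv ℝ (solFrame p q 1) w u = (-q * u.2.2 * exp (-q * w.2.2)) • (0, 1, 0) :=
    fderiv_exp_height_smul (-q) _ w
  have hZ : ∀ u, fderiv ℝ (solFrame p q 2) w u = 0 := fun u => by simp [solFrame]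
  fin_cases i <;> fin_cases j <;>
    simp [VectorField.lieBracket, Fin.sum_univ_three, hX, hY, hZ] <;> simp [solFrame, solConst]

theorem solConst_antisymm (i j k : Fin 3) : solConst p q i j k = -solConst p q j i k := by
  fin_cases i <;> fin_cases j <;> fin_cases k <;> simp [solConst]

theorem fieldDeriv_solFrame_zero (f : ℝ × ℝ × ℝ → ℝ) (w : ℝ × ℝ × ℝ) :
    fieldDeriv (solFrame p q 0) f w = exp (p * w.2.2) * fderiv ℝ f w (1, 0, 0) :=
  (fderiv ℝ f w).map_smul _ _

theorem fieldDeriv_solFrame_one (f : ℝ × ℝ × ℝ → ℝ) (w : ℝ × ℝ × ℝ) :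
    fieldDeriv (solFrame p q 1) f w = exp (-q * w.2.2) * fderiv ℝ f w (0, 1, 0) :=
  (fderiv ℝ f w).map_smul _ _

theorem fieldDeriv_solFrame_two (f : ℝ × ℝ × ℝ → ℝ) (w : ℝ × ℝ × ℝ) :
    fieldDeriv (solFrame p q 2) f w = fderiv ℝ f w (0, 0, 1) :=
  rfl

theorem fieldDeriv_fieldDeriv_smul_const {E : Type*} [NormedAddCommGroup E] [NormedSpace ℝ E]
    {φ f : E → ℝ} {V : E → E} {v : E} (hV : ∀ w, V w = φ w • v) (hφ : Differentiable ℝ φ)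
    (hφv : ∀ w, fderiv ℝ φ w v = 0) (hf : ContDiff ℝ 2 f) (w : E) :
    fieldDeriv V (fieldDeriv V f) w
      = φ w ^ 2 * iteratedDeriv 2 (fun t : ℝ => f (w + t • v)) 0 := by
  have hD : Differentiable ℝ (fieldDeriv (fun _ => v) f) :=
    differentiable_fieldDeriv contDiff_const hf
  have hline : iteratedDeriv 2 (fun t : ℝ => f (w + t • v)) 0
      = fderiv ℝ (fieldDeriv (fun _ => v) f) w v := by
    rw [iteratedDeriv_succ, iteratedDeriv_one,
      funext fun t => (hasDerivAt_comp_line (hf.differentiable two_ne_zero) w v t).deriv]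
    simpa [fieldDeriv] using (hasDerivAt_comp_line hD w v 0).deriv
  have hfield : fieldDeriv V f = φ * fieldDeriv (fun _ => v) f := by
    ext w
    simp [fieldDeriv, hV]
  rw [hfield, fieldDeriv_mul hφ hD, hline]
  simp [fieldDeriv, hV, hφv, sq, mul_assoc]

theorem fderiv_exp_height_of_height_eq_zero (r : ℝ) (w : ℝ × ℝ × ℝ) {v : ℝ × ℝ × ℝ}
    (hv : v.2.2 = 0) : fderiv ℝ (fun w : ℝ × ℝ × ℝ => exp (r * w.2.2)) w v = 0 := by
  simpa [hv] using fderiv_exp_height_smul r (1 : ℝ) w v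

theorem fieldDeriv_fieldDeriv_solFrame_zero (hf : ContDiff ℝ 2 f) (w : ℝ × ℝ × ℝ) :
    fieldDeriv (solFrame p q 0) (fieldDeriv (solFrame p q 0) f) w
      = exp (2 * p * w.2.2) * iteratedDeriv 2 (fun t => f (t, w.2.1, w.2.2)) w.1 := by
  rw [fieldDeriv_fieldDeriv_smul_const (V := solFrame p q 0) (fun _ => rfl) (by fun_prop)
    (fun w => fderiv_exp_height_of_height_eq_zero p w rfl) hf, ← exp_nat_mul]
  simp [Prod.add_def, iteratedDeriv_comp_const_add 2 (fun t => f (t, w.2.1, w.2.2)), mul_assoc]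

theorem fieldDeriv_fieldDeriv_solFrame_one (hf : ContDiff ℝ 2 f) (w : ℝ × ℝ × ℝ) :
    fieldDeriv (solFrame p q 1) (fieldDeriv (solFrame p q 1) f) w
      = exp (-(2 * q * w.2.2)) * iteratedDeriv 2 (fun t => f (w.1, t, w.2.2)) w.2.1 := by
  rw [fieldDeriv_fieldDeriv_smul_const (V := solFrame p q 1) (fun _ => rfl) (by fun_prop)
    (fun w => fderiv_exp_height_of_height_eq_zero (-q) w rfl) hf, ← exp_nat_mul]
  simp [Prod.add_def, iteratedDeriv_comp_const_add 2 (fun t => f (w.1, t, w.2.2)), mul_assoc]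

theorem fieldDeriv_fieldDeriv_solFrame_two (hf : ContDiff ℝ 2 f) (w : ℝ × ℝ × ℝ) :
    fieldDeriv (solFrame p q 2) (fieldDeriv (solFrame p q 2) f) w
      = iteratedDeriv 2 (fun t => f (w.1, w.2.1, t)) w.2.2 := by
  rw [fieldDeriv_fieldDeriv_smul_const (V := solFrame p q 2) (v := (0, 0, 1))
    (fun _ => (one_smul ℝ _).symm) (differentiable_const 1) (fun w => by simp) hf]
  simp [Prod.add_def, iteratedDeriv_comp_const_add 2 (fun t => f (w.1, w.2.1, t))]

theorem hormanderOp_solFrame (hf : ContDiff ℝ 2 f) (w : ℝ × ℝ × ℝ) :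
    hormanderOp (solFrame p q) (solDrift a) f w = 2 * solLap p q a f w := by
  have hline : deriv (fun t => f (w.1, w.2.1, t)) w.2.2 = fderiv ℝ f w (0, 0, 1) := by
    simpa using (hasDerivAt_comp_line (hf.differentiable two_ne_zero) (w.1, w.2.1, 0) (0, 0, 1)
      w.2.2).deriv
  simp only [hormanderOp_apply, Fin.sum_univ_three, fieldDeriv_fieldDeriv_solFrame_zero hf,
    fieldDeriv_fieldDeriv_solFrame_one hf, fieldDeriv_fieldDeriv_solFrame_two hf,
    fieldDeriv_solFrame_two, solLap, solDrift, hline, Matrix.cons_val]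
  ring

/-- The `C²` functions `f` on `Sol(p,q)` with `solLap p q a f = lam * f`. -/
noncomputable abbrev solEigenfunctions (p q a lam : ℝ) : Submodule ℝ (ℝ × ℝ × ℝ → ℝ) :=
  eigenfunctions (solFrame p q) (solDrift a) contDiff_solFrame (2 * lam)

theorem mem_solEigenfunctions :
    f ∈ solEigenfunctions p q a lam ↔ ContDiff ℝ 2 f ∧ ∀ w, solLap p q a f w = lam * f w := by
  refine and_congr_right fun hf => ?_
  rw [funext_iff]
  refine forall_congr' fun w => ?_
  rw [hormanderOp_solFrame hf, Pi.smul_apply, smul_eq_mul, mul_assoc]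
  exact mul_right_inj' two_ne_zero

theorem fieldDeriv_solFrame_comp_leftMul (hf : Differentiable ℝ f) (i : Fin 3)
    (b : ℝ × ℝ × ℝ) : fieldDeriv (solFrame p q i) (f ∘ leftMul p q b)
      = fieldDeriv (solFrame p q i) f ∘ leftMul p q b := by
  let T : ℝ × ℝ × ℝ →L[ℝ] ℝ × ℝ × ℝ :=
    (exp (p * b.2.2) • ContinuousLinearMap.id ℝ ℝ).prodMap
      ((exp (-q * b.2.2) • ContinuousLinearMap.id ℝ ℝ).prodMap (ContinuousLinearMap.id ℝ ℝ))
  refine fieldDeriv_comp_of_related (T := fun _ => T) (fun w => T.hasFDerivAt.add_const b)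
    (fun w => ?_) hf
  fin_cases i <;> simp [T, solFrame, leftMul, mul_add, exp_add, mul_comm]

theorem comp_leftMul_mem_solEigenfunctions (hf : f ∈ solEigenfunctions p q a lam)
    (b : ℝ × ℝ × ℝ) : f ∘ leftMul p q b ∈ solEigenfunctions p q a lam := by
  refine ⟨hf.1.comp (by unfold leftMul; fun_prop), ?_⟩
  have hf₁ : Differentiable ℝ f := hf.1.differentiable two_ne_zero
  have hf₂ := fun i => differentiable_fieldDeriv (contDiff_solFrame (p := p) (q := q) i) hf.1
  calc hormanderOp (solFrame p q) (solDrift a) (f ∘ leftMul p q b)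
      = hormanderOp (solFrame p q) (solDrift a) f ∘ leftMul p q b := by
        ext w
        simp only [hormanderOp_apply, fieldDeriv_solFrame_comp_leftMul, hf₁, hf₂ _,
          Function.comp_apply]
    _ = (2 * lam) • (f ∘ leftMul p q b) := by rw [hf.2]; rfl

theorem exists_abs_fieldDeriv_solFrame_le (p q a lam : ℝ) :
    ∃ C, ∀ u : ℝ × ℝ × ℝ → ℝ, ContDiff ℝ 3 u → exp ∘ u ∈ solEigenfunctions p q a lam →
      ∀ i w, |fieldDeriv (solFrame p q i) u w| ≤ C := by
  obtain ⟨C, hC⟩ := exists_abs_fieldDeriv_le (contDiff_solFrame (p := p) (q := q))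
    lieBracket_solFrame solConst_antisymm (solDrift a) (2 * lam) 0
  refine ⟨C, fun u hu hexp i w => ?_⟩
  have hbound := hC (u ∘ leftMul p q w) (hu.comp (by unfold leftMul; fun_prop))
    (comp_leftMul_mem_solEigenfunctions hexp w).2 i
  have hzero : leftMul p q w 0 = w := by simp [leftMul]
  rwa [fieldDeriv_solFrame_comp_leftMul (hu.differentiable three_ne_zero), Function.comp_apply,
    hzero] at hbound

end SolFrame

section SlabMaximumPrinciple

variable {p q a lam C K N : ℝ} {u g : ℝ × ℝ × ℝ → ℝ}

theorem hormanderOp_solFrame_clm (ℓ : ℝ × ℝ × ℝ →L[ℝ] ℝ) (w : ℝ × ℝ × ℝ) :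
    hormanderOp (solFrame p q) (solDrift a) ℓ w = 2 * a * ℓ (0, 0, 1) := by
  have hline : ∀ (v v' : ℝ × ℝ × ℝ) (t : ℝ), HasDerivAt (fun t : ℝ => ℓ (v' + t • v)) (ℓ v) t :=
    fun v v' t => by simpa using hasDerivAt_comp_line ℓ.differentiable v' v t
  have hx := fun t => (hline (1, 0, 0) (0, w.2.1, w.2.2) t).deriv
  have hy := fun t => (hline (0, 1, 0) (w.1, 0, w.2.2) t).deriv
  have hz := fun t => (hline (0, 0, 1) (w.1, w.2.1, 0) t).deriv
  simp only [Prod.smul_mk, Prod.mk_add_mk, smul_eq_mul, mul_one, mul_zero, add_zero, zero_add]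
    at hx hy hz
  rw [hormanderOp_solFrame ℓ.contDiff]
  simp [solLap, iteratedDeriv_succ, funext hx, funext hy, funext hz, mul_assoc]

theorem driftOp_solFrame_comp_clm {φ φ' φ'' : ℝ → ℝ} (hφ : ∀ t, HasDerivAt φ (φ' t) t)
    (hφ' : ∀ t, HasDerivAt φ' (φ'' t) t) (ℓ : ℝ × ℝ × ℝ →L[ℝ] ℝ) (w : ℝ × ℝ × ℝ) :
    driftOp (solFrame p q) (solDrift a) u (φ ∘ ℓ) w
      = φ' (ℓ w) * (2 * a * ℓ (0, 0, 1)
          + 2 * ∑ i, fieldDeriv (solFrame p q i) u w * ℓ (solFrame p q i w))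
        + φ'' (ℓ w) * ∑ i, ℓ (solFrame p q i w) ^ 2 := by
  have hfield : ∀ i, fieldDeriv (solFrame p q i) ℓ w = ℓ (solFrame p q i w) := fun i => by
    simp [fieldDeriv]
  rw [driftOp_comp_scalar contDiff_solFrame hφ hφ' ℓ.contDiff]
  simp only [Pi.add_apply, Pi.mul_apply, Function.comp_apply, driftOp_apply,
    hormanderOp_solFrame_clm, carreDuChamp_self_apply, carreDuChamp_apply, hfield]

theorem one_le_driftOp_exp_height {w : ℝ × ℝ × ℝ} (hC : 0 ≤ C)
    (hu : |fieldDeriv (solFrame p q 2) u w| ≤ C) (hw : -N ≤ w.2.2) :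
    1 ≤ driftOp (solFrame p q) (solDrift a) u
      (fun w => exp ((2 * (|a| + C) + 1) * (w.2.2 + N))) w := by
  set M := 2 * (|a| + C) + 1
  have hM : 1 ≤ M := by simp only [M]; linarith [abs_nonneg a]
  have hderiv : ∀ t, HasDerivAt (fun t => exp (M * (t + N))) (M * exp (M * (t + N))) t :=
    fun t => by
    simpa [mul_comm] using (((hasDerivAt_id t).add_const N).const_mul M).exp
  have hexp : 1 ≤ exp (M * (w.2.2 + N)) := one_le_exp (by nlinarith)
  have hgap : 1 ≤ M + 2 * (a + fieldDeriv (solFrame p q 2) u w) := by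
    simp only [M]
    linarith [neg_abs_le a, (abs_le.1 hu).1]
  have hΘ := driftOp_solFrame_comp_clm (p := p) (q := q) (a := a) (u := u) hderiv
    (fun t => (hderiv t).const_mul M)
    ((ContinuousLinearMap.snd ℝ ℝ ℝ).comp (ContinuousLinearMap.snd ℝ ℝ (ℝ × ℝ))) w
  calc (1 : ℝ)
      ≤ M * exp (M * (w.2.2 + N)) * (M + 2 * (a + fieldDeriv (solFrame p q 2) u w)) :=
        one_le_mul_of_one_le_of_one_le (one_le_mul_of_one_le_of_one_le hM hexp) hgap
    _ = _ := by
      refine Eq.trans ?_ hΘ.symm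
      simp only [solFrame, Prod.smul_mk, smul_eq_mul, mul_one, mul_zero, neg_mul, Fin.isValue,
        Matrix.cons_val, ContinuousLinearMap.comp_apply, ContinuousLinearMap.coe_snd',
        Matrix.cons_val', Matrix.cons_val_fin_one, Fin.sum_univ_three, Matrix.cons_val_zero,
        Matrix.cons_val_one, add_zero, zero_add, ne_eq, OfNat.ofNat_ne_zero, not_false_eq_true,
        zero_pow, one_pow]
      ring

/-- The function `t ↦ log (1 + t ^ 2)`, an exhaustion of `ℝ` with bounded derivatives. -/
noncomputable def logBarrier (t : ℝ) : ℝ :=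
  log (1 + t ^ 2)

theorem hasDerivAt_logBarrier (t : ℝ) :
    HasDerivAt logBarrier (2 * t / (1 + t ^ 2)) t := by
  change HasDerivAt (fun t => log (1 + t ^ 2)) _ t
  simpa using (((hasDerivAt_pow 2 t).const_add 1).log (by positivity))

theorem hasDerivAt_logBarrier_deriv (t : ℝ) :
    HasDerivAt (fun t => 2 * t / (1 + t ^ 2)) (2 * (1 - t ^ 2) / (1 + t ^ 2) ^ 2) t := by
  have hpos : 1 + t ^ 2 ≠ 0 := by positivity
  convert! ((hasDerivAt_id t).const_mul 2).div ((hasDerivAt_pow 2 t).const_add 1) hpos using 1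
  simp only [mul_one, id_eq, Nat.cast_ofNat, Nat.add_one_sub_one, pow_one]
  ring

theorem driftOp_logBarrier_clm_le {w : ℝ × ℝ × ℝ} {ℓ : ℝ × ℝ × ℝ →L[ℝ] ℝ} {R : ℝ}
    (hu : ∀ i, |fieldDeriv (solFrame p q i) u w| ≤ C) (hℓ : ℓ (0, 0, 1) = 0)
    (hR : ∀ i, |ℓ (solFrame p q i w)| ≤ R) :
    driftOp (solFrame p q) (solDrift a) u (logBarrier ∘ ℓ) w ≤ 6 * (C * R + R ^ 2) := by
  rw [driftOp_solFrame_comp_clm hasDerivAt_logBarrier hasDerivAt_logBarrier_deriv, hℓ]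
  have h₁ : |2 * ℓ w / (1 + ℓ w ^ 2)| ≤ 1 := by
    rw [abs_div, abs_of_pos (by positivity : 0 < 1 + ℓ w ^ 2), div_le_one (by positivity)]
    exact abs_le.2 ⟨by nlinarith [sq_nonneg (ℓ w + 1)], by nlinarith [sq_nonneg (ℓ w - 1)]⟩
  have h₂ : 2 * (1 - ℓ w ^ 2) / (1 + ℓ w ^ 2) ^ 2 ≤ 2 := by
    rw [div_le_iff₀ (by positivity)]
    nlinarith [sq_nonneg (ℓ w), sq_nonneg (ℓ w ^ 2)]
  have hΓ : |∑ i, fieldDeriv (solFrame p q i) u w * ℓ (solFrame p q i w)| ≤ 3 * (C * R) := by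
    refine (Finset.abs_sum_le_sum_abs ..).trans ?_
    simpa [abs_mul] using Finset.sum_le_card_nsmul Finset.univ _ _ fun i _ =>
      mul_le_mul (hu i) (hR i) (abs_nonneg _) ((abs_nonneg _).trans (hu i))
  have hsq : ∑ i, ℓ (solFrame p q i w) ^ 2 ≤ 3 * R ^ 2 := by
    simpa using Finset.sum_le_card_nsmul Finset.univ _ _ fun i _ =>
      sq_le_sq' (abs_le.1 (hR i)).1 (abs_le.1 (hR i)).2
  have hdrift := (le_abs_self _).trans <| (abs_mul _ _).trans_le <|
    mul_le_mul h₁ hΓ (abs_nonneg _) zero_le_one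
  have hsecond := mul_le_mul h₂ hsq (Finset.sum_nonneg fun i _ => sq_nonneg _) zero_le_two
  linarith

theorem continuous_logBarrier : Continuous logBarrier :=
  continuous_iff_continuousAt.2 fun t => (hasDerivAt_logBarrier t).continuousAt

theorem contDiff_logBarrier {n : WithTop ℕ∞} : ContDiff ℝ n logBarrier :=
  (contDiff_const.add (contDiff_id.pow 2)).log fun t => by positivity

theorem logBarrier_nonneg (t : ℝ) : 0 ≤ logBarrier t :=
  log_nonneg (by nlinarith [sq_nonneg t])

theorem abs_le_exp_of_logBarrier_le {t R : ℝ} (ht : logBarrier t ≤ R) : |t| ≤ exp R := by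
  have hle : 1 + t ^ 2 ≤ exp R := (log_le_iff_le_exp (by positivity)).1 ht
  nlinarith [sq_abs t, sq_nonneg (|t| - 1)]

theorem isCompact_slab_inter_logBarrier_le (N R : ℝ) :
    IsCompact ({w : ℝ × ℝ × ℝ | |w.2.2| ≤ N} ∩ {w | logBarrier w.1 + logBarrier w.2.1 ≤ R}) := by
  refine (isCompact_Icc (a := -(exp R, exp R, N)) (b := (exp R, exp R, N))).of_isClosed_subset
    ((isClosed_le (by fun_prop) (by fun_prop)).inter (isClosed_le ?_ continuous_const)) ?_
  · exact (continuous_logBarrier.comp continuous_fst).add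
      (continuous_logBarrier.comp continuous_snd.fst)
  · rintro w ⟨hz, hψ⟩
    have hx := abs_le.1 <| abs_le_exp_of_logBarrier_le
      ((le_add_of_nonneg_right (logBarrier_nonneg w.2.1)).trans hψ)
    have hy := abs_le.1 <| abs_le_exp_of_logBarrier_le
      ((le_add_of_nonneg_left (logBarrier_nonneg w.1)).trans hψ)
    exact ⟨⟨hx.1, hy.1, (abs_le.1 hz).1⟩, hx.2, hy.2, (abs_le.1 hz).2⟩

theorem exists_driftOp_logBarrier_le (p q a C N : ℝ) :
    ∃ K, ∀ (u : ℝ × ℝ × ℝ → ℝ) (w : ℝ × ℝ × ℝ),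
      (∀ i, |fieldDeriv (solFrame p q i) u w| ≤ C) → |w.2.2| ≤ N →
      driftOp (solFrame p q) (solDrift a) u (fun w => logBarrier w.1 + logBarrier w.2.1) w ≤ K := by
  refine ⟨6 * (C * exp (|p| * N) + exp (|p| * N) ^ 2)
    + 6 * (C * exp (|q| * N) + exp (|q| * N) ^ 2), fun u w hu hw => ?_⟩
  have hexp : ∀ r : ℝ, exp (r * w.2.2) ≤ exp (|r| * N) := fun r => exp_le_exp.2 <|
    (le_abs_self _).trans <| (abs_mul _ _).trans_le <| mul_le_mul_of_nonneg_left hw (abs_nonneg r)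
  have hexp_neg : exp (-(q * w.2.2)) ≤ exp (|q| * N) := by simpa using hexp (-q)
  have hx := driftOp_logBarrier_clm_le (a := a) (ℓ := .fst ℝ ℝ (ℝ × ℝ)) (R := exp (|p| * N)) hu rfl
    fun i => by fin_cases i <;> simp [solFrame, hexp, exp_nonneg]
  have hy := driftOp_logBarrier_clm_le (a := a) (R := exp (|q| * N))
    (ℓ := (ContinuousLinearMap.fst ℝ ℝ ℝ).comp (.snd ℝ ℝ (ℝ × ℝ))) hu rfl
    fun i => by fin_cases i <;> simp [solFrame, hexp_neg, exp_nonneg]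
  have hadd := driftOp_add (b := solDrift a) (u := u) (contDiff_solFrame (p := p) (q := q))
    (contDiff_logBarrier.comp contDiff_fst)
    (contDiff_logBarrier.comp (contDiff_snd (𝕜 := ℝ) (E := ℝ)).fst)
  exact (congrFun hadd w).trans_le (add_le_add hx hy)

theorem nonpos_of_mem_slab (hu : ContDiff ℝ 2 u) (hexp : exp ∘ u ∈ solEigenfunctions p q a lam)
    (hC : ∀ i w, |fieldDeriv (solFrame p q i) u w| ≤ C)
    (hg : g ∈ solEigenfunctions p q a lam) (hgK : ∀ w, |w.2.2| ≤ N → g w ≤ K * exp (u w))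
    (hbd : ∀ w, |w.2.2| = N → g w ≤ 0) {w : ℝ × ℝ × ℝ} (hw : |w.2.2| ≤ N) : g w ≤ 0 := by
  obtain ⟨Kψ, hKψ⟩ := exists_driftOp_logBarrier_le p q a C N
  have hC₀ : 0 ≤ C := (abs_nonneg _).trans (hC 0 0)
  have hρ : ContDiff ℝ 2 (g / (exp ∘ u)) := hg.1.div hexp.1 fun w => (exp_pos _).ne'
  have hmul : g / (exp ∘ u) * (exp ∘ u) = g := funext fun w => div_mul_cancel₀ _ (exp_pos _).ne'
  have hΘ : driftOp (solFrame p q) (solDrift a) u (g / (exp ∘ u)) = 0 :=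
    driftOp_eq_zero_of_mul_exp contDiff_solFrame hu hρ hexp.2 (by rw [hmul]; exact hg.2)
  have hψ : ContDiff ℝ 2 fun w : ℝ × ℝ × ℝ => logBarrier w.1 + logBarrier w.2.1 :=
    (contDiff_logBarrier.comp contDiff_fst).add (contDiff_logBarrier.comp contDiff_snd.fst)
  have hinterior : {w : ℝ × ℝ × ℝ | |w.2.2| < N} ⊆ interior {w | |w.2.2| ≤ N} :=
    interior_maximal (fun w (hw : |w.2.2| < N) => hw.le) (isOpen_lt (by fun_prop) continuous_const)
  have hquot : g w / exp (u w) ≤ 0 := by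
    refine nonpos_of_driftOp_nonneg (S := {w : ℝ × ℝ × ℝ | |w.2.2| ≤ N})
      (B := exp ((2 * (|a| + C) + 1) * (N + N))) (N := K) contDiff_solFrame (by fun_prop) hψ hρ
      (isCompact_slab_inter_logBarrier_le N)
      (fun w _ => add_nonneg (logBarrier_nonneg w.1) (logBarrier_nonneg w.2.1))
      (fun w hw => hKψ u w (hC · w) hw) (fun w hw => ?_)
      (fun w hw => one_le_driftOp_exp_height hC₀ (hC 2 w) (abs_le.1 hw).1)
      (fun w hw => (div_le_iff₀ (exp_pos _)).2 (hgK w hw)) (fun w hw hw' => ?_)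
      (fun w _ => (congrFun hΘ w).ge) hw
    · rw [abs_of_pos (exp_pos _)]
      gcongr
      exact (abs_le.1 hw).2
    · exact div_nonpos_of_nonpos_of_nonneg
        (hbd w (hw.eq_of_not_lt fun h => hw' (hinterior h))) (exp_pos _).le
  simpa using (div_le_iff₀ (exp_pos _)).1 hquot

end SlabMaximumPrinciple

section MixedDifferences

open Filter Topology fwdDiff

variable {p q a lam C : ℝ} {b : ℝ × ℝ × ℝ} {u g h : ℝ × ℝ × ℝ → ℝ} {ε : ℝ → ℝ}

theorem exists_contDiff_eq_exp_comp {E : Type*} [NormedAddCommGroup E] [NormedSpace ℝ E]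
    {n : WithTop ℕ∞} {h : E → ℝ} (hh : ContDiff ℝ n h) (hpos : ∀ w, 0 < h w) :
    ∃ u : E → ℝ, ContDiff ℝ n u ∧ h = exp ∘ u :=
  ⟨log ∘ h, hh.log fun w => (hpos w).ne', funext fun w => (exp_log (hpos w)).symm⟩

theorem nonpos_of_le_mul_exp (hu : ContDiff ℝ 3 u) (hexp : exp ∘ u ∈ solEigenfunctions p q a lam)
    (hg : g ∈ solEigenfunctions p q a lam) (hε : Antitone ε) (hε₀ : Tendsto ε atTop (𝓝 0))
    (hgε : ∀ w, g w ≤ ε |w.2.2| * exp (u w)) (w : ℝ × ℝ × ℝ) : g w ≤ 0 := by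
  obtain ⟨C, hC⟩ := exists_abs_fieldDeriv_solFrame_le p q a lam
  have hslab : ∀ N, |w.2.2| ≤ N → g w ≤ ε N * exp (u w) := fun N hN => by
    refine sub_nonpos.1 (nonpos_of_mem_slab (g := g - ε N • (exp ∘ u)) (K := ε 0 - ε N)
      (hu.of_le (by norm_num)) hexp (hC u hu hexp)
      (Submodule.sub_mem _ hg (Submodule.smul_mem _ _ hexp)) (fun w _ => ?_) (fun w hw => ?_) hN)
    · rw [sub_mul]
      exact sub_le_sub_right ((hgε w).trans (mul_le_mul_of_nonneg_right
        (hε (abs_nonneg _)) (exp_pos _).le)) _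
    · exact sub_nonpos.2 (hw ▸ hgε w)
  have hlim : Tendsto (fun N => ε N * exp (u w)) atTop (𝓝 0) := by
    simpa using hε₀.mul_const (exp (u w))
  exact ge_of_tendsto hlim ((eventually_ge_atTop _).mono hslab)

/-- The sum `f (w + b) + f w`, which dominates the forward difference `Δ_[b] f` of a positive
function and is an eigenfunction whenever `Δ_[b] f` is one. -/
def fwdSum {M : Type*} [Add M] (b : M) (f : M → ℝ) (w : M) : ℝ :=
  f (w + b) + f w

theorem fwdSum_comm {M : Type*} [AddCommMonoid M] (b d : M) (f : M → ℝ) :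
    fwdSum b (fwdSum d f) = fwdSum d (fwdSum b f) := by
  ext w
  simp only [fwdSum, add_right_comm w b d]
  ring

theorem fwdDiff_comm {M : Type*} [AddCommMonoid M] (b d : M) (f : M → ℝ) :
    Δ_[b] (Δ_[d] f) = Δ_[d] (Δ_[b] f) := by
  ext w
  simp only [fwdDiff, add_right_comm w b d]
  ring

theorem abs_exp_sub_exp_le (x y : ℝ) : |exp x - exp y| ≤ |x - y| * (exp x + exp y) := by
  wlog hxy : y ≤ x generalizing x y
  · rw [abs_sub_comm, abs_sub_comm x, add_comm]
    exact this y x (le_of_not_ge hxy)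
  have htangent : exp x * (y - x + 1) ≤ exp y := by
    simpa [← exp_add] using mul_le_mul_of_nonneg_left (add_one_le_exp (y - x)) (exp_pos x).le
  rw [abs_of_nonneg (sub_nonneg.2 (exp_le_exp.2 hxy)), abs_of_nonneg (sub_nonneg.2 hxy)]
  linarith [mul_nonneg (sub_nonneg.2 hxy) (exp_pos y).le]

theorem abs_fwdDiff_exp_le {E : Type*} [NormedAddCommGroup E] [NormedSpace ℝ E] {u : E → ℝ}
    {b w : E} {c : ℝ} (hu : Differentiable ℝ u) (hc : ∀ t : ℝ, |fderiv ℝ u (w + t • b) b| ≤ c) :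
    |Δ_[b] (exp ∘ u) w| ≤ c * fwdSum b (exp ∘ u) w := by
  have hdiff : |u (w + b) - u w| ≤ c := by
    simpa using norm_image_sub_le_of_norm_deriv_le_segment_01'
      (fun t _ => (hasDerivAt_comp_line hu w b t).hasDerivWithinAt) fun t _ => hc t
  exact (abs_exp_sub_exp_le ..).trans
    (mul_le_mul_of_nonneg_right hdiff (add_pos (exp_pos _) (exp_pos _)).le)

theorem abs_fwdDiff_fwdDiff_exp_le {E : Type*} [NormedAddCommGroup E] [NormedSpace ℝ E]
    {u : E → ℝ} {b d w : E} {c : ℝ} (hu : Differentiable ℝ u)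
    (hc : ∀ t : ℝ, |fderiv ℝ u (w + t • b) b| ≤ c)
    (hc' : ∀ t : ℝ, |fderiv ℝ u (w + d + t • b) b| ≤ c) :
    |Δ_[b] (Δ_[d] (exp ∘ u)) w| ≤ c * fwdSum b (fwdSum d (exp ∘ u)) w := by
  rw [fwdDiff_comm, fwdSum_comm, fwdDiff, fwdSum, mul_add]
  exact (abs_sub ..).trans (add_le_add (abs_fwdDiff_exp_le hu hc') (abs_fwdDiff_exp_le hu hc))

theorem contDiff_fwdSum {E : Type*} [NormedAddCommGroup E] [NormedSpace ℝ E]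
    {n : WithTop ℕ∞} {b : E} {f : E → ℝ} (hf : ContDiff ℝ n f) : ContDiff ℝ n (fwdSum b f) :=
  (hf.comp (contDiff_id.add contDiff_const)).add hf

theorem comp_add_mem_solEigenfunctions (hh : h ∈ solEigenfunctions p q a lam) (hb : b.2.2 = 0) :
    (fun w => h (w + b)) ∈ solEigenfunctions p q a lam := by
  have hmul : h ∘ leftMul p q b = fun w => h (w + b) := by
    ext w
    simp [leftMul, hb, Prod.add_def]
  exact hmul ▸ comp_leftMul_mem_solEigenfunctions hh b

theorem fwdDiff_mem_solEigenfunctions (hh : h ∈ solEigenfunctions p q a lam) (hb : b.2.2 = 0) :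
    Δ_[b] h ∈ solEigenfunctions p q a lam :=
  Submodule.sub_mem _ (comp_add_mem_solEigenfunctions hh hb) hh

theorem fwdSum_mem_solEigenfunctions (hh : h ∈ solEigenfunctions p q a lam) (hb : b.2.2 = 0) :
    fwdSum b h ∈ solEigenfunctions p q a lam :=
  Submodule.add_mem _ (comp_add_mem_solEigenfunctions hh hb) hh

theorem abs_fderiv_fst_le {w : ℝ × ℝ × ℝ} (hC : |fieldDeriv (solFrame p q 0) u w| ≤ C) (s : ℝ) :
    |fderiv ℝ u w (s, 0, 0)| ≤ C * |s| * exp (-p * w.2.2) := by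
  have hs : ((s, 0, 0) : ℝ × ℝ × ℝ) = (s * exp (-p * w.2.2)) • solFrame p q 0 w := by
    simp [solFrame, mul_assoc, ← exp_add]
  rw [hs, map_smul, smul_eq_mul, abs_mul, abs_mul, abs_exp, mul_comm, mul_assoc C]
  exact mul_le_mul_of_nonneg_right hC (by positivity)

theorem abs_fderiv_snd_le {w : ℝ × ℝ × ℝ} (hC : |fieldDeriv (solFrame p q 1) u w| ≤ C) (t : ℝ) :
    |fderiv ℝ u w (0, t, 0)| ≤ C * |t| * exp (q * w.2.2) := by
  have ht : ((0, t, 0) : ℝ × ℝ × ℝ) = (t * exp (q * w.2.2)) • solFrame p q 1 w := by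
    simp [solFrame, mul_assoc, ← exp_add]
  rw [ht, map_smul, smul_eq_mul, abs_mul, abs_mul, abs_exp, mul_comm, mul_assoc C]
  exact mul_le_mul_of_nonneg_right hC (by positivity)

theorem abs_mixedDiff_exp_le (hu : Differentiable ℝ u)
    (hC : ∀ i w, |fieldDeriv (solFrame p q i) u w| ≤ C) (s t : ℝ) (w : ℝ × ℝ × ℝ) :
    |Δ_[(s, 0, 0)] (Δ_[(0, t, 0)] (exp ∘ u)) w|
      ≤ (C * |s| * exp (-p * |w.2.2|) + C * |t| * exp (-q * |w.2.2|))
        * fwdSum (s, 0, 0) (fwdSum (0, t, 0) (exp ∘ u)) w := by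
  have hC₀ : 0 ≤ C := (abs_nonneg _).trans (hC 0 0)
  have hsum : 0 ≤ fwdSum (s, 0, 0) (fwdSum (0, t, 0) (exp ∘ u)) w := by
    simp only [fwdSum, Function.comp_apply]
    positivity
  rcases le_total 0 w.2.2 with hz | hz
  · refine (abs_fwdDiff_fwdDiff_exp_le (c := C * |s| * exp (-p * |w.2.2|)) hu (fun r => ?_)
      fun r => ?_).trans (mul_le_mul_of_nonneg_right (le_add_of_nonneg_right (by positivity)) hsum)
    all_goals exact (abs_fderiv_fst_le (hC 0 _) s).trans_eq (by simp [abs_of_nonneg hz])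
  · rw [fwdSum_comm] at hsum ⊢
    rw [fwdDiff_comm]
    refine (abs_fwdDiff_fwdDiff_exp_le (c := C * |t| * exp (-q * |w.2.2|)) hu (fun r => ?_)
      fun r => ?_).trans (mul_le_mul_of_nonneg_right (le_add_of_nonneg_left (by positivity)) hsum)
    all_goals exact (abs_fderiv_snd_le (hC 1 _) t).trans_eq (by simp [abs_of_nonpos hz])

theorem antitone_exp_neg_mul {r : ℝ} (hr : 0 < r) : Antitone fun N : ℝ => exp (-r * N) :=
  fun M N hMN => exp_le_exp.2 (by nlinarith)

theorem tendsto_exp_neg_mul_atTop {r : ℝ} (hr : 0 < r) :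
    Tendsto (fun N : ℝ => exp (-r * N)) atTop (𝓝 0) :=
  tendsto_exp_atBot.comp (tendsto_id.const_mul_atTop_of_neg (neg_neg_of_pos hr))

theorem mixedDiff_eq_zero_of_contDiff_three (hp : 0 < p) (hq : 0 < q)
    (hh : h ∈ solEigenfunctions p q a lam) (hh₃ : ContDiff ℝ 3 h) (hpos : ∀ w, 0 < h w)
    (s t : ℝ) : Δ_[(s, 0, 0)] (Δ_[(0, t, 0)] h) = 0 := by
  obtain ⟨C, hC⟩ := exists_abs_fieldDeriv_solFrame_le p q a lam
  obtain ⟨u, hu, rfl⟩ := exists_contDiff_eq_exp_comp hh₃ hpos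
  obtain ⟨U, hU, hsum⟩ := exists_contDiff_eq_exp_comp
    (contDiff_fwdSum (b := (s, 0, 0)) (contDiff_fwdSum (b := (0, t, 0)) hh₃))
    fun w => add_pos (add_pos (hpos _) (hpos _)) (add_pos (hpos _) (hpos _))
  have hC₀ : 0 ≤ C := (abs_nonneg _).trans (hC u hu hh 0 0)
  have hexpU : exp ∘ U ∈ solEigenfunctions p q a lam :=
    hsum ▸ fwdSum_mem_solEigenfunctions (fwdSum_mem_solEigenfunctions hh rfl) rfl
  have hdiff := fwdDiff_mem_solEigenfunctions (b := (s, 0, 0))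
    (fwdDiff_mem_solEigenfunctions (b := (0, t, 0)) hh rfl) rfl
  set ε : ℝ → ℝ := fun N => C * |s| * exp (-p * N) + C * |t| * exp (-q * N)
  have hanti : Antitone ε :=
    ((antitone_exp_neg_mul hp).const_mul (by positivity)).add
      ((antitone_exp_neg_mul hq).const_mul (by positivity))
  have hlim : Tendsto ε atTop (𝓝 0) := by
    simpa [ε] using ((tendsto_exp_neg_mul_atTop hp).const_mul (C * |s|)).add
      ((tendsto_exp_neg_mul_atTop hq).const_mul (C * |t|))
  have hbound : ∀ w, |Δ_[(s, 0, 0)] (Δ_[(0, t, 0)] (exp ∘ u)) w| ≤ ε |w.2.2| * exp (U w) :=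
    fun w => (abs_mixedDiff_exp_le (hu.differentiable three_ne_zero) (hC u hu hh) s t w).trans_eq
      (by rw [hsum]; rfl)
  ext w
  refine le_antisymm
    (nonpos_of_le_mul_exp hU hexpU hdiff hanti hlim (fun w => (abs_le.1 (hbound w)).2) w) ?_
  exact neg_nonpos.1 <| nonpos_of_le_mul_exp hU hexpU (neg_mem hdiff) hanti hlim
    (fun w => neg_le.1 (abs_le.1 (hbound w)).1) w

end MixedDifferences

section SegmentAverages

open fwdDiff

variable {p q a lam ε ε' : ℝ} {v : ℝ × ℝ × ℝ} {f h : ℝ × ℝ × ℝ → ℝ}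

theorem hormanderOp_segInt {E ι : Type*} [NormedAddCommGroup E] [NormedSpace ℝ E]
    [FiniteDimensional ℝ E] [Fintype ι] {V : ι → E → E} {b : ι → ℝ} {v : E} {f : E → ℝ}
    (hV : ∀ i, ContDiff ℝ 1 (V i)) (hVv : ∀ i w (t : ℝ), V i (w + t • v) = V i w)
    (hf : ContDiff ℝ 2 f) :
    hormanderOp V b (segInt v ε f) = segInt v ε (hormanderOp V b f) := by
  have hVf : ∀ i, ContDiff ℝ 1 (fieldDeriv (V i) f) := fun i =>
    contDiff_fieldDeriv (hV i) hf one_add_one_eq_two.le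
  have hVVf : ∀ i, Continuous (fieldDeriv (V i) (fieldDeriv (V i) f)) := fun i =>
    (contDiff_fieldDeriv ((hV i).of_le zero_le_one) (hVf i) (zero_add _).le).continuous
  simp only [hormanderOp, ← Finset.sum_add_distrib, fieldDeriv_segInt (hVv _) (hf.of_le one_le_two),
    fieldDeriv_segInt (hVv _) (hVf _)]
  rw [segInt_sum _ fun i => (hVVf i).add ((hVf i).continuous.const_smul (b i))]
  refine Finset.sum_congr rfl fun i _ => ?_
  rw [segInt_add (hVVf i) ((hVf i).continuous.const_smul (b i)), segInt_const_smul]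

theorem solFrame_add_smul (hv : v.2.2 = 0) (i : Fin 3) (w : ℝ × ℝ × ℝ) (t : ℝ) :
    solFrame p q i (w + t • v) = solFrame p q i w := by
  fin_cases i <;> simp [solFrame, hv]

theorem segInt_mem_solEigenfunctions (hv : v.2.2 = 0) (hf : f ∈ solEigenfunctions p q a lam) :
    segInt v ε f ∈ solEigenfunctions p q a lam := by
  refine ⟨contDiff_segInt (k := 2) hf.1, ?_⟩
  rw [hormanderOp_segInt contDiff_solFrame (solFrame_add_smul hv) hf.1, hf.2, segInt_const_smul]

theorem span_axes : Submodule.span ℝ {((1, 0, 0) : ℝ × ℝ × ℝ), (0, 1, 0), (0, 0, 1)} = ⊤ := by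
  refine eq_top_iff.2 fun w _ => ?_
  have hw : w = w.1 • ((1, 0, 0) : ℝ × ℝ × ℝ) + (w.2.1 • (0, 1, 0) + w.2.2 • (0, 0, 1)) := by
    ext <;> simp
  rw [hw]
  exact add_mem (Submodule.smul_mem _ _ (Submodule.subset_span (by simp)))
    (add_mem (Submodule.smul_mem _ _ (Submodule.subset_span (by simp)))
      (Submodule.smul_mem _ _ (Submodule.subset_span (by simp))))

theorem fderiv_fderiv_height_eq (hf : f ∈ solEigenfunctions p q a lam) (w : ℝ × ℝ × ℝ) :
    fderiv ℝ (fun w => fderiv ℝ f w (0, 0, 1)) w (0, 0, 1)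
      = 2 * lam * f w - fieldDeriv (solFrame p q 0) (fieldDeriv (solFrame p q 0) f) w
        - fieldDeriv (solFrame p q 1) (fieldDeriv (solFrame p q 1) f) w
        - 2 * a * fderiv ℝ f w (0, 0, 1) := by
  have heq := congrFun hf.2 w
  simp only [hormanderOp_apply, Fin.sum_univ_three, solDrift, Pi.smul_apply, smul_eq_mul,
    Matrix.cons_val, funext (fieldDeriv_solFrame_two f), fieldDeriv_solFrame_two] at heq
  linarith

theorem contDiff_three_of_contDiff_horizontal (hf : f ∈ solEigenfunctions p q a lam)
    (hx : ContDiff ℝ 2 fun w => fderiv ℝ f w (1, 0, 0))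
    (hy : ContDiff ℝ 2 fun w => fderiv ℝ f w (0, 1, 0)) : ContDiff ℝ 3 f := by
  have hVV : ∀ i, ContDiff ℝ 2 (fieldDeriv (solFrame p q i) f) →
      ContDiff ℝ 1 (fieldDeriv (solFrame p q i) (fieldDeriv (solFrame p q i) f)) := fun i hi =>
    contDiff_fieldDeriv (contDiff_solFrame i) hi one_add_one_eq_two.le
  have hX : ContDiff ℝ 2 (fieldDeriv (solFrame p q 0) f) := by
    rw [funext (fieldDeriv_solFrame_zero f)]
    fun_prop
  have hY : ContDiff ℝ 2 (fieldDeriv (solFrame p q 1) f) := by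
    rw [funext (fieldDeriv_solFrame_one f)]
    fun_prop
  have hz₁ : ContDiff ℝ 1 fun w => fderiv ℝ f w (0, 0, 1) :=
    (hf.1.fderiv_right one_add_one_eq_two.le).clm_apply contDiff_const
  have hz : ContDiff ℝ 2 fun w => fderiv ℝ f w (0, 0, 1) := by
    refine contDiff_succ_of_span_eq_top (k := 1) span_axes (hz₁.differentiable one_ne_zero) ?_
    rintro v (rfl | rfl | rfl)
    · simp only [fderiv_fderiv_comm hf.1 (1, 0, 0)]
      exact (hx.fderiv_right one_add_one_eq_two.le).clm_apply contDiff_const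
    · simp only [fderiv_fderiv_comm hf.1 (0, 1, 0)]
      exact (hy.fderiv_right one_add_one_eq_two.le).clm_apply contDiff_const
    · rw [funext (fderiv_fderiv_height_eq hf)]
      exact (((contDiff_const.mul (hf.1.of_le one_le_two)).sub (hVV 0 hX)).sub (hVV 1 hY)).sub
        (contDiff_const.mul hz₁)
  refine contDiff_succ_of_span_eq_top (k := 2) span_axes (hf.1.differentiable two_ne_zero) ?_
  rintro v (rfl | rfl | rfl)
  exacts [hx, hy, hz]

theorem contDiff_three_segInt_segInt (hf : f ∈ solEigenfunctions p q a lam) :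
    ContDiff ℝ 3 (segInt (1, 0, 0) ε (segInt (0, 1, 0) ε' f)) := by
  have hY := segInt_mem_solEigenfunctions (v := (0, 1, 0)) (ε := ε') rfl hf
  refine contDiff_three_of_contDiff_horizontal (segInt_mem_solEigenfunctions rfl hY) ?_ ?_
  · simp only [fderiv_segInt_self (hY.1.of_le one_le_two)]
    exact (hY.1.comp (contDiff_id.add contDiff_const)).sub hY.1
  · change ContDiff ℝ 2 (fieldDeriv (fun _ => (0, 1, 0)) _)
    rw [fieldDeriv_segInt (fun _ _ => rfl) (hY.1.of_le one_le_two)]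
    refine contDiff_segInt (k := 2) ?_
    have hself : fieldDeriv (fun _ => (0, 1, 0)) (segInt (0, 1, 0) ε' f)
        = fun w => f (w + ε' • (0, 1, 0)) - f w :=
      funext (fderiv_segInt_self (hf.1.of_le one_le_two))
    rw [hself]
    exact (hf.1.comp (contDiff_id.add contDiff_const)).sub hf.1

theorem fwdDiff_segInt {E : Type*} [NormedAddCommGroup E] [NormedSpace ℝ E] {f : E → ℝ} {v : E}
    (hf : Continuous f) (b : E) : Δ_[b] (segInt v ε f) = segInt v ε (Δ_[b] f) := by
  have hb : Continuous fun w => f (w + b) := by fun_prop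
  exact ((segInt_sub hb hf).trans (by rw [segInt_comp_add_right]; rfl)).symm

theorem mixedDiff_eq_zero (hp : 0 < p) (hq : 0 < q) (hh : h ∈ solEigenfunctions p q a lam)
    (hpos : ∀ w, 0 < h w) (s t : ℝ) : Δ_[(s, 0, 0)] (Δ_[(0, t, 0)] h) = 0 := by
  have hc : Continuous h := hh.1.continuous
  have hΔ : ∀ b {f : ℝ × ℝ × ℝ → ℝ}, Continuous f → Continuous (Δ_[b] f) := fun b f hf =>
    (hf.comp (continuous_id.add continuous_const)).sub hf
  have hD := hΔ (s, 0, 0) (hΔ (0, t, 0) hc)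
  ext w
  refine eq_zero_of_forall_segInt_eq_zero (v := (0, 1, 0)) hD fun ε' hε' => ?_
  refine eq_zero_of_forall_segInt_eq_zero (v := (1, 0, 0)) (continuous_segInt hD) fun ε hε => ?_
  have hcY : Continuous (segInt (0, 1, 0) ε' h) := continuous_segInt hc
  rw [← fwdDiff_segInt (hΔ _ hc), ← fwdDiff_segInt hc, ← fwdDiff_segInt (hΔ _ hcY),
    ← fwdDiff_segInt hcY, mixedDiff_eq_zero_of_contDiff_three hp hq
      (segInt_mem_solEigenfunctions rfl (segInt_mem_solEigenfunctions rfl hh))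
      (contDiff_three_segInt_segInt hh) (segInt_pos hε hcY (segInt_pos hε' hc hpos)), Pi.zero_apply]

end SegmentAverages

/-- The solution of the equation `φ' = r * φ + k` with `φ 0 = c`. -/
noncomputable def linearODESol (r c : ℝ) (k : ℝ → ℝ) (z : ℝ) : ℝ :=
  exp (r * z) * (c + ∫ t in (0 : ℝ)..z, exp (-r * t) * k t)

/-- The solution of `(d/dz - r₂) (d/dz - r₁) φ = k` with `φ 0 = c` and `φ' 0 = r₁ * c + d`,
used for the eigenfunctions on `Sol(p,q)` that depend only on the height. -/
noncomputable def heightSol (r₁ r₂ c d : ℝ) (k : ℝ → ℝ) : ℝ → ℝ :=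
  linearODESol r₁ c (linearODESol r₂ d k)

section HeightSolutions

variable {p q a lam r r₁ r₂ c d z₀ z₁ : ℝ} {k : ℝ → ℝ}

theorem hasDerivAt_linearODESol (hk : Continuous k) (z : ℝ) :
    HasDerivAt (linearODESol r c k) (r * linearODESol r c k z + k z) z := by
  have hcont : Continuous fun t => exp (-r * t) * k t := by fun_prop
  have hint := (hcont.integral_hasStrictDerivAt 0 z).hasDerivAt.const_add c
  have hexp : HasDerivAt (fun z => exp (r * z)) (exp (r * z) * r) z := by
    simpa using ((hasDerivAt_id z).const_mul r).exp
  refine (hexp.mul hint).congr_deriv ?_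
  have hcancel : exp (r * z) * exp (-r * z) = 1 := by simp [← exp_add]
  rw [linearODESol]
  linear_combination k z * hcancel

theorem continuous_linearODESol (hk : Continuous k) : Continuous (linearODESol r c k) :=
  continuous_iff_continuousAt.2 fun z => (hasDerivAt_linearODESol hk z).continuousAt

theorem contDiff_linearODESol {n : ℕ} (hk : ContDiff ℝ n k) :
    ContDiff ℝ (n + 1) (linearODESol r c k) := by
  have hderiv : deriv (linearODESol r c k) = fun z => r * linearODESol r c k z + k z :=
    funext fun z => (hasDerivAt_linearODESol hk.continuous z).deriv
  have hdiff : Differentiable ℝ (linearODESol r c k) := fun z =>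
    (hasDerivAt_linearODESol hk.continuous z).differentiableAt
  induction n with
  | zero =>
    refine contDiff_succ_iff_deriv.2 ⟨hdiff, by simp, ?_⟩
    rw [hderiv]
    exact contDiff_zero.2 ((continuous_const.mul hdiff.continuous).add hk.continuous)
  | succ n ih =>
    refine contDiff_succ_iff_deriv.2 ⟨hdiff, by simp, ?_⟩
    rw [hderiv]
    exact (contDiff_const.mul (ih (hk.of_le (by norm_cast; simp)))).add hk

theorem contDiff_heightSol (hk : Continuous k) : ContDiff ℝ 2 (heightSol r₁ r₂ c d k) :=
  contDiff_linearODESol (n := 1) (contDiff_linearODESol (n := 0) (contDiff_zero.2 hk))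

theorem solLap_comp_height {φ φ' φ'' : ℝ → ℝ} (hφ : ∀ z, HasDerivAt φ (φ' z) z)
    (hφ' : ∀ z, HasDerivAt φ' (φ'' z) z) (w : ℝ × ℝ × ℝ) :
    solLap p q a (fun w => φ w.2.2) w = 1 / 2 * φ'' w.2.2 + a * φ' w.2.2 := by
  simp [solLap, iteratedDeriv_const, iteratedDeriv_succ, funext fun z => (hφ z).deriv,
    (hφ' _).deriv]

theorem solLap_heightSol (hsum : r₁ + r₂ = -2 * a) (hprod : r₁ * r₂ = -2 * lam)
    (hk : Continuous k) (w : ℝ × ℝ × ℝ) :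
    solLap p q a (fun w => heightSol r₁ r₂ c d k w.2.2) w
      = lam * heightSol r₁ r₂ c d k w.2.2 + 1 / 2 * k w.2.2 := by
  have hψ := hasDerivAt_linearODESol (r := r₂) (c := d) hk
  have hφ := hasDerivAt_linearODESol (r := r₁) (c := c)
    (continuous_linearODESol (r := r₂) (c := d) hk)
  rw [heightSol, solLap_comp_height hφ fun z => ((hφ z).const_mul r₁).add (hψ z)]
  linear_combination (1 / 2 * (r₁ * linearODESol r₁ c (linearODESol r₂ d k) w.2.2
    + linearODESol r₂ d k w.2.2)) * hsum
    - 1 / 2 * linearODESol r₁ c (linearODESol r₂ d k) w.2.2 * hprod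

theorem heightSol_zero_mem_solEigenfunctions (hsum : r₁ + r₂ = -2 * a)
    (hprod : r₁ * r₂ = -2 * lam) (c d : ℝ) :
    (fun w : ℝ × ℝ × ℝ => heightSol r₁ r₂ c d 0 w.2.2) ∈ solEigenfunctions p q a lam :=
  mem_solEigenfunctions.2 ⟨(contDiff_heightSol continuous_zero).comp contDiff_snd.snd,
    fun w => by simp [solLap_heightSol hsum hprod continuous_zero]⟩

theorem heightSol_zero_apply (c d z : ℝ) : heightSol r₁ r₂ c d 0 z
    = exp (r₁ * z) * (c + d * ∫ t in (0 : ℝ)..z, exp ((r₂ - r₁) * t)) := by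
  have hexp : ∀ t, exp (-r₁ * t) * (exp (r₂ * t) * d) = d * exp ((r₂ - r₁) * t) := fun t => by
    rw [← mul_assoc, ← exp_add, mul_comm]
    ring_nf
  simp [heightSol, linearODESol, ← intervalIntegral.integral_const_mul, ← hexp]

theorem integral_exp_pos (hz : z₀ < z₁) : 0 < ∫ t in z₀..z₁, exp (r * t) :=
  intervalIntegral.intervalIntegral_pos_of_pos (Continuous.intervalIntegrable (by fun_prop) _ _)
    (fun _ => exp_pos _) hz

theorem exists_heightSol_zero_eq (r₁ r₂ : ℝ) (hz : z₀ < z₁) (y₀ y₁ : ℝ) :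
    ∃ c d, heightSol r₁ r₂ c d 0 z₀ = y₀ ∧ heightSol r₁ r₂ c d 0 z₁ = y₁ := by
  set S : ℝ → ℝ := fun z => ∫ t in (0 : ℝ)..z, exp ((r₂ - r₁) * t)
  have hS : S z₁ - S z₀ = ∫ t in z₀..z₁, exp ((r₂ - r₁) * t) :=
    intervalIntegral.integral_interval_sub_left
      (Continuous.intervalIntegrable (by fun_prop) _ _)
      (Continuous.intervalIntegrable (by fun_prop) _ _)
  have hS₀ : S z₁ - S z₀ ≠ 0 := hS ▸ (integral_exp_pos hz).ne'
  have hcancel : ∀ z y, exp (r₁ * z) * (exp (-r₁ * z) * y) = y := fun z y => by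
    rw [← mul_assoc, ← exp_add]
    simp
  set d := (exp (-r₁ * z₁) * y₁ - exp (-r₁ * z₀) * y₀) / (S z₁ - S z₀)
  have hd' : d * (S z₁ - S z₀) = exp (-r₁ * z₁) * y₁ - exp (-r₁ * z₀) * y₀ :=
    div_mul_cancel₀ _ hS₀
  refine ⟨exp (-r₁ * z₀) * y₀ - d * S z₀, d, ?_, ?_⟩
  · rw [heightSol_zero_apply, sub_add_cancel, hcancel]
  · rw [heightSol_zero_apply, ← hcancel z₁ y₁]
    linear_combination exp (r₁ * z₁) * hd'

theorem exists_add_eq_and_mul_eq (hlam : -a ^ 2 / 2 ≤ lam) :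
    ∃ r₁ r₂ : ℝ, r₁ + r₂ = -2 * a ∧ r₁ * r₂ = -2 * lam := by
  have hsq : √(a ^ 2 + 2 * lam) * √(a ^ 2 + 2 * lam) = a ^ 2 + 2 * lam :=
    mul_self_sqrt (by linarith)
  exact ⟨-a + √(a ^ 2 + 2 * lam), -a - √(a ^ 2 + 2 * lam), by ring, by linear_combination -hsq⟩

end HeightSolutions

/-- A decomposition `h = A + B` into eigenfunctions, of which `A` does not depend on `y` and `B`
does not depend on `x`. -/
structure IsSplitting (p q a lam : ℝ) (h A B : ℝ × ℝ × ℝ → ℝ) : Prop where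
  left_mem : A ∈ solEigenfunctions p q a lam
  right_mem : B ∈ solEigenfunctions p q a lam
  eq_add : h = A + B
  left_eq : ∀ x y z, A (x, y, z) = A (x, 0, z)
  right_eq : ∀ x y z, B (x, y, z) = B (0, y, z)

section Splitting

open fwdDiff

variable {p q a lam r₁ r₂ : ℝ} {h : ℝ × ℝ × ℝ → ℝ}

theorem eq_add_sub_of_mixedDiff_eq_zero (hΔ : ∀ s t, Δ_[(s, 0, 0)] (Δ_[(0, t, 0)] h) = 0)
    (x y z : ℝ) : h (x, y, z) = h (x, 0, z) + (h (0, y, z) - h (0, 0, z)) := by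
  have hzero := congrFun (hΔ x y) (0, 0, z)
  simp only [fwdDiff, Prod.mk_add_mk, zero_add, add_zero, Pi.zero_apply] at hzero
  linarith

theorem solLap_comp_proj_fst (f : ℝ × ℝ × ℝ → ℝ) (w : ℝ × ℝ × ℝ) :
    solLap p q a (fun w => f (w.1, 0, w.2.2)) w = solLap p q a f (w.1, 0, w.2.2)
      - 1 / 2 * (exp (-(2 * q * w.2.2)) * iteratedDeriv 2 (fun t => f (w.1, t, w.2.2)) 0) := by
  simp only [solLap, iteratedDeriv_const, two_ne_zero, if_false]
  ring

theorem continuous_exp_mul_iteratedDeriv_snd (hh : ContDiff ℝ 2 h) :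
    Continuous fun z => exp (-(2 * q * z)) * iteratedDeriv 2 (fun t => h (0, t, z)) 0 := by
  have hV : ∀ n, ContDiff ℝ n (solFrame 0 q 1) := fun n => contDiff_solFrame 1
  have hcont : Continuous (fieldDeriv (solFrame 0 q 1) (fieldDeriv (solFrame 0 q 1) h)) :=
    (contDiff_fieldDeriv (hV 0) (contDiff_fieldDeriv (hV 1) hh (by norm_num)) (by norm_num)
      (m := 0) (n := 1)).continuous
  rw [funext (fieldDeriv_fieldDeriv_solFrame_one hh)] at hcont
  exact hcont.comp (by fun_prop : Continuous fun z : ℝ => ((0, 0, z) : ℝ × ℝ × ℝ))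

theorem solLap_sub {f g : ℝ × ℝ × ℝ → ℝ} (hf : ContDiff ℝ 2 f) (hg : ContDiff ℝ 2 g)
    (w : ℝ × ℝ × ℝ) : solLap p q a (f - g) w = solLap p q a f w - solLap p q a g w := by
  have hsub : ContDiff ℝ 2 (f - g) := hf.sub hg
  have hadd := congrFun (hormanderOp_add (V := solFrame p q) (b := solDrift a) contDiff_solFrame
    hsub hg) w
  rw [sub_add_cancel, Pi.add_apply, hormanderOp_solFrame hf, hormanderOp_solFrame hg,
    hormanderOp_solFrame hsub] at hadd
  linarith

theorem exists_isSplitting (hp : 0 < p) (hq : 0 < q) (hsum : r₁ + r₂ = -2 * a)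
    (hprod : r₁ * r₂ = -2 * lam) (hh : h ∈ solEigenfunctions p q a lam) (hpos : ∀ w, 0 < h w) :
    ∃ A B, IsSplitting p q a lam h A B := by
  have hsplit := eq_add_sub_of_mixedDiff_eq_zero (mixedDiff_eq_zero hp hq hh hpos)
  have hyy : ∀ x z, iteratedDeriv 2 (fun t => h (x, t, z)) 0
      = iteratedDeriv 2 (fun t => h (0, t, z)) 0 := fun x z => by
    rw [funext fun t => hsplit x t z]
    simp [iteratedDeriv_succ]
  obtain ⟨hh₂, heq⟩ := mem_solEigenfunctions.1 hh
  set κ : ℝ → ℝ := fun z =>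
    -(exp (-(2 * q * z)) * iteratedDeriv 2 (fun t => h (0, t, z)) 0) with hκ_def
  have hκ : Continuous κ := (continuous_exp_mul_iteratedDeriv_snd hh₂).neg
  set f : ℝ × ℝ × ℝ → ℝ := fun w => h (w.1, 0, w.2.2) with hf_def
  set φ : ℝ × ℝ × ℝ → ℝ := fun w => heightSol r₁ r₂ 0 0 κ w.2.2 with hφ_def
  have hf : ContDiff ℝ 2 f := by fun_prop
  have hφ : ContDiff ℝ 2 φ := (contDiff_heightSol hκ).comp contDiff_snd.snd
  have hA : f - φ ∈ solEigenfunctions p q a lam := by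
    refine mem_solEigenfunctions.2 ⟨hf.sub hφ, fun w => ?_⟩
    rw [solLap_sub hf hφ, hf_def, solLap_comp_proj_fst, hφ_def, solLap_heightSol hsum hprod hκ,
      heq, hyy]
    simp only [Pi.sub_apply, hκ_def]
    ring
  refine ⟨_, _, hA, sub_mem hh hA, (add_sub_cancel _ _).symm, fun x y z => rfl, fun x y z => ?_⟩
  simp only [Pi.sub_apply, hf_def, hφ_def]
  linarith [hsplit x y z]

end Splitting

/-- The parameters of the solutions `heightSol r₁ r₂ c d 0` that lie between `f` and `g` on `s`. -/
def heightSolBetween (r₁ r₂ : ℝ) (f g : ℝ × ℝ × ℝ → ℝ) (s : Set (ℝ × ℝ × ℝ)) : Set (ℝ × ℝ) :=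
  {c | ∀ w ∈ s, heightSol r₁ r₂ c.1 c.2 0 w.2.2 ∈ Set.Icc (f w) (g w)}

section NonnegSplitting

variable {p q a lam r₁ r₂ N : ℝ} {f g h A B : ℝ × ℝ × ℝ → ℝ} {s : Set (ℝ × ℝ × ℝ)}

theorem le_of_mem_slab {k : ℝ → ℝ} (hsum : r₁ + r₂ = -2 * a) (hprod : r₁ * r₂ = -2 * lam)
    (hf : f ∈ solEigenfunctions p q a lam) (hg : g ∈ solEigenfunctions p q a lam)
    (hk : Continuous k) (hfk : ∀ w, f w ≤ g w + k w.2.2)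
    (hbd : ∀ w, |w.2.2| = N → f w ≤ g w) {w : ℝ × ℝ × ℝ} (hw : |w.2.2| ≤ N) : f w ≤ g w := by
  obtain ⟨K, hK⟩ := (isCompact_Icc (a := -N) (b := N)).bddAbove_image
    (f := fun z => k z / exp (r₁ * z)) (by fun_prop (disch := intros; positivity))
  let ℓ : ℝ × ℝ × ℝ →L[ℝ] ℝ := r₁ • (.comp (.snd ℝ ℝ ℝ) (.snd ℝ ℝ (ℝ × ℝ)))
  have hexp : exp ∘ ℓ ∈ solEigenfunctions p q a lam := by
    convert heightSol_zero_mem_solEigenfunctions (p := p) (q := q) hsum hprod 1 0 using 1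
    ext w
    simp [heightSol_zero_apply, ℓ]
  have hfield : ∀ i w, |fieldDeriv (solFrame p q i) ℓ w| ≤ |r₁| := fun i w => by
    rw [fieldDeriv, ℓ.fderiv]
    fin_cases i <;> simp [solFrame, ℓ]
  refine sub_nonpos.1 <| nonpos_of_mem_slab (K := K) ℓ.contDiff hexp hfield (sub_mem hf hg)
    (fun w hw => ?_) (fun w hw => sub_nonpos.2 (hbd w hw)) hw
  have hkK : k w.2.2 ≤ K * exp (r₁ * w.2.2) :=
    (div_le_iff₀ (exp_pos _)).1 (hK ⟨w.2.2, abs_le.1 hw, rfl⟩)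
  exact (sub_le_iff_le_add'.2 (hfk w)).trans hkK

theorem continuous_heightSol_zero (z : ℝ) :
    Continuous fun c : ℝ × ℝ => heightSol r₁ r₂ c.1 c.2 0 z := by
  simp only [heightSol_zero_apply]
  fun_prop

theorem isClosed_heightSolBetween : IsClosed (heightSolBetween r₁ r₂ f g s) := by
  simp only [heightSolBetween, Set.ofPred_forall]
  exact isClosed_biInter fun w _ => isClosed_Icc.preimage (continuous_heightSol_zero w.2.2)

theorem isCompact_heightSolBetween {w₀ w₁ : ℝ × ℝ × ℝ} (hw₀ : w₀ ∈ s) (hw₁ : w₁ ∈ s)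
    (hz : w₀.2.2 < w₁.2.2) : IsCompact (heightSolBetween r₁ r₂ f g s) := by
  let ℓ : ℝ → ℝ × ℝ →ₗ[ℝ] ℝ := fun z =>
    exp (r₁ * z) • (.fst ℝ ℝ ℝ + (∫ t in (0 : ℝ)..z, exp ((r₂ - r₁) * t)) • .snd ℝ ℝ ℝ)
  have hℓ : ∀ c z, ℓ z c = heightSol r₁ r₂ c.1 c.2 0 z := fun c z => by
    simp only [ℓ, heightSol_zero_apply, LinearMap.smul_apply, LinearMap.add_apply,
      LinearMap.fst_apply, LinearMap.snd_apply, smul_eq_mul, mul_comm c.2]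
  have hsurj : Function.Surjective ((ℓ w₀.2.2).prod (ℓ w₁.2.2)) := fun y => by
    obtain ⟨c, d, hc, hd⟩ := exists_heightSol_zero_eq r₁ r₂ hz y.1 y.2
    exact ⟨(c, d), Prod.ext ((hℓ _ _).trans hc) ((hℓ _ _).trans hd)⟩
  have hemb := LinearMap.isClosedEmbedding_of_injective
    (LinearMap.ker_eq_bot.2 (LinearMap.injective_iff_surjective.2 hsurj))
  have hbox : IsCompact (Set.Icc (f w₀) (g w₀) ×ˢ Set.Icc (f w₁) (g w₁)) :=
    isCompact_Icc.prod isCompact_Icc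
  exact (hemb.isCompact_preimage hbox).of_isClosed_subset isClosed_heightSolBetween
    fun c hc => ⟨Set.mem_of_eq_of_mem (hℓ c _) (hc w₀ hw₀),
      Set.mem_of_eq_of_mem (hℓ c _) (hc w₁ hw₁)⟩

theorem IsSplitting.heightSolBetween_slab_nonempty (hAB : IsSplitting p q a lam h A B)
    (hsum : r₁ + r₂ = -2 * a) (hprod : r₁ * r₂ = -2 * lam) (hpos : ∀ w, 0 < h w) (hN : 0 < N) :
    (heightSolBetween r₁ r₂ (-B) A {w | |w.2.2| ≤ N}).Nonempty := by
  have hle : ∀ x y z, -B (0, y, z) ≤ A (x, 0, z) := fun x y z => by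
    have hxyz := hpos (x, y, z)
    rw [hAB.eq_add, Pi.add_apply, hAB.left_eq, hAB.right_eq] at hxyz
    linarith
  set α : ℝ → ℝ := fun z => ⨅ x, A (x, 0, z)
  have hαA : ∀ x z, α z ≤ A (x, 0, z) := fun x z =>
    ciInf_le ⟨-B (0, 0, z), Set.forall_mem_range.2 fun x => hle x 0 z⟩ x
  have hBα : ∀ y z, -B (0, y, z) ≤ α z := fun y z => le_ciInf fun x => hle x y z
  obtain ⟨c, d, hφN', hφN⟩ := exists_heightSol_zero_eq r₁ r₂ (neg_lt_self hN) (α (-N)) (α N)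
  have hφα : ∀ z, |z| = N → heightSol r₁ r₂ c d 0 z = α z := fun z hz => by
    rcases eq_or_eq_neg_of_abs_eq hz with rfl | rfl
    exacts [hφN, hφN']
  have hφ := heightSol_zero_mem_solEigenfunctions (p := p) (q := q) hsum hprod c d
  have hφc : Continuous (heightSol r₁ r₂ c d 0) := (contDiff_heightSol continuous_zero).continuous
  have hA := hAB.left_mem.1.continuous
  have hB := hAB.right_mem.1.continuous
  refine ⟨(c, d), fun w hw => ⟨?_, ?_⟩⟩
  · refine le_of_mem_slab (k := fun z => A (0, 0, z) - heightSol r₁ r₂ c d 0 z) hsum hprod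
      (neg_mem hAB.right_mem) hφ (by fun_prop) (fun w => ?_) (fun w hz => ?_) hw
    · rw [add_sub_cancel, Pi.neg_apply, hAB.right_eq]
      exact hle 0 w.2.1 w.2.2
    · rw [hφα _ hz, Pi.neg_apply, hAB.right_eq]
      exact hBα w.2.1 w.2.2
  · refine le_of_mem_slab (k := fun z => heightSol r₁ r₂ c d 0 z + B (0, 0, z)) hsum hprod
      hφ hAB.left_mem (by fun_prop) (fun w => ?_) (fun w hz => ?_) hw
    · rw [hAB.left_eq]
      linarith [hle w.1 0 w.2.2]
    · rw [hφα _ hz, hAB.left_eq]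
      exact hαA w.1 w.2.2

theorem IsSplitting.heightSolBetween_univ_nonempty (hAB : IsSplitting p q a lam h A B)
    (hsum : r₁ + r₂ = -2 * a) (hprod : r₁ * r₂ = -2 * lam) (hpos : ∀ w, 0 < h w) :
    (heightSolBetween r₁ r₂ (-B) A Set.univ).Nonempty := by
  obtain ⟨c, hc⟩ := IsCompact.nonempty_iInter_of_sequence_nonempty_isCompact_isClosed
    (fun n : ℕ => heightSolBetween r₁ r₂ (-B) A {w | |w.2.2| ≤ (n : ℝ) + 1})
    (fun n c hc w hw => hc w <| le_trans hw.out <| by simp)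
    (fun n => hAB.heightSolBetween_slab_nonempty hsum hprod hpos n.cast_add_one_pos)
    (isCompact_heightSolBetween (w₀ := (0, 0, 0)) (w₁ := (0, 0, 1)) (by simp) (by simp) one_pos)
    fun n => isClosed_heightSolBetween
  refine ⟨c, fun w _ => ?_⟩
  obtain ⟨n, hn⟩ := exists_nat_ge |w.2.2|
  exact Set.mem_iInter.1 hc n w (hn.trans (by simp))

theorem exists_nonneg_isSplitting (hp : 0 < p) (hq : 0 < q) (hlam : -a ^ 2 / 2 ≤ lam)
    (hh : h ∈ solEigenfunctions p q a lam) (hpos : ∀ w, 0 < h w) :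
    ∃ A B, IsSplitting p q a lam h A B ∧ 0 ≤ A ∧ 0 ≤ B := by
  obtain ⟨r₁, r₂, hsum, hprod⟩ := exists_add_eq_and_mul_eq hlam
  obtain ⟨A, B, hAB⟩ := exists_isSplitting hp hq hsum hprod hh hpos
  obtain ⟨⟨c, d⟩, hcd⟩ := hAB.heightSolBetween_univ_nonempty hsum hprod hpos
  have hφ := heightSol_zero_mem_solEigenfunctions (p := p) (q := q) hsum hprod c d
  refine ⟨_, _, ⟨sub_mem hAB.left_mem hφ, add_mem hAB.right_mem hφ, ?_, fun x y z => ?_,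
    fun x y z => ?_⟩, fun w => sub_nonneg.2 (hcd w trivial).2,
    fun w => neg_le_iff_add_nonneg'.1 (hcd w trivial).1⟩
  · rw [hAB.eq_add, sub_add_add_cancel]
  · exact congrArg (· - _) (hAB.left_eq x y z)
  · exact congrArg (· + _) (hAB.right_eq x y z)

end NonnegSplitting

section Minimal

variable {p q a lam : ℝ} {f h : ℝ × ℝ × ℝ → ℝ}

theorem isSolEigen_iff :
    IsSolEigen p q a lam h ↔ h ∈ solEigenfunctions p q a lam ∧ ∀ w, 0 < h w := by
  rw [mem_solEigenfunctions, IsSolEigen]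
  tauto

theorem exists_eq_smul_of_isSolMinimal (hmin : IsSolMinimal p q a lam h)
    (hf : f ∈ solEigenfunctions p q a lam) (hf₀ : 0 ≤ f) (hfh : f ≤ h) : ∃ c : ℝ, f = c • h := by
  obtain ⟨hh, hpos⟩ := isSolEigen_iff.1 hmin.1
  obtain ⟨c, hc⟩ := hmin.2.2 ((1 / 2 : ℝ) • (h + f))
    (isSolEigen_iff.2 ⟨Submodule.smul_mem _ _ (add_mem hh hf), fun w =>
      mul_pos one_half_pos (add_pos_of_pos_of_nonneg (hpos w) (hf₀ w))⟩)
    fun w => by simp only [Pi.smul_apply, Pi.add_apply, smul_eq_mul]; linarith [hfh w]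
  refine ⟨2 * c - 1, funext fun w => ?_⟩
  have hcw := hc w
  simp only [Pi.smul_apply, Pi.add_apply, smul_eq_mul] at hcw ⊢
  linarith

theorem solLap_lift_fst (g : ℝ × ℝ → ℝ) (w : ℝ × ℝ × ℝ) :
    solLap p q a (fun w => g (w.1, w.2.2)) w = hypLap p a g (w.1, w.2.2) := by
  simp [solLap, hypLap, iteratedDeriv_const]

theorem solLap_lift_snd (g : ℝ × ℝ → ℝ) (w : ℝ × ℝ × ℝ) :
    solLap p q a (fun w => g (w.2.1, -w.2.2)) w = hypLap q (-a) g (w.2.1, -w.2.2) := by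
  simp only [solLap, hypLap, iteratedDeriv_const, iteratedDeriv_comp_neg 2 (fun t => g (w.2.1, t)),
    deriv_comp_neg (fun t => g (w.2.1, t))]
  simp

theorem isHypMinimal_of_isSolMinimal_lift {r b : ℝ} {g : ℝ × ℝ → ℝ} {proj : ℝ × ℝ × ℝ → ℝ × ℝ}
    (hproj : ContDiff ℝ 2 proj) (hsurj : Function.Surjective proj) (h0 : proj (0, 0, 0) = (0, 0))
    (hlift : ∀ f w, solLap p q a (fun w => f (proj w)) w = hypLap r b f (proj w))
    (hg : ContDiff ℝ 2 g) (hmin : IsSolMinimal p q a lam fun w => g (proj w)) :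
    IsHypMinimal r b lam g := by
  obtain ⟨⟨-, hpos, he⟩, h1, hm⟩ := hmin
  refine ⟨⟨hg, fun u => ?_, fun u => ?_⟩, by simpa [h0] using h1, fun f ⟨hf, hfpos, hfe⟩ hfg => ?_⟩
  · obtain ⟨w, rfl⟩ := hsurj u
    exact hpos w
  · obtain ⟨w, rfl⟩ := hsurj u
    rw [← hlift, he]
  · obtain ⟨c, hc⟩ := hm (fun w => f (proj w))
      ⟨hf.comp hproj, fun w => hfpos _, fun w => by rw [hlift, hfe]⟩ fun w => hfg _
    refine ⟨c, fun u => ?_⟩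
    obtain ⟨w, rfl⟩ := hsurj u
    exact hc w

theorem IsSolMinimal.exists_isHypMinimal_fst (hmin : IsSolMinimal p q a lam h)
    (hy : ∀ x y z, h (x, y, z) = h (x, 0, z)) :
    ∃ h₁ : ℝ × ℝ → ℝ, IsHypMinimal p a lam h₁ ∧
      ∀ w : ℝ × ℝ × ℝ, h w = h₁ (w.1, w.2.2) := by
  have hlift : ∀ w : ℝ × ℝ × ℝ, h w = h (w.1, 0, w.2.2) := fun w => hy w.1 w.2.1 w.2.2
  have hh : ContDiff ℝ 2 h := hmin.1.1
  refine ⟨fun u => h (u.1, 0, u.2), ?_, hlift⟩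
  refine isHypMinimal_of_isSolMinimal_lift (q := q) (proj := fun w => (w.1, w.2.2)) (by fun_prop)
    (fun u => ⟨(u.1, 0, u.2), rfl⟩) rfl solLap_lift_fst (by fun_prop) ?_
  rwa [← funext hlift]

theorem IsSolMinimal.exists_isHypMinimal_snd (hmin : IsSolMinimal p q a lam h)
    (hx : ∀ x y z, h (x, y, z) = h (0, y, z)) :
    ∃ h₂ : ℝ × ℝ → ℝ, IsHypMinimal q (-a) lam h₂ ∧
      ∀ w : ℝ × ℝ × ℝ, h w = h₂ (w.2.1, -w.2.2) := by
  have hlift : ∀ w : ℝ × ℝ × ℝ, h w = h (0, w.2.1, - -w.2.2) := fun w => by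
    rw [neg_neg, ← hx w.1]
  have hh : ContDiff ℝ 2 h := hmin.1.1
  refine ⟨fun u => h (0, u.1, -u.2), ?_, hlift⟩
  refine isHypMinimal_of_isSolMinimal_lift (p := p) (proj := fun w => (w.2.1, -w.2.2))
    (by fun_prop) (fun u => ⟨(0, u.1, -u.2), by simp⟩) (by simp) solLap_lift_snd (by fun_prop) ?_
  rwa [← funext hlift]

end Minimal

theorem minimal_eigenfunctions_split (p q a lam : ℝ) (hp : 0 < p) (hq : 0 < q)
    (hlam : -a^2/2 ≤ lam) (h : ℝ × ℝ × ℝ → ℝ) (hmin : IsSolMinimal p q a lam h) :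
    (∃ h₁ : ℝ × ℝ → ℝ, IsHypMinimal p a lam h₁ ∧
        ∀ w : ℝ × ℝ × ℝ, h w = h₁ (w.1, w.2.2)) ∨
    (∃ h₂ : ℝ × ℝ → ℝ, IsHypMinimal q (-a) lam h₂ ∧
        ∀ w : ℝ × ℝ × ℝ, h w = h₂ (w.2.1, -w.2.2)) := by
  obtain ⟨hh, hpos⟩ := isSolEigen_iff.1 hmin.1
  obtain ⟨A, B, hAB, hA, hB⟩ := exists_nonneg_isSplitting hp hq hlam hh hpos
  have hAh : A ≤ h := hAB.eq_add ▸ le_add_of_nonneg_right hB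
  obtain ⟨c, hc⟩ := exists_eq_smul_of_isSolMinimal hmin hAB.left_mem hA hAh
  rcases eq_or_ne c 0 with rfl | hc₀
  · have hhB : h = B := by rw [hAB.eq_add, hc, zero_smul, zero_add]
    exact .inr (hmin.exists_isHypMinimal_snd (hhB ▸ hAB.right_eq))
  · refine .inl (hmin.exists_isHypMinimal_fst fun x y z => mul_left_cancel₀ hc₀ ?_)
    simpa [hc] using hAB.left_eq x y z
end
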